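/- Let L/k be a dihedral extension of number fields of degree 2q with q odd, F its quadratic subextension, K a degree-q subextension. Then for every prime ℓ, the ℓ-adic valuation of the ratio h(L)h(k)²/(h(F)h(K)²) satisfies −a·v_ℓ(q) ≤ v_ℓ(h(L)h(k)²/(h(F)h(K)²)) ≤ b·v_ℓ(q), where a = rank_Z(U_F) + δ_q(F) + 1, b = rank_Z(U_k) + δ_q(k), and δ_q(M) is 1 if M contains a nontrivial root of unity of order dividing q and 0 otherwise. -/

import Mathlib

open DihedralGroup NumberField IntermediateField
open scoped Classical

/-!
The character identity `1 + 2 · Ind 1_D = Ind 1_{rotations} + 2 · Ind 1_{⟨s⟩}` of the dihedral group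
`D` turns every numerical invariant of number fields that is an average of a class function over the
Galois group into a relation between the invariants of `L`, `k`, `F` and `K`. Applied to the numbers
of homomorphisms from `𝓞 M` to an algebraic closure of `𝔽_p` fixed by a power of Frobenius, it
compares the numbers of primes of given norm, whence `ζ_L ζ_k² = ζ_F ζ_K²`; applied to different
ideals and to infinite places it gives the same relation for discriminants and for the numbers of
real and complex places. The analytic class number formula then reduces the class number ratio to a
quotient of regulators and of numbers of roots of unity.

Regulators are covolumes of units under the logarithmic embedding. Comparing the fixed elements
`A^C × A^s × A^s` with `A × A^D × A^D`, where `C` is the group of rotations, both for `A` the units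
of `L` and for `A` the permutation lattice on the infinite places, cancels the real covolumes; the
permutation lattice has no cohomology under `C`, because `C` acts freely on the places. What remains
is the index of `U_F U_K U_K'` in `U_L` up to powers of `q` and torsion. This product contains both
`U_F` and the image of `σ - 1`, so a Herbrand quotient computation bounds the index.
-/

section DihedralRelation

open scoped BigOperators

variable {q : ℕ}

/-- Functions constant on conjugacy classes, with real values. -/
def IsClassFunction {G : Type*} [Group G] (f : G → ℝ) : Prop :=
  ∀ τ g, f (τ * g * τ⁻¹) = f g

lemma exists_add_self_eq_one_zmod (hq : Odd q) : ∃ t : ZMod q, t + t = 1 := by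
  obtain ⟨m, rfl⟩ := hq
  refine ⟨m + 1, ?_⟩
  have hm : ((2 * m + 1 : ℕ) : ZMod (2 * m + 1)) = 0 := ZMod.natCast_self _
  push_cast at hm
  linear_combination hm

lemma mem_closure_r_one_iff {x : DihedralGroup q} :
    x ∈ Subgroup.closure {(r 1 : DihedralGroup q)} ↔ ∃ i, x = r i := by
  simp only [Subgroup.mem_closure_singleton, r_one_zpow]
  exact ⟨fun ⟨n, h⟩ ↦ ⟨n, h.symm⟩, fun ⟨i, h⟩ ↦ ⟨i.cast, by rw [h, ZMod.intCast_zmod_cast]⟩⟩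

lemma mem_closure_sr_zero_iff {x : DihedralGroup q} :
    x ∈ Subgroup.closure {(sr 0 : DihedralGroup q)} ↔ x = 1 ∨ x = sr 0 := by
  rw [← Subgroup.zpowers_eq_closure, ← Subgroup.mem_carrier]
  have h2 : (sr 0 : DihedralGroup q) ^ 2 = 1 := by rw [sq, sr_mul_self]
  constructor
  · rintro ⟨n, rfl⟩
    rcases Int.even_or_odd' n with ⟨m, rfl | rfl⟩
    · left
      simp only [zpow_mul, zpow_ofNat, h2, one_zpow]
    · right
      simp only [zpow_add, zpow_mul, zpow_ofNat, h2, one_zpow, one_mul, pow_one]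
  · rintro (rfl | rfl)
    exacts [⟨0, zpow_zero _⟩, ⟨1, zpow_one _⟩]

lemma conj_sr_zero {t : ZMod q} (ht : t + t = 1) (i : ZMod q) :
    r (-(t * i)) * sr 0 * (r (-(t * i)))⁻¹ = sr i := by
  rw [r_mul_sr, inv_r, sr_mul_r]
  congr 1
  linear_combination i * ht

variable [NeZero q]

lemma IsClassFunction.sum_dihedralGroup {f : DihedralGroup q → ℝ} (hf : IsClassFunction f)
    (hq : Odd q) : ∑ g, f g = ∑ i, f (r i) + q * f (sr 0) := by
  obtain ⟨t, ht⟩ := exists_add_self_eq_one_zmod hq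
  have hsr : ∀ i, f (sr i) = f (sr 0) := fun i ↦ by rw [← conj_sr_zero ht i, hf]
  calc ∑ g, f g = ∑ i, f (r i) + ∑ i, f (sr i) := by
        rw [← equivSum.symm.sum_comp, Fintype.sum_sum_type]; rfl
    _ = ∑ i, f (r i) + q * f (sr 0) := by simp [hsr]

lemma expect_closure_r_one (f : DihedralGroup q → ℝ) :
    𝔼 g : Subgroup.closure {(r 1 : DihedralGroup q)}, f g = 𝔼 i : ZMod q, f (r i) := by
  symm
  refine Fintype.expect_bijective (fun i ↦ ⟨r i, mem_closure_r_one_iff.2 ⟨i, rfl⟩⟩)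
    ⟨fun i j h ↦ by simpa using h, ?_⟩ _ _ fun _ ↦ rfl
  rintro ⟨x, hx⟩
  obtain ⟨i, rfl⟩ := mem_closure_r_one_iff.1 hx
  exact ⟨i, rfl⟩

lemma expect_closure_sr_zero (f : DihedralGroup q → ℝ) :
    𝔼 g : Subgroup.closure {(sr 0 : DihedralGroup q)}, f g = (f 1 + f (sr 0)) / 2 := by
  have hmem (b : Bool) : cond b 1 (sr 0) ∈ Subgroup.closure {(sr 0 : DihedralGroup q)} :=
    mem_closure_sr_zero_iff.2 (by cases b <;> simp)
  calc _ = 𝔼 b : Bool, f (cond b 1 (sr 0)) := by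
        symm
        refine Fintype.expect_bijective (fun b ↦ ⟨_, hmem b⟩) ⟨?_, ?_⟩ _ _ fun _ ↦ rfl
        · have hne : (1 : DihedralGroup q) ≠ sr 0 := nofun
          rintro (_ | _) (_ | _) h <;> simp_all [hne.symm]
        · rintro ⟨x, hx⟩
          rcases mem_closure_sr_zero_iff.1 hx with rfl | rfl
          exacts [⟨true, rfl⟩, ⟨false, rfl⟩]
    _ = _ := by simp only [Fintype.expect_eq_sum_div_card, Fintype.sum_bool, cond_true, cond_false,
        Fintype.card_bool, Nat.cast_ofNat]

/-- The relation `1 + 2 · 1_D = 1_R + 2 · 1_S` between the characters induced from the trivial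
characters of the subgroups `1`, `D`, `R = ⟨r⟩` and `S = ⟨s⟩` of `D`, paired with `f`. -/
theorem IsClassFunction.expect_dihedralGroup {f : DihedralGroup q → ℝ} (hf : IsClassFunction f)
    (hq : Odd q) :
    f 1 + 2 * 𝔼 g, f g = 𝔼 g : Subgroup.closure {(r 1 : DihedralGroup q)}, f g +
      2 * 𝔼 g : Subgroup.closure {(sr 0 : DihedralGroup q)}, f g := by
  have hq0 : (q : ℝ) ≠ 0 := NeZero.ne _
  rw [expect_closure_r_one, expect_closure_sr_zero, Fintype.expect_eq_sum_div_card,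
    Fintype.expect_eq_sum_div_card, hf.sum_dihedralGroup hq, DihedralGroup.card, ZMod.card]
  push_cast
  field_simp
  ring

end DihedralRelation

section DihedralExtension

open scoped BigOperators

/-- The average over `Gal(L/M)` of a function on the automorphisms of `L`. All invariants of the
intermediate fields of `L/k` that enter the class number formula are of this form. -/
noncomputable def galAvg (M : Type*) {L : Type*} [Field M] [Field L] [Algebra M L]
    [FiniteDimensional M L] (N : RingAut L → ℝ) : ℝ :=
  𝔼 σ : L ≃ₐ[M] L, N σ.toRingEquiv

lemma galAvg_self {L : Type*} [Field L] (N : RingAut L → ℝ) : galAvg L N = N 1 := by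
  rw [galAvg, Fintype.expect_eq_sum_div_card, Fintype.sum_subsingleton _ (1 : L ≃ₐ[L] L),
    Fintype.card_eq_one_iff.2 ⟨1, fun σ ↦ Subsingleton.elim σ 1⟩, Nat.cast_one, div_one]
  rfl

variable {k L : Type*} [Field k] [Field L] [Algebra k L]

section FixedFields

variable [FiniteDimensional k L]

lemma galAvg_fixedField_comap {G : Type*} [Group G] [Fintype G] (e : (L ≃ₐ[k] L) ≃* G)
    (H : Subgroup G) (N : RingAut L → ℝ) :
    galAvg (fixedField (H.comap e.toMonoidHom)) N =
      𝔼 g : H, N (e.symm g).toRingEquiv := by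
  have hH : (fixedField (H.comap e.toMonoidHom)).fixingSubgroup = H.comap e.toMonoidHom :=
    fixingSubgroup_fixedField _
  let E : (L ≃ₐ[fixedField (H.comap e.toMonoidHom)] L) ≃ H :=
    (fixingSubgroupEquiv _).symm.toEquiv.trans (e.toEquiv.subtypeEquiv fun σ ↦ by rw [hH]; rfl)
  refine Fintype.expect_equiv E _ _ fun σ ↦ congrArg N ?_
  change _ = (e.symm (e ((fixingSubgroupEquiv _).symm σ).1)).toRingEquiv
  rw [e.symm_apply_apply]
  rfl

lemma galAvg_eq_expect {G : Type*} [Group G] [Fintype G] (e : (L ≃ₐ[k] L) ≃* G)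
    (N : RingAut L → ℝ) : galAvg k N = 𝔼 g : G, N (e.symm g).toRingEquiv :=
  Fintype.expect_equiv e.toEquiv _ _ fun σ ↦ by simp

lemma finrank_fixedField_comap {G : Type*} [Group G] (e : (L ≃ₐ[k] L) ≃* G) (H : Subgroup G) :
    Module.finrank (fixedField (H.comap e.toMonoidHom)) L = Nat.card H := by
  rw [finrank_fixedField_eq_card]
  exact Nat.card_congr (e.toEquiv.subtypeEquiv fun σ ↦ Iff.rfl)

end FixedFields

variable {q : ℕ} (e : (L ≃ₐ[k] L) ≃* DihedralGroup q)

/-- The field `F` of the theorem, fixed by all rotations. -/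
def rotationField : IntermediateField k L :=
  fixedField ((Subgroup.closure {(r 1 : DihedralGroup q)}).comap e.toMonoidHom)

/-- The field `K` of the theorem, fixed by the reflection `sr 0`. -/
def reflectionField : IntermediateField k L :=
  fixedField ((Subgroup.closure {(sr 0 : DihedralGroup q)}).comap e.toMonoidHom)

variable [FiniteDimensional k L]

lemma mem_fixingSubgroup_rotationField {g : L ≃ₐ[k] L} :
    g ∈ (rotationField e).fixingSubgroup ↔ ∃ i, g = e.symm (r i) := by
  rw [rotationField, fixingSubgroup_fixedField, Subgroup.mem_comap, MulEquiv.toMonoidHom_eq_coe,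
    MonoidHom.coe_coe, mem_closure_r_one_iff]
  simp only [MulEquiv.eq_symm_apply]

lemma mem_fixingSubgroup_reflectionField {g : L ≃ₐ[k] L} :
    g ∈ (reflectionField e).fixingSubgroup ↔ g = 1 ∨ g = e.symm (sr 0) := by
  rw [reflectionField, fixingSubgroup_fixedField, Subgroup.mem_comap, MulEquiv.toMonoidHom_eq_coe,
    MonoidHom.coe_coe, mem_closure_sr_zero_iff, MulEquiv.eq_symm_apply,
    map_eq_one_iff e e.injective]

lemma finrank_rotationField : Module.finrank (rotationField e) L = q := by
  rw [rotationField, finrank_fixedField_comap, ← Subgroup.zpowers_eq_closure, Nat.card_zpowers,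
    orderOf_r_one]

lemma finrank_reflectionField : Module.finrank (reflectionField e) L = 2 := by
  rw [reflectionField, finrank_fixedField_comap, ← Subgroup.zpowers_eq_closure, Nat.card_zpowers,
    orderOf_sr]

omit [FiniteDimensional k L] in
include e in
lemma finrank_dihedral [IsGalois k L] [FiniteDimensional k L] : Module.finrank k L = 2 * q := by
  rw [← IsGalois.card_aut_eq_finrank, Nat.card_congr e.toEquiv, DihedralGroup.nat_card]

theorem IsClassFunction.galAvg_dihedral [NeZero q] {N : RingAut L → ℝ} (hN : IsClassFunction N)
    (hq : Odd q) :
    galAvg L N + 2 * galAvg k N =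
      galAvg (rotationField e) N + 2 * galAvg (reflectionField e) N := by
  have hcl : IsClassFunction fun g : DihedralGroup q ↦ N (e.symm g).toRingEquiv := fun τ g ↦ by
    simp only [map_mul, map_inv]
    exact hN _ _
  have h := hcl.expect_dihedralGroup hq
  rw [map_one] at h
  rwa [rotationField, reflectionField, galAvg_fixedField_comap, galAvg_fixedField_comap,
    galAvg_eq_expect e, galAvg_self]

end DihedralExtension

section TwistedBurnside

variable {G X : Type*} [Group G] [MulAction G X]

lemma natCard_smul_eq_of_mem_orbit {x x' : X} (h : x' ∈ MulAction.orbit G x) :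
    Nat.card {g : G // x' = g • x} = Nat.card (MulAction.stabilizer G x) := by
  obtain ⟨g₀, rfl⟩ := h
  refine Nat.card_congr ((Equiv.mulLeft g₀⁻¹).subtypeEquiv fun g ↦ ?_)
  rw [Equiv.coe_mulLeft, MulAction.mem_stabilizer_iff, mul_smul, inv_smul_eq_iff, eq_comm]

lemma sum_orbit_natCard_stabilizer [Finite G] [Fintype X] (x : X) :
    ∑ x' with x' ∈ MulAction.orbit G x, Nat.card (MulAction.stabilizer G x') = Nat.card G := by
  cases nonempty_fintype G
  have hcard : ∀ x' ∈ Finset.univ.filter (· ∈ MulAction.orbit G x),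
      Nat.card (MulAction.stabilizer G x') = Nat.card (MulAction.stabilizer G x) := fun x' hx' ↦
    Nat.card_congr (MulAction.stabilizerEquivStabilizerOfOrbitRel
      (MulAction.orbitRel_apply.2 (Finset.mem_filter.1 hx').2)).toEquiv
  rw [Finset.sum_congr rfl hcard, Finset.sum_const, smul_eq_mul, ← Fintype.card_subtype,
    ← Nat.card_eq_fintype_card (α := MulAction.orbit G x)]
  simp only [Nat.card_eq_fintype_card]
  exact MulAction.card_orbit_mul_card_stabilizer_eq_card_group G x

lemma sum_natCard_subtype_comm {α β : Type*} [Fintype α] [Fintype β] (R : α → β → Prop) :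
    ∑ a, Nat.card {b // R a b} = ∑ b, Nat.card {a // R a b} := by
  simp only [Nat.card_eq_fintype_card, Fintype.card_subtype, Finset.card_filter]
  exact Finset.sum_comm

/-- Burnside's lemma for an endomorphism `ψ` of the quotient of `X` by `G` that lifts to `X`. -/
theorem sum_natCard_eq_smul_eq_card_mul_fixedPoints [Fintype G] {Y : Type*} [Finite X]
    {π : X → Y} (hπ : π.Surjective) (hG : ∀ x x', π x = π x' ↔ x' ∈ MulAction.orbit G x)
    {φ : X → X} {ψ : Y → Y} (hφ : Function.Semiconj π φ ψ) :
    ∑ g : G, Nat.card {x : X // φ x = g • x} = Nat.card G * Nat.card ψ.fixedPoints := by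
  have := Fintype.ofFinite X
  have := Fintype.ofSurjective π hπ
  have hfibre (y : Y) : ∑ x with π x = y, Nat.card {g : G // φ x = g • x} =
      if ψ y = y then Nat.card G else 0 := by
    obtain ⟨x, rfl⟩ := hπ y
    split_ifs with hx
    · rw [← sum_orbit_natCard_stabilizer x]
      refine Finset.sum_congr (by simp only [← hG, eq_comm]) fun x' hx' ↦
        natCard_smul_eq_of_mem_orbit ((hG _ _).1 ?_)
      rw [hφ, ← (hG _ _).2 (Finset.mem_filter.1 hx').2, hx]
    · refine Finset.sum_eq_zero fun x' hx' ↦ ?_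
      have : IsEmpty {g : G // φ x' = g • x'} := ⟨fun ⟨g, hg⟩ ↦ hx ?_⟩
      · exact Nat.card_of_isEmpty
      · rw [← (Finset.mem_filter.1 hx').2, ← hφ, (hG x' (φ x')).2 ⟨g, hg.symm⟩]
  calc ∑ g : G, Nat.card {x : X // φ x = g • x}
      = ∑ x, Nat.card {g : G // φ x = g • x} := sum_natCard_subtype_comm _
    _ = ∑ y, ∑ x with π x = y, Nat.card {g : G // φ x = g • x} :=
        (Finset.sum_fiberwise Finset.univ π _).symm
    _ = ∑ y, if ψ y = y then Nat.card G else 0 := Finset.sum_congr rfl fun y _ ↦ hfibre y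
    _ = Nat.card G * Nat.card ψ.fixedPoints := by
        rw [← Finset.sum_filter, Finset.sum_const, smul_eq_mul, mul_comm, ← Fintype.card_subtype,
          ← Nat.card_eq_fintype_card]
        rfl

end TwistedBurnside

section RingHoms

open Polynomial

lemma ringHom_ext_of_span_int {B Ω ι : Type*} [Ring B] [Ring Ω] {s : ι → B}
    (hs : Submodule.span ℤ (Set.range s) = ⊤) {f g : B →+* Ω} (h : ∀ i, f (s i) = g (s i)) :
    f = g := by
  have hfg : f.toIntAlgHom.toLinearMap = g.toIntAlgHom.toLinearMap := LinearMap.ext_on_range hs h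
  exact RingHom.ext fun b ↦ LinearMap.congr_fun hfg b

lemma finite_ringHom_of_finite_int (B Ω : Type*) [CommRing B] [CommRing Ω] [IsDomain Ω]
    [Module.Finite ℤ B] : Finite (B →+* Ω) := by
  obtain ⟨n, s, hs⟩ := Module.Finite.exists_fin (R := ℤ) (M := B)
  choose P hP hP0 using fun i ↦ Algebra.IsIntegral.isIntegral (R := ℤ) (s i)
  refine Finite.of_injective (β := ∀ i, ((P i).map (Int.castRingHom Ω)).roots.toFinset)
    (fun f i ↦ ⟨f (s i), ?_⟩) fun f g hfg ↦ ringHom_ext_of_span_int hs fun i ↦ ?_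
  · rw [Multiset.mem_toFinset, mem_roots ((hP i).map _).ne_zero, IsRoot, eval_map,
      RingHom.ext_int (Int.castRingHom Ω) (f.comp (algebraMap ℤ B)), ← hom_eval₂, hP0 i, map_zero]
  · exact congrArg Subtype.val (congrFun hfg i)

section Invariant

variable (A : Type*) {B Ω G : Type*} [CommRing A] [CommRing B] [Algebra A B] [CommRing Ω]
  [Group G] [MulSemiringAction G B] [Algebra.IsInvariant A B G] {f g : B →+* Ω}

include A in
lemma map_eq_map_of_forall_smul_eq (hfg : f.comp (algebraMap A B) = g.comp (algebraMap A B))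
    {P : B[X]} (hP : ∀ σ : G, σ • P = P) : P.map f = P.map g := by
  ext i
  obtain ⟨a, ha⟩ := Algebra.IsInvariant.isInvariant (A := A) (G := G) (P.coeff i) fun σ ↦ by
    rw [← coeff_smul, hP]
  rw [coeff_map, coeff_map, ← ha]
  exact RingHom.congr_fun hfg a

include A in
/-- The characteristic polynomial of `P` over the invariants has the same image under `f` and `g`,
and the image of `P` under `f` is one of its roots. -/
lemma exists_map_eq_map_smul [IsDomain Ω] [Finite G]
    (hfg : f.comp (algebraMap A B) = g.comp (algebraMap A B)) (P : B[X]) :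
    ∃ σ : G, P.map f = (σ • P).map g := by
  cases nonempty_fintype G
  have hchar : (MulSemiringAction.charpoly G P).map (mapRingHom f) =
      (MulSemiringAction.charpoly G P).map (mapRingHom g) := by
    ext1 i
    simp only [coeff_map, coe_mapRingHom]
    exact map_eq_map_of_forall_smul_eq A hfg fun σ ↦ MulSemiringAction.smul_coeff_charpoly P i σ
  have hroot : ((MulSemiringAction.charpoly G P).map (mapRingHom g)).eval (P.map f) = 0 := by
    rw [← hchar, ← coe_mapRingHom, eval_map_apply, MulSemiringAction.eval_charpoly, map_zero]
  rw [MulSemiringAction.charpoly_eq, Polynomial.map_prod, eval_prod, Finset.prod_eq_zero_iff]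
    at hroot
  obtain ⟨σ, -, hσ⟩ := hroot
  exact ⟨σ, by simpa [sub_eq_zero] using hσ⟩

lemma exists_forall_eq_apply_smul [IsDomain Ω] [Finite G] [Module.Finite ℤ B]
    (hfg : f.comp (algebraMap A B) = g.comp (algebraMap A B)) : ∃ σ : G, ∀ b, f b = g (σ • b) := by
  obtain ⟨n, s, hs⟩ := Module.Finite.exists_fin (R := ℤ) (M := B)
  let P : B[X] := ∑ i : Fin n, C (s i) * X ^ (i : ℕ)
  have hcoeff (i : Fin n) : P.coeff i = s i := by
    simp [P, coeff_X_pow, Fin.val_inj]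
  obtain ⟨σ, hσ⟩ := exists_map_eq_map_smul (G := G) A hfg P
  refine ⟨σ, fun b ↦ RingHom.congr_fun
    (ringHom_ext_of_span_int hs (g := g.comp (MulSemiringAction.toRingHom G B σ)) fun i ↦ ?_) b⟩
  have hi := congrArg (fun Q ↦ Q.coeff i) hσ
  rwa [coeff_map, coeff_map, coeff_smul, hcoeff] at hi

end Invariant

lemma exists_comp_algebraMap_eq_of_isIntegral {A B Ω : Type*} [CommRing A] [CommRing B] [IsDomain B]
    [Algebra A B] [Algebra.IsIntegral A B] [FaithfulSMul A B] [Field Ω] [IsAlgClosed Ω]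
    (y : A →+* Ω) : ∃ x : B →+* Ω, x.comp (algebraMap A B) = y := by
  have : (RingHom.ker y).IsPrime := RingHom.ker_isPrime y
  have hbot : RingHom.ker (algebraMap A B) = ⊥ :=
    (RingHom.injective_iff_ker_eq_bot _).1 (FaithfulSMul.algebraMap_injective A B)
  obtain ⟨Q, hQ, hQy⟩ := Ideal.exists_ideal_over_prime_of_isIntegral_of_isDomain (S := B)
    (RingHom.ker y) (hbot ▸ bot_le)
  have : Q.LiesOver (RingHom.ker y) := ⟨hQy.symm⟩
  let _ : Algebra (A ⧸ RingHom.ker y) Ω := (RingHom.kerLift y).toAlgebra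
  have : FaithfulSMul (A ⧸ RingHom.ker y) Ω :=
    (faithfulSMul_iff_algebraMap_injective _ _).2 (RingHom.kerLift_injective y)
  have : Module.IsTorsionFree (A ⧸ RingHom.ker y) (B ⧸ Q) :=
    Module.isTorsionFree_iff_faithfulSMul.2 inferInstance
  let φ : (B ⧸ Q) →ₐ[A ⧸ RingHom.ker y] Ω := IsAlgClosed.lift
  exact ⟨φ.toRingHom.comp (Ideal.Quotient.mk Q),
    RingHom.ext fun a ↦ φ.commutes (Ideal.Quotient.mk _ a)⟩

end RingHoms

section FiniteFields

variable (p : ℕ) [Fact p.Prime] {κ : Type*} [Field κ] [Finite κ]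

lemma forall_pow_pow_eq_self_iff_finrank_dvd [Algebra (ZMod p) κ] {m : ℕ} :
    (∀ a : κ, a ^ p ^ m = a) ↔ Module.finrank (ZMod p) κ ∣ m := by
  rw [← FiniteField.orderOf_frobeniusAlgEquivOfAlgebraic, orderOf_dvd_iff_pow_eq_one,
    AlgEquiv.ext_iff]
  refine forall_congr' fun a ↦ ?_
  rw [AlgEquiv.coe_pow, FiniteField.coe_frobeniusAlgEquivOfAlgebraic_iterate, ZMod.card]
  rfl

lemma card_ringHom_algebraicClosure_zmod [Algebra (ZMod p) κ] :
    Nat.card (κ →+* AlgebraicClosure (ZMod p)) = Module.finrank (ZMod p) κ := by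
  let E : (κ →+* AlgebraicClosure (ZMod p)) ≃ (κ →ₐ[ZMod p] AlgebraicClosure (ZMod p)) :=
    { toFun x := { x with
        commutes' := RingHom.congr_fun
          (Subsingleton.elim (x.comp (algebraMap (ZMod p) κ)) (algebraMap _ _)) }
      invFun x := x.toRingHom }
  rw [Nat.card_congr E, Nat.card_eq_fintype_card, AlgHom.card]

end FiniteFields

section FrobeniusCounts

variable (p : ℕ) [Fact p.Prime]

section Quotient

variable {R : Type*} [CommRing R]

lemma exists_algebra_zmod_finrank_eq {κ : Type*} [Field κ] {f : ℕ} (hκ : Nat.card κ = p ^ f) :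
    Finite κ ∧ ∃ _ : Algebra (ZMod p) κ, Module.finrank (ZMod p) κ = f := by
  have hp : p.Prime := Fact.out
  have : Finite κ := Nat.finite_of_card_ne_zero (by rw [hκ]; exact pow_ne_zero _ hp.ne_zero)
  have := Fintype.ofFinite κ
  have : CharP κ p := charP_of_card_eq_prime_pow (Nat.card_eq_fintype_card.symm.trans hκ)
  let _ := ZMod.algebra κ p
  refine ⟨inferInstance, inferInstance, Nat.pow_right_injective hp.two_le ?_⟩
  exact (FiniteField.pow_finrank_eq_natCard p κ).trans hκ

lemma card_ringHom_ker_eq (P : Ideal R) [P.IsMaximal] {f : ℕ} (hP : Nat.card (R ⧸ P) = p ^ f) :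
    Nat.card {y : R →+* AlgebraicClosure (ZMod p) // RingHom.ker y = P} = f := by
  let _ := Ideal.Quotient.field P
  obtain ⟨_, _, hf⟩ := exists_algebra_zmod_finrank_eq p hP
  rw [← hf, ← card_ringHom_algebraicClosure_zmod]
  exact Nat.card_congr
    { toFun y := Ideal.Quotient.lift P y.1 fun a ha ↦ by rwa [← y.2, RingHom.mem_ker] at ha
      invFun z := ⟨z.comp (Ideal.Quotient.mk P), by
        rw [← RingHom.comap_ker, (RingHom.injective_iff_ker_eq_bot z).1 z.injective,
          ← RingHom.ker_eq_comap_bot, Ideal.mk_ker]⟩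
      left_inv y := rfl
      right_inv z := by ext a; rfl }

lemma iterateFrobenius_comp_eq_self_iff_dvd (y : R →+* AlgebraicClosure (ZMod p))
    [(RingHom.ker y).IsMaximal] {f : ℕ} (hP : Nat.card (R ⧸ RingHom.ker y) = p ^ f) (m : ℕ) :
    (iterateFrobenius _ p m).comp y = y ↔ f ∣ m := by
  let _ := Ideal.Quotient.field (RingHom.ker y)
  obtain ⟨_, _, hf⟩ := exists_algebra_zmod_finrank_eq p hP
  rw [← hf, ← forall_pow_pow_eq_self_iff_finrank_dvd, RingHom.ext_iff,
    Ideal.Quotient.mk_surjective.forall]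
  refine forall_congr' fun a ↦ ?_
  rw [← map_pow, Ideal.Quotient.eq, RingHom.mem_ker, map_sub, map_pow, sub_eq_zero]
  rfl

end Quotient

section NumberField

variable (M : Type*) [Field M] [NumberField M]

/-- The number of prime ideals of the ring of integers of `M` of absolute norm `n`. -/
noncomputable def primeCount (n : ℕ) : ℕ :=
  Nat.card {P : Ideal (𝓞 M) // P.IsPrime ∧ Ideal.absNorm P = n}

variable {M} in
lemma natCard_quotient_eq_absNorm (P : Ideal (𝓞 M)) : Nat.card (𝓞 M ⧸ P) = Ideal.absNorm P := by
  rw [Ideal.absNorm_apply, Submodule.cardQuot_apply]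

variable {M} in
lemma isMaximal_of_absNorm_ne_zero {P : Ideal (𝓞 M)} (hP : P.IsPrime) (h0 : Ideal.absNorm P ≠ 0) :
    P.IsMaximal :=
  hP.isMaximal (by rintro rfl; exact h0 Ideal.absNorm_bot)

variable {M} in
lemma exists_absNorm_ker_eq_pow (y : 𝓞 M →+* AlgebraicClosure (ZMod p)) :
    ∃ f, Ideal.absNorm (RingHom.ker y) = p ^ f := by
  have hp : p.Prime := Fact.out
  have hker (l : ℕ) : (l : 𝓞 M) ∈ RingHom.ker y ↔ p ∣ l := by
    rw [RingHom.mem_ker, map_natCast, CharP.cast_eq_zero_iff _ p]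
  have hne : RingHom.ker y ≠ ⊥ := by
    intro h
    have hp0 : (p : 𝓞 M) = 0 := by rw [← Ideal.mem_bot, ← h, hker]
    exact hp.ne_zero (by exact_mod_cast hp0)
  have := (RingHom.ker_isPrime y).isMaximal hne
  obtain ⟨l, n, -, hmem, hl, hn⟩ := Ideal.exists_prime_and_absNorm_eq_pow (RingHom.ker y)
  exact ⟨n, by rw [hn, (Nat.prime_dvd_prime_iff_eq hp hl).1 ((hker l).1 hmem)]⟩

lemma card_ringHom_absNorm_ker_eq (f : ℕ) :
    Nat.card {y : 𝓞 M →+* AlgebraicClosure (ZMod p) // Ideal.absNorm (RingHom.ker y) = p ^ f} =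
      f * primeCount M (p ^ f) := by
  have : Finite (𝓞 M →+* AlgebraicClosure (ZMod p)) := finite_ringHom_of_finite_int _ _
  have : Finite {P : Ideal (𝓞 M) // P.IsPrime ∧ Ideal.absNorm P = p ^ f} :=
    ((Ideal.finite_setOfPred_absNorm_eq (p ^ f)).subset fun P hP ↦ hP.2).to_subtype
  have := Fintype.ofFinite {P : Ideal (𝓞 M) // P.IsPrime ∧ Ideal.absNorm P = p ^ f}
  have hfibre (P : {P : Ideal (𝓞 M) // P.IsPrime ∧ Ideal.absNorm P = p ^ f}) :
      Nat.card {y : 𝓞 M →+* AlgebraicClosure (ZMod p) // RingHom.ker y = P.1} = f := by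
    have := isMaximal_of_absNorm_ne_zero P.2.1 (by simp [P.2.2, NeZero.ne])
    exact card_ringHom_ker_eq p P.1 ((natCard_quotient_eq_absNorm _).trans P.2.2)
  let E : {y : 𝓞 M →+* AlgebraicClosure (ZMod p) // Ideal.absNorm (RingHom.ker y) = p ^ f} ≃
      Σ P : {P : Ideal (𝓞 M) // P.IsPrime ∧ Ideal.absNorm P = p ^ f},
        {y : 𝓞 M →+* AlgebraicClosure (ZMod p) // RingHom.ker y = P.1} :=
    { toFun y := ⟨⟨_, RingHom.ker_isPrime y.1, y.2⟩, y.1, rfl⟩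
      invFun t := ⟨t.2.1, by rw [t.2.2, t.1.2.2]⟩
      left_inv y := rfl
      right_inv := by
        rintro ⟨⟨P, hP⟩, y, hy⟩
        dsimp only at hy
        subst hy
        rfl }
  rw [Nat.card_congr E, Nat.card_sigma, Finset.sum_congr rfl fun P _ ↦ hfibre P, Finset.sum_const,
    smul_eq_mul, mul_comm, primeCount, Nat.card_eq_fintype_card, Finset.card_univ]

/-- A point fixed by the `m`-th power of Frobenius has as kernel a prime of norm `p ^ f` with
`f ∣ m`, and each such prime is the kernel of `f` points. -/
lemma card_iterateFrobenius_comp_eq_self {m : ℕ} (hm : m ≠ 0) :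
    Nat.card {y : 𝓞 M →+* AlgebraicClosure (ZMod p) // (iterateFrobenius _ p m).comp y = y} =
      ∑ f ∈ m.divisors, f * primeCount M (p ^ f) := by
  have : Finite (𝓞 M →+* AlgebraicClosure (ZMod p)) := finite_ringHom_of_finite_int _ _
  have := Fintype.ofFinite (𝓞 M →+* AlgebraicClosure (ZMod p))
  have hiff (y : 𝓞 M →+* AlgebraicClosure (ZMod p)) : (iterateFrobenius _ p m).comp y = y ↔
      ∃ f ∈ m.divisors, Ideal.absNorm (RingHom.ker y) = p ^ f := by
    obtain ⟨f, hyf⟩ := exists_absNorm_ker_eq_pow p y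
    have := isMaximal_of_absNorm_ne_zero (RingHom.ker_isPrime y) (by simp [hyf, NeZero.ne])
    have hdvd := iterateFrobenius_comp_eq_self_iff_dvd p y
      ((natCard_quotient_eq_absNorm _).trans hyf) m
    have hinj := Nat.pow_right_injective (Fact.out : p.Prime).two_le
    simp [hdvd, hyf, hinj.eq_iff, hm]
  simp only [← card_ringHom_absNorm_ker_eq, Nat.card_eq_fintype_card, Fintype.card_subtype]
  rw [← Finset.card_biUnion]
  · congr 1
    ext y
    simp [hiff]
  · refine fun f _ f' _ hff' ↦ Finset.disjoint_left.2 fun y hy hy' ↦ hff' ?_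
    exact Nat.pow_right_injective (Fact.out : p.Prime).two_le
      ((Finset.mem_filter.1 hy).2.symm.trans (Finset.mem_filter.1 hy').2)

end NumberField

/-- The action of `G` on the ring homomorphisms out of `B` by precomposition with the inverse. -/
abbrev ringHomMulAction (G B Ω : Type*) [Group G] [CommRing B] [MulSemiringAction G B]
    [CommRing Ω] : MulAction G (B →+* Ω) where
  smul g x := x.comp (MulSemiringAction.toRingHom G B g⁻¹)
  one_smul x := RingHom.ext fun a ↦ by
    change x ((1 : G)⁻¹ • a) = x a
    rw [inv_one, one_smul]
  mul_smul g h x := RingHom.ext fun a ↦ by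
    change x ((g * h)⁻¹ • a) = x (h⁻¹ • g⁻¹ • a)
    rw [mul_inv_rev, mul_smul]

attribute [local instance] ringHomMulAction

lemma ringHom_smul_comp {G B Ω : Type*} [Group G] [CommRing B] [MulSemiringAction G B]
    [CommRing Ω] (F : Ω →+* Ω) (g : G) (x : B →+* Ω) : F.comp (g • x) = g • F.comp x := rfl

/-- The number of characteristic-`p` points of `𝓞 L` on which `g` acts as the `m`-th power of
Frobenius. -/
noncomputable def frobeniusCount (m : ℕ) (L : Type*) [Field L] (g : RingAut L) : ℝ :=
  Nat.card {x : 𝓞 L →+* AlgebraicClosure (ZMod p) // (iterateFrobenius _ p m).comp x = g • x}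

lemma isClassFunction_frobeniusCount (m : ℕ) (L : Type*) [Field L] :
    IsClassFunction (frobeniusCount p m L) := fun τ g ↦ by
  refine congrArg Nat.cast (Nat.card_congr ((MulAction.toPerm τ⁻¹).subtypeEquiv fun x ↦ ?_))
  rw [MulAction.toPerm_apply, ringHom_smul_comp, inv_smul_eq_iff, smul_smul, smul_smul]

lemma card_iterateFrobenius_comp_eq_self_eq_galAvg (m : ℕ) (M L : Type*) [Field M] [Field L]
    [NumberField M] [NumberField L] [Algebra M L] [IsGalois M L] :
    (Nat.card {y : 𝓞 M →+* AlgebraicClosure (ZMod p) // (iterateFrobenius _ p m).comp y = y} : ℝ) =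
      galAvg M (frobeniusCount p m L) := by
  have : Finite (𝓞 L →+* AlgebraicClosure (ZMod p)) := finite_ringHom_of_finite_int _ _
  have hcount := sum_natCard_eq_smul_eq_card_mul_fixedPoints (G := L ≃ₐ[M] L)
    (π := fun x : 𝓞 L →+* AlgebraicClosure (ZMod p) ↦ x.comp (algebraMap (𝓞 M) (𝓞 L)))
    exists_comp_algebraMap_eq_of_isIntegral (fun x x' ↦ ⟨fun h ↦ ?_, ?_⟩)
    (φ := (iterateFrobenius _ p m).comp) (ψ := (iterateFrobenius _ p m).comp) fun x ↦ rfl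
  · rw [galAvg, Fintype.expect_eq_sum_div_card,
      eq_div_iff (Nat.cast_ne_zero.2 Fintype.card_ne_zero), mul_comm]
    rw [Nat.card_eq_fintype_card (α := L ≃ₐ[M] L)] at hcount
    simp only [frobeniusCount]
    exact_mod_cast hcount.symm
  · obtain ⟨σ, hσ⟩ := exists_forall_eq_apply_smul (𝓞 M) (G := L ≃ₐ[M] L) h.symm
    exact ⟨σ⁻¹, RingHom.ext fun b ↦ by
      rw [hσ]; change x (σ⁻¹⁻¹ • b) = _; rw [inv_inv]⟩
  · rintro ⟨σ, rfl⟩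
    ext a
    change x (algebraMap _ _ a) = x (σ⁻¹ • algebraMap (𝓞 M) (𝓞 L) a)
    rw [smul_algebraMap]

end FrobeniusCounts

section PrimeIdeals

lemma eq_of_sum_divisors_eq {a b : ℕ → ℕ}
    (h : ∀ m ≠ 0, ∑ f ∈ m.divisors, a f = ∑ f ∈ m.divisors, b f) : ∀ m ≠ 0, a m = b m := by
  intro m
  induction m using Nat.strong_induction_on with
  | _ m ih =>
    intro hm
    have hsum := h m hm
    rw [← Nat.insert_self_properDivisors hm, Finset.sum_insert Nat.self_notMem_properDivisors,
      Finset.sum_insert Nat.self_notMem_properDivisors,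
      Finset.sum_congr rfl fun f hf ↦ ih f (Nat.mem_properDivisors.1 hf).2
        (Nat.pos_of_mem_properDivisors hf).ne'] at hsum
    exact Nat.add_right_cancel hsum

lemma exists_equiv_of_natCard_fiber_eq {α β γ : Type*} {f : α → γ} {g : β → γ}
    (hf : ∀ c, Finite {a // f a = c}) (hg : ∀ c, Finite {b // g b = c})
    (h : ∀ c, Nat.card {a // f a = c} = Nat.card {b // g b = c}) :
    ∃ E : α ≃ β, ∀ a, g (E a) = f a := by
  have hE (c : γ) : Nonempty ({a // f a = c} ≃ {b // g b = c}) := Finite.card_eq.1 (h c)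
  exact ⟨Equiv.ofFiberEquiv fun c ↦ (hE c).some, Equiv.ofFiberEquiv_map _⟩

section SumElim

variable {α β γ : Type*} {f : α → γ} {g : β → γ} {c : γ}

/-- The fibre of `Sum.elim f g` over `c` is the disjoint union of the fibres of `f` and `g`. -/
def sumElimFiberEquiv : {x // Sum.elim f g x = c} ≃ {a // f a = c} ⊕ {b // g b = c} :=
  Equiv.subtypeSum (p := fun x ↦ Sum.elim f g x = c)

variable [Finite {a // f a = c}] [Finite {b // g b = c}]

instance finite_sumElim_fiber : Finite {x // Sum.elim f g x = c} :=
  Finite.of_equiv _ sumElimFiberEquiv.symm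

lemma natCard_sumElim_fiber :
    Nat.card {x // Sum.elim f g x = c} = Nat.card {a // f a = c} + Nat.card {b // g b = c} := by
  rw [Nat.card_congr sumElimFiberEquiv, Nat.card_sum]

end SumElim

/-- The absolute norm of a nonzero prime ideal of the ring of integers of `M`. -/
noncomputable def primeNorm (M : Type*) [Field M] [NumberField M]
    (P : IsDedekindDomain.HeightOneSpectrum (𝓞 M)) : ℕ :=
  Ideal.absNorm P.asIdeal

instance finite_primeNorm_eq (M : Type*) [Field M] [NumberField M] (n : ℕ) :
    Finite {P // primeNorm M P = n} := by
  have : Finite {I : Ideal (𝓞 M) // Ideal.absNorm I = n} :=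
    (Ideal.finite_setOfPred_absNorm_eq (S := 𝓞 M) n).to_subtype
  exact Finite.of_injective (β := {I : Ideal (𝓞 M) // Ideal.absNorm I = n})
    (fun P ↦ ⟨P.1.asIdeal, P.2⟩) fun P Q h ↦ Subtype.ext
      (IsDedekindDomain.HeightOneSpectrum.ext (congrArg Subtype.val h))

lemma natCard_primeNorm_eq (M : Type*) [Field M] [NumberField M] (n : ℕ) :
    Nat.card {P // primeNorm M P = n} = if IsPrimePow n then primeCount M n else 0 := by
  split_ifs with hn
  · have hbot {P : Ideal (𝓞 M)} (hP : Ideal.absNorm P = n) : P ≠ ⊥ := by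
      rintro rfl
      exact hn.ne_zero (hP.symm.trans Ideal.absNorm_bot)
    exact Nat.card_congr
      { toFun P := ⟨P.1.asIdeal, P.1.isPrime, P.2⟩
        invFun P := ⟨⟨P.1, P.2.1, hbot P.2.2⟩, P.2.2⟩ }
  · rw [Nat.card_eq_zero]
    left
    refine ⟨fun ⟨P, hP⟩ ↦ hn ?_⟩
    have := P.isMaximal
    obtain ⟨p, f, hf, -, hp, h⟩ := Ideal.exists_prime_and_absNorm_eq_pow P.asIdeal
    rw [← hP, primeNorm, h]
    exact hp.isPrimePow.pow hf.ne'

variable {q : ℕ} [NeZero q] {k L : Type*} [Field k] [Field L] [NumberField k] [NumberField L]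
  [Algebra k L] [IsGalois k L]

theorem primeCount_dihedral (e : (L ≃ₐ[k] L) ≃* DihedralGroup q) (hq : Odd q) {n : ℕ}
    (hn : IsPrimePow n) :
    primeCount L n + 2 * primeCount k n =
      primeCount (rotationField e) n + 2 * primeCount (reflectionField e) n := by
  obtain ⟨p, f, hp, hf, rfl⟩ := hn
  have : Fact p.Prime := ⟨hp.nat_prime⟩
  refine Nat.eq_of_mul_eq_mul_left hf (eq_of_sum_divisors_eq
    (a := fun f ↦ f * (primeCount L (p ^ f) + 2 * primeCount k (p ^ f)))
    (b := fun f ↦ f * (primeCount (rotationField e) (p ^ f) +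
      2 * primeCount (reflectionField e) (p ^ f))) (fun m hm ↦ ?_) f hf.ne')
  have h := (isClassFunction_frobeniusCount p m L).galAvg_dihedral e hq
  simp only [← card_iterateFrobenius_comp_eq_self_eq_galAvg,
    card_iterateFrobenius_comp_eq_self p _ hm] at h
  norm_cast at h
  simpa only [mul_add, Finset.sum_add_distrib, mul_left_comm _ 2, ← Finset.mul_sum] using h

lemma exists_primes_equiv_dihedral (e : (L ≃ₐ[k] L) ≃* DihedralGroup q) (hq : Odd q) :
    ∃ E : (_ ⊕ (_ ⊕ _)) ≃ (_ ⊕ (_ ⊕ _)), ∀ P,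
      Sum.elim (primeNorm (rotationField e))
        (Sum.elim (primeNorm (reflectionField e)) (primeNorm (reflectionField e))) (E P) =
      Sum.elim (primeNorm L) (Sum.elim (primeNorm k) (primeNorm k)) P := by
  refine exists_equiv_of_natCard_fiber_eq (fun n ↦ inferInstance) (fun n ↦ inferInstance)
    fun n ↦ ?_
  simp only [natCard_sumElim_fiber, natCard_primeNorm_eq]
  split_ifs with hn
  · have := primeCount_dihedral e hq hn
    omega
  · rfl

end PrimeIdeals

section EulerProducts

/-- The term `(∏ N(v) ^ e(v)) ^ (-s)` of the Euler product over the family of norms `N`. -/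
noncomputable def normSeries {P : Type*} (N : P → ℕ) (s : ℝ) (e : P →₀ ℕ) : ℝ :=
  ((e.prod fun v n ↦ N v ^ n : ℕ) : ℝ) ^ (-s)

lemma normSeries_nonneg {P : Type*} (N : P → ℕ) (s : ℝ) (e : P →₀ ℕ) : 0 ≤ normSeries N s e :=
  Real.rpow_nonneg (Nat.cast_nonneg _) _

lemma normSeries_sumElim {P Q : Type*} (N : P → ℕ) (N' : Q → ℕ) (s : ℝ)
    (e : (P →₀ ℕ) × (Q →₀ ℕ)) :
    normSeries (Sum.elim N N') s (Finsupp.sumFinsuppEquivProdFinsupp.symm e) =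
      normSeries N s e.1 * normSeries N' s e.2 := by
  rw [normSeries, normSeries, normSeries, ← Real.mul_rpow (Nat.cast_nonneg _) (Nat.cast_nonneg _),
    ← Nat.cast_mul]
  congr 2
  exact Finsupp.prod_sumElim e.1 e.2 (fun v n ↦ Sum.elim N N' v ^ n)

lemma hasSum_normSeries_sumElim {P Q : Type*} {N : P → ℕ} {N' : Q → ℕ} {s a b : ℝ}
    (h : HasSum (normSeries N s) a) (h' : HasSum (normSeries N' s) b) :
    HasSum (normSeries (Sum.elim N N') s) (a * b) := by
  rw [← Finsupp.sumFinsuppEquivProdFinsupp.symm.hasSum_iff]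
  exact (h.mul h' (h.summable.mul_of_nonneg h'.summable (normSeries_nonneg _ _)
    (normSeries_nonneg _ _))).congr_fun fun e ↦ normSeries_sumElim N N' s e

lemma hasSum_normSeries_congr {P Q : Type*} {N : P → ℕ} {N' : Q → ℕ} {s a : ℝ} (E : P ≃ Q)
    (hE : ∀ v, N' (E v) = N v) (h : HasSum (normSeries N s) a) : HasSum (normSeries N' s) a := by
  rw [← (Finsupp.domCongr (M := ℕ) E).toEquiv.hasSum_iff]
  refine h.congr_fun fun e ↦ ?_
  change normSeries N' s (Finsupp.equivMapDomain E e) = _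
  rw [normSeries, normSeries, Finsupp.prod_equivMapDomain]
  simp only [hE]

section UniqueFactorization

open IsDedekindDomain UniqueFactorizationMonoid

variable {R : Type*} [CommRing R]

lemma finsuppProd_asIdeal_pow (e : HeightOneSpectrum R →₀ ℕ) :
    (e.prod fun v n ↦ v.asIdeal ^ n) = (e.toMultiset.map HeightOneSpectrum.asIdeal).prod := by
  rw [Finsupp.toMultiset_map, Finsupp.prod_toMultiset, Finsupp.prod_mapDomain_index]
  · exact fun _ ↦ pow_zero _
  · exact fun _ _ _ ↦ pow_add _ _ _

variable [IsDedekindDomain R]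

lemma injective_finsuppProd_asIdeal_pow :
    Function.Injective fun e : HeightOneSpectrum R →₀ ℕ ↦ e.prod fun v n ↦ v.asIdeal ^ n := by
  have hfactors (e : HeightOneSpectrum R →₀ ℕ) :
      normalizedFactors (e.prod fun v n ↦ v.asIdeal ^ n) =
        e.toMultiset.map HeightOneSpectrum.asIdeal := by
    rw [finsuppProd_asIdeal_pow]
    refine normalizedFactors_prod_of_prime fun I hI ↦ ?_
    obtain ⟨v, -, rfl⟩ := Multiset.mem_map.1 hI
    exact v.prime
  intro e e' h
  have hmap := congrArg normalizedFactors h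
  simp only [hfactors] at hmap
  exact Multiset.toFinsupp.symm.injective
    (Multiset.map_injective (fun v w ↦ HeightOneSpectrum.ext) hmap)

lemma exists_finsuppProd_asIdeal_pow_eq {I : Ideal R} (hI : I ≠ 0) :
    ∃ e : HeightOneSpectrum R →₀ ℕ, (e.prod fun v n ↦ v.asIdeal ^ n) = I := by
  have hprime : ∀ J ∈ normalizedFactors I, ∃ v : HeightOneSpectrum R, v.asIdeal = J := fun J hJ ↦
    have hJ' := prime_of_normalized_factor J hJ
    ⟨⟨J, Ideal.isPrime_of_prime hJ', hJ'.ne_zero⟩, rfl⟩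
  obtain ⟨s, hs⟩ : ∃ s : Multiset (HeightOneSpectrum R),
      s.map HeightOneSpectrum.asIdeal = normalizedFactors I := by
    lift normalizedFactors I to Multiset (Set.range (HeightOneSpectrum.asIdeal (R := R)))
      using hprime with t ht
    refine ⟨t.map fun J ↦ J.2.choose, ?_⟩
    rw [Multiset.map_map]
    exact Multiset.map_congr rfl fun J _ ↦ J.2.choose_spec
  refine ⟨Multiset.toFinsupp s, ?_⟩
  rw [finsuppProd_asIdeal_pow, Multiset.toFinsupp_toMultiset, hs]
  exact associated_iff_eq.1 (prod_normalizedFactors hI)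

end UniqueFactorization

lemma hasSum_comp_of_summable_natCard_mul {α : Type*} {f : α → ℕ} {g : ℕ → ℝ}
    (hf : ∀ n, Finite {a // f a = n}) (hg : ∀ n, 0 ≤ g n)
    (h : Summable fun n ↦ Nat.card {a // f a = n} * g n) :
    HasSum (fun a ↦ g (f a)) (∑' n, Nat.card {a // f a = n} * g n) := by
  have hfibre (n : ℕ) : HasSum (fun _ : {a // f a = n} ↦ g n) (Nat.card {a // f a = n} * g n) := by
    have := Fintype.ofFinite {a // f a = n}
    have hsum := hasSum_fintype fun _ : {a // f a = n} ↦ g n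
    rwa [Finset.sum_const, nsmul_eq_mul, Finset.card_univ, ← Nat.card_eq_fintype_card] at hsum
  rw [← (Equiv.sigmaFiberEquiv f).hasSum_iff]
  have hcongr : (fun x : Σ n, {a // f a = n} ↦ g x.1) =
      (fun a ↦ g (f a)) ∘ Equiv.sigmaFiberEquiv f := by
    ext ⟨n, a, rfl⟩
    rfl
  rw [← hcongr]
  refine h.hasSum.sigma_of_hasSum hfibre ?_
  rw [summable_sigma_of_nonneg fun x ↦ hg x.1]
  exact ⟨fun n ↦ (hfibre n).summable, by simpa only [(hfibre _).tsum_eq] using h⟩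

lemma lSeries_term_eq_ofReal (c : ℕ → ℕ) {s : ℝ} (hs : s ≠ 0) :
    LSeries.term (fun n ↦ c n) s = fun n ↦ ((c n * (n : ℝ) ^ (-s) : ℝ) : ℂ) := by
  ext n
  rw [LSeries.term_def]
  split_ifs with hn
  · rw [hn, Nat.cast_zero, Real.zero_rpow (neg_ne_zero.2 hs), mul_zero, Complex.ofReal_zero]
  · rw [Complex.ofReal_mul, Complex.ofReal_cpow (Nat.cast_nonneg _), Complex.ofReal_neg,
      Complex.cpow_neg, div_eq_mul_inv, Complex.ofReal_natCast, Complex.ofReal_natCast]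

variable (M : Type*) [Field M] [NumberField M]

/-- Nonvanishing of the zeta function forces convergence, as a divergent series has junk sum `0`. -/
lemma exists_hasSum_absNorm_rpow {s : ℝ} (hs : s ≠ 0) (h0 : dedekindZeta M s ≠ 0) :
    ∃ a : ℝ, HasSum (fun I : Ideal (𝓞 M) ↦ (Ideal.absNorm I : ℝ) ^ (-s)) a ∧
      dedekindZeta M s = a := by
  rw [dedekindZeta, LSeries, lSeries_term_eq_ofReal _ hs] at h0 ⊢
  refine ⟨_, hasSum_comp_of_summable_natCard_mul (f := Ideal.absNorm) (g := fun n ↦ (n : ℝ) ^ (-s))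
    (fun n ↦ (Ideal.finite_setOfPred_absNorm_eq (S := 𝓞 M) n).to_subtype)
    (fun n ↦ Real.rpow_nonneg (Nat.cast_nonneg _) _) ?_, (Complex.ofReal_tsum _).symm⟩
  by_contra h
  exact h0 (tsum_eq_zero_of_not_summable (by rwa [Complex.summable_ofReal]))

lemma exists_hasSum_normSeries_primeNorm {s : ℝ} (hs : s ≠ 0) (h0 : dedekindZeta M s ≠ 0) :
    ∃ a : ℝ, HasSum (normSeries (primeNorm M) s) a ∧ dedekindZeta M s = a := by
  obtain ⟨a, ha, hζ⟩ := exists_hasSum_absNorm_rpow M hs h0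
  refine ⟨a, ?_, hζ⟩
  rw [← injective_finsuppProd_asIdeal_pow.hasSum_iff] at ha
  · refine ha.congr_fun fun e ↦ ?_
    change _ = ((Ideal.absNorm (e.prod fun v n ↦ v.asIdeal ^ n) : ℕ) : ℝ) ^ (-s)
    rw [map_finsuppProd]
    simp only [map_pow]
    rfl
  · intro I hI
    obtain rfl : I = 0 := by
      by_contra h
      exact hI (exists_finsuppProd_asIdeal_pow_eq h)
    rw [map_zero, Nat.cast_zero, Real.zero_rpow (neg_ne_zero.2 hs)]

end EulerProducts

section Residues

open Filter Topology

lemma eventually_dedekindZeta_ne_zero (M : Type*) [Field M] [NumberField M] :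
    ∀ᶠ s : ℝ in 𝓝[>] 1, dedekindZeta M s ≠ 0 := by
  have h := (tendsto_sub_one_mul_dedekindZeta_nhdsGT M).eventually_ne
    (Complex.ofReal_ne_zero.2 (dedekindZeta_residue_ne_zero M))
  filter_upwards [h] with s hs h0
  exact hs (by rw [h0, mul_zero])

lemma tendsto_sub_one_pow_mul_dedekindZeta (M N : Type*) [Field M] [NumberField M] [Field N]
    [NumberField N] :
    Tendsto (fun s : ℝ ↦ ((s : ℂ) - 1) ^ 3 * (dedekindZeta M s * dedekindZeta N s ^ 2)) (𝓝[>] 1)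
      (𝓝 ((dedekindZeta_residue M * dedekindZeta_residue N ^ 2 : ℝ) : ℂ)) := by
  push_cast
  refine ((tendsto_sub_one_mul_dedekindZeta_nhdsGT M).mul
    ((tendsto_sub_one_mul_dedekindZeta_nhdsGT N).pow 2)).congr fun s ↦ ?_
  ring

variable {q : ℕ} [NeZero q] {k L : Type*} [Field k] [Field L] [NumberField k] [NumberField L]
  [Algebra k L] [IsGalois k L] (e : (L ≃ₐ[k] L) ≃* DihedralGroup q)

theorem eventually_dedekindZeta_dihedral (hq : Odd q) :
    ∀ᶠ s : ℝ in 𝓝[>] 1, dedekindZeta L s * dedekindZeta k s ^ 2 =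
      dedekindZeta (rotationField e) s * dedekindZeta (reflectionField e) s ^ 2 := by
  obtain ⟨E, hE⟩ := exists_primes_equiv_dihedral e hq
  filter_upwards [eventually_dedekindZeta_ne_zero L, eventually_dedekindZeta_ne_zero k,
    eventually_dedekindZeta_ne_zero (rotationField e),
    eventually_dedekindZeta_ne_zero (reflectionField e), self_mem_nhdsWithin] with s hL hk hF hK hs
  have hs0 : s ≠ 0 := (zero_lt_one.trans hs).ne'
  obtain ⟨a, ha, hLa⟩ := exists_hasSum_normSeries_primeNorm L hs0 hL
  obtain ⟨b, hb, hkb⟩ := exists_hasSum_normSeries_primeNorm k hs0 hk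
  obtain ⟨c, hc, hFc⟩ := exists_hasSum_normSeries_primeNorm (rotationField e) hs0 hF
  obtain ⟨d, hd, hKd⟩ := exists_hasSum_normSeries_primeNorm (reflectionField e) hs0 hK
  have hleft := hasSum_normSeries_congr E hE
    (hasSum_normSeries_sumElim ha (hasSum_normSeries_sumElim hb hb))
  have hright := hasSum_normSeries_sumElim hc (hasSum_normSeries_sumElim hd hd)
  rw [hLa, hkb, hFc, hKd, sq, sq]
  exact_mod_cast hleft.unique hright

theorem dedekindZeta_residue_dihedral (hq : Odd q) :
    dedekindZeta_residue L * dedekindZeta_residue k ^ 2 =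
      dedekindZeta_residue (rotationField e) * dedekindZeta_residue (reflectionField e) ^ 2 := by
  refine Complex.ofReal_injective (tendsto_nhds_unique
    ((tendsto_sub_one_pow_mul_dedekindZeta L k).congr' ?_)
    (tendsto_sub_one_pow_mul_dedekindZeta (rotationField e) (reflectionField e)))
  filter_upwards [eventually_dedekindZeta_dihedral e hq] with s hs
  rw [hs]

end Residues

section LocalGenerators

variable {B : Type*} [CommRing B] {P : Ideal B}

lemma natCard_quotient_cast_mem (P : Ideal B) [P.IsMaximal] [Finite (B ⧸ P)] :
    (Nat.card (B ⧸ P) : B) ∈ P := by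
  let _ : Field (B ⧸ P) := Ideal.Quotient.field P
  have := Fintype.ofFinite (B ⧸ P)
  rw [← Ideal.Quotient.eq_zero_iff_mem, map_natCast, Nat.card_eq_fintype_card,
    FiniteField.cast_card_eq_zero]

lemma pow_natCard_quotient_sub_self_mem (P : Ideal B) [P.IsMaximal] [Finite (B ⧸ P)] (x : B) :
    x ^ Nat.card (B ⧸ P) - x ∈ P := by
  let _ : Field (B ⧸ P) := Ideal.Quotient.field P
  have := Fintype.ofFinite (B ⧸ P)
  rw [← Ideal.Quotient.eq, map_pow, Nat.card_eq_fintype_card, FiniteField.pow_card]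

lemma add_pow_sub_pow_mem_sq {N : ℕ} (hN : (N : B) ∈ P) {t : B} (ht : t ∈ P) (a : B) :
    (a + t) ^ N - a ^ N ∈ P ^ 2 := by
  obtain ⟨c, hc⟩ := Polynomial.binomExpansion (Polynomial.X ^ N : Polynomial B) a t
  simp only [Polynomial.eval_pow, Polynomial.eval_X, Polynomial.derivative_X_pow,
    Polynomial.eval_mul, Polynomial.eval_C] at hc
  have hlin : (N : B) * a ^ (N - 1) * t ∈ P ^ 2 := by
    rw [pow_two, mul_assoc]
    exact Ideal.mul_mem_mul hN (Ideal.mul_mem_left _ _ ht)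
  have hquad : c * t ^ 2 ∈ P ^ 2 := Ideal.mul_mem_left _ _ (Ideal.pow_mem_pow ht 2)
  rw [hc, add_assoc, add_sub_cancel_left]
  exact add_mem hlin hquad

lemma exists_sub_mem_pow_natCard_sub_notMem_sq [IsDedekindDomain B] [P.IsMaximal] (hP : P ≠ ⊥)
    [Finite (B ⧸ P)] (a : B) :
    ∃ b, b - a ∈ P ∧ b ^ Nat.card (B ⧸ P) - b ∉ P ^ 2 := by
  set N := Nat.card (B ⧸ P)
  by_cases h : a ^ N - a ∈ P ^ 2
  · obtain ⟨t, ht, ht2⟩ : ∃ t ∈ P, t ∉ P ^ 2 := by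
      simpa using Ideal.exists_mem_pow_notMem_pow_succ P hP Ideal.IsPrime.ne_top' 1
    refine ⟨a + t, by simpa using ht, fun h' ↦ ht2 ?_⟩
    have hpert := add_pow_sub_pow_mem_sq (natCard_quotient_cast_mem P) ht a
    have ht_eq : t = ((a + t) ^ N - a ^ N) + (a ^ N - a) - ((a + t) ^ N - (a + t)) := by ring
    rw [ht_eq]
    exact sub_mem (add_mem hpert h) h'
  · exact ⟨a, by simp, h⟩

lemma exists_mem_sub_mem_sq [P.IsMaximal] {J : Ideal B} (hJ : ¬ J ≤ P) (a : B) :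
    ∃ b ∈ J, b - a ∈ P ^ 2 := by
  have hcop : IsCoprime (P ^ 2) J :=
    IsCoprime.pow_left <| Ideal.isCoprime_iff_sup_eq.2 <|
      (‹P.IsMaximal›.out.2 _ (left_lt_sup.2 hJ))
  obtain ⟨x, hx, y, hy, hxy⟩ := Ideal.isCoprime_iff_exists.1 hcop
  refine ⟨y * a, Ideal.mul_mem_right _ _ hy, ?_⟩
  have : y * a - a = -(x * a) := by rw [eq_sub_of_add_eq' hxy]; ring
  rw [this]
  exact neg_mem (Ideal.mul_mem_right _ _ hx)

lemma exists_forall_eq_zero_or_eq_pow (k : Type*) [Field k] [Finite k] :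
    ∃ u : k, u ≠ 0 ∧ ∀ x, x = 0 ∨ ∃ i : ℕ, x = u ^ i := by
  obtain ⟨u, hu⟩ := IsCyclic.exists_generator (α := kˣ)
  refine ⟨u, u.ne_zero, fun x ↦ or_iff_not_imp_left.2 fun hx ↦ ?_⟩
  obtain ⟨i, hi⟩ := mem_powers_iff_mem_zpowers.2 (hu (Units.mk0 x hx))
  exact ⟨i, by simpa using (congrArg Units.val hi).symm⟩

lemma exists_generator_mod_prime [IsDedekindDomain B] [P.IsMaximal] (hP : P ≠ ⊥)
    [Finite (B ⧸ P)] {J : Ideal B} (hJ : ¬ J ≤ P) :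
    ∃ α ∈ J, α ∉ P ∧ (∀ b : B, b ∈ P ∨ ∃ i : ℕ, b - α ^ i ∈ P) ∧
      α ^ Nat.card (B ⧸ P) - α ∉ P ^ 2 := by
  let _ : Field (B ⧸ P) := Ideal.Quotient.field P
  set N := Nat.card (B ⧸ P)
  obtain ⟨u, hu0, hu⟩ := exists_forall_eq_zero_or_eq_pow (B ⧸ P)
  obtain ⟨a, rfl⟩ := Ideal.Quotient.mk_surjective u
  obtain ⟨a', ha', ha2⟩ := exists_sub_mem_pow_natCard_sub_notMem_sq hP a
  obtain ⟨α, hαJ, hα⟩ := exists_mem_sub_mem_sq hJ a'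
  have hαa : Ideal.Quotient.mk P α = Ideal.Quotient.mk P a := Ideal.Quotient.eq.2 <| by
    simpa using add_mem (Ideal.pow_le_self two_ne_zero hα) ha'
  simp only [← hαa, ← map_pow, Ideal.Quotient.mk_surjective.forall, ne_eq,
    Ideal.Quotient.eq_zero_iff_mem, Ideal.Quotient.eq] at hu0 hu
  refine ⟨α, hαJ, hu0, hu, fun h ↦ ha2 ?_⟩
  have hpow : α ^ N - a' ^ N ∈ P ^ 2 := Ideal.mem_of_dvd _ (sub_dvd_pow_sub_pow _ _ N) hα
  have : a' ^ N - a' = (α ^ N - α) - (α ^ N - a' ^ N) + (α - a') := by ring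
  rw [this]
  exact add_mem (sub_mem h hpow) hα

end LocalGenerators

section Conductor

lemma pow_le_span_pow_sup {B : Type*} [CommRing B] {P : Ideal B} {π : B} (hπ : π ∈ P)
    (h : P ≤ Ideal.span {π} ⊔ P ^ 2) (n : ℕ) : P ^ n ≤ Ideal.span {π ^ n} ⊔ P ^ (n + 1) := by
  induction n with
  | zero => simp
  | succ n ih =>
    rw [pow_succ P n]
    refine (Ideal.mul_mono ih h).trans ?_
    rw [Ideal.sup_mul, Ideal.mul_sup]
    refine sup_le (sup_le ?_ ?_) ?_
    · rw [Ideal.span_singleton_mul_span_singleton, ← pow_succ]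
      exact le_sup_left
    · refine le_sup_of_le_right ?_
      rw [show n + 1 + 1 = n + 2 by ring, pow_add]
      exact Ideal.mul_mono ((Ideal.span_singleton_le_iff_mem _).2 (Ideal.pow_mem_pow hπ n)) le_rfl
    · refine le_sup_of_le_right ?_
      rw [pow_succ P (n + 1)]
      exact Ideal.mul_mono le_rfl (sup_le ((Ideal.span_singleton_le_iff_mem _).2 hπ)
        (Ideal.pow_le_self two_ne_zero))

lemma le_span_sup_sq {B : Type*} [CommRing B] [IsDedekindDomain B] {P : Ideal B} [P.IsPrime]
    (hP : P ≠ ⊥) {π : B} (hπ : π ∈ P) (hπ2 : π ∉ P ^ 2) : P ≤ Ideal.span {π} ⊔ P ^ 2 := by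
  intro x hx
  obtain ⟨d, r, hr, rfl⟩ := Ideal.exists_mul_add_mem_pow_succ (P := P) hP (i := 1) (a := π)
    (c := x) (by simpa using hπ) (by simpa using hπ2) (by simpa using hx)
  exact Submodule.add_mem_sup (Ideal.mem_span_singleton.2 ⟨d, rfl⟩) hr

variable {A B : Type*} [CommRing A] [CommRing B] [Algebra A B]

lemma exists_mem_subalgebra_sub_mem_pow {P : Ideal B} (S : Subalgebra A B) {π : B} (hπS : π ∈ S)
    (hπ : π ∈ P) (h : P ≤ Ideal.span {π} ⊔ P ^ 2) (hres : ∀ b, ∃ s ∈ S, b - s ∈ P) (n : ℕ) :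
    ∀ b, ∃ s ∈ S, b - s ∈ P ^ n := by
  induction n with
  | zero => exact fun b ↦ ⟨0, S.zero_mem, by simp⟩
  | succ n ih =>
    intro b
    obtain ⟨s, hs, hbs⟩ := ih b
    obtain ⟨y, hy, z, hz, hyz⟩ := Submodule.mem_sup.1 (pow_le_span_pow_sup hπ h n hbs)
    obtain ⟨d, rfl⟩ := Ideal.mem_span_singleton.1 hy
    obtain ⟨s', hs', hds⟩ := hres d
    refine ⟨s + π ^ n * s', add_mem hs (mul_mem (pow_mem hπS n) hs'), ?_⟩
    have : b - (s + π ^ n * s') = π ^ n * (d - s') + z := by linear_combination -hyz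
    rw [this, pow_succ]
    exact add_mem (Ideal.mul_mem_mul (Ideal.pow_mem_pow hπ n) hds) (by rwa [← pow_succ])

/-- Multiplication by `α` on the quotient module `B / A[α]`. -/
noncomputable def mulQuotAdjoin (A : Type*) {B : Type*} [CommRing A] [CommRing B] [Algebra A B]
    (α : B) : Module.End A (B ⧸ Subalgebra.toSubmodule (Algebra.adjoin A {α})) :=
  Submodule.mapQ _ _ (LinearMap.mulLeft A α) fun _ ht ↦
    mul_mem (Algebra.self_mem_adjoin_singleton A α) ht

lemma aeval_mulQuotAdjoin_mkQ (α : B) (g : Polynomial A) (b : B) :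
    Polynomial.aeval (mulQuotAdjoin A α) g (Submodule.mkQ _ b) =
      Submodule.mkQ _ (Polynomial.aeval α g * b) := by
  have hpow (n : ℕ) :
      (mulQuotAdjoin A α ^ n) (Submodule.mkQ _ b) = Submodule.mkQ _ (α ^ n * b) := by
    induction n with
    | zero => simp
    | succ n ih =>
      rw [pow_succ', Module.End.mul_apply, ih, pow_succ', mul_assoc]
      rfl
  induction g using Polynomial.induction_on' with
  | add u v hu hv => simp only [map_add, LinearMap.add_apply, hu, hv, add_mul]
  | monomial n a =>
    rw [Polynomial.aeval_monomial, Polynomial.aeval_monomial, Module.End.mul_apply, hpow,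
      Module.algebraMap_end_apply, ← map_smul, Algebra.smul_def, mul_assoc]

lemma aeval_mem_conductor {α : B} {g : Polynomial A}
    (h : Polynomial.aeval (mulQuotAdjoin A α) g = 0) : Polynomial.aeval α g ∈ conductor A α := by
  intro b
  have hb := aeval_mulQuotAdjoin_mkQ α g b
  rwa [h, LinearMap.zero_apply, eq_comm, Submodule.mkQ_apply, Submodule.Quotient.mk_eq_zero] at hb

lemma mem_of_aeval_mem {P : Ideal B} [P.IsPrime] {g : Polynomial A} (hg : g.Monic)
    (hcoeff : ∀ i < g.natDegree, g.coeff i ∈ P.under A) {α : B}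
    (h : Polynomial.aeval α g ∈ P) : α ∈ P := by
  rw [Polynomial.aeval_eq_sum_range, Finset.sum_range_succ, hg.coeff_natDegree, one_smul] at h
  have hlower : ∑ i ∈ Finset.range g.natDegree, g.coeff i • α ^ i ∈ P := sum_mem fun i hi ↦ by
    rw [Algebra.smul_def]
    exact Ideal.mul_mem_right _ _ (hcoeff i (Finset.mem_range.1 hi))
  exact Ideal.IsPrime.mem_of_pow_mem inferInstance _ ((Ideal.add_mem_iff_right P hlower).1 h)

lemma range_mulQuotAdjoin_le {α : B} {p : Ideal A}
    (h : ∀ b, ∃ s ∈ Algebra.adjoin A {α}, α * (b - s) ∈ p.map (algebraMap A B)) :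
    LinearMap.range (mulQuotAdjoin A α) ≤ p • ⊤ := by
  rintro _ ⟨x, rfl⟩
  obtain ⟨b, rfl⟩ := Submodule.mkQ_surjective _ x
  obtain ⟨s, hs, hbs⟩ := h b
  have hx : mulQuotAdjoin A α (Submodule.mkQ _ b) = Submodule.mkQ _ (α * (b - s)) := by
    change Submodule.mkQ _ (α * b) = _
    rw [← sub_eq_zero, ← map_sub, ← mul_sub, sub_sub_cancel, Submodule.mkQ_apply,
      Submodule.Quotient.mk_eq_zero]
    exact Subalgebra.mul_mem _ (Algebra.self_mem_adjoin_singleton A α) hs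
  have hmem : α * (b - s) ∈ (p • ⊤ : Submodule A B) := by rwa [Ideal.smul_top_eq_map]
  have := Submodule.mem_map_of_mem
    (f := Submodule.mkQ (Subalgebra.toSubmodule (Algebra.adjoin A {α}))) hmem
  rw [Submodule.map_smul''] at this
  exact hx ▸ Submodule.smul_mono le_rfl le_top this

theorem exists_conductor_not_le (A : Type*) {B : Type*} [CommRing A] [CommRing B] [Algebra A B]
    [IsDedekindDomain B] [Module.Finite A B] (P : Ideal B) [P.IsPrime] [Finite (B ⧸ P)]
    (hP : (P.under A).map (algebraMap A B) ≠ ⊥) : ∃ α : B, ¬ conductor A α ≤ P := by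
  have hP0 : P ≠ ⊥ := by
    rintro rfl
    exact hP (le_bot_iff.1 Ideal.map_comap_le)
  have hmax : P.IsMaximal := Ring.DimensionLEOne.maximalOfPrime hP0 inferInstance
  obtain ⟨e, J, hJ, hpJ⟩ := WfDvdMonoid.max_power_factor hP
    (Ideal.prime_of_isPrime hP0 inferInstance).irreducible
  obtain ⟨α, hαJ, hαP, hres, hπ2⟩ := exists_generator_mod_prime hP0 (Ideal.dvd_iff_le.not.1 hJ)
  have hα := Algebra.self_mem_adjoin_singleton A α
  have hπ := pow_natCard_quotient_sub_self_mem P α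
  refine ⟨α, fun hle ↦ hαP ?_⟩
  have hrange : LinearMap.range (mulQuotAdjoin A α) ≤ P.under A • ⊤ := by
    refine range_mulQuotAdjoin_le fun b ↦ ?_
    obtain ⟨s, hs, hbs⟩ := exists_mem_subalgebra_sub_mem_pow (Algebra.adjoin A {α})
      (sub_mem (pow_mem hα _) hα) hπ (le_span_sup_sq hP0 hπ hπ2)
      (fun b ↦ (hres b).elim (fun hb ↦ ⟨0, zero_mem _, by simpa using hb⟩)
        fun ⟨i, hi⟩ ↦ ⟨α ^ i, pow_mem hα i, hi⟩) e b
    exact ⟨s, hs, by rw [hpJ, mul_comm α]; exact Ideal.mul_mem_mul hbs hαJ⟩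
  obtain ⟨g, hg, -, hcoeff, hg0⟩ :=
    LinearMap.exists_monic_and_natDegree_eq_and_coeff_mem_pow_and_aeval_eq_zero A _ _ hrange
  exact mem_of_aeval_mem hg (fun i hi ↦ Ideal.pow_le_self (Nat.sub_ne_zero_of_lt hi) (hcoeff i))
    (hle (aeval_mem_conductor hg0))

end Conductor

section DifferentProduct

lemma le_of_forall_isMaximal_exists_mul_mem {B : Type*} [CommRing B] {I J : Ideal B}
    (h : ∀ P : Ideal B, P.IsMaximal → ∃ c ∉ P, ∀ x ∈ I, c * x ∈ J) : I ≤ J := by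
  by_contra hne
  have htop : (J.colon (I : Set B)) ≠ ⊤ := fun h ↦ hne fun x hx ↦ by
    simpa using Submodule.mem_colon.1 (h ▸ Submodule.mem_top : (1 : B) ∈ J.colon (I : Set B)) x hx
  obtain ⟨P, hP, hle⟩ := Ideal.exists_le_maximal _ htop
  obtain ⟨c, hc, hcI⟩ := h P hP
  exact hc (hle (Submodule.mem_colon.2 fun x hx ↦ hcI x hx))

/-- The ideal of `𝓞 L` generated by the elements `h x - x`, the largest ideal modulo which `h` acts
trivially. The different is a product of such ideals. -/
noncomputable def moveIdeal {L : Type*} [Field L] (h : RingAut L) : Ideal (𝓞 L) :=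
  Ideal.span (Set.range fun x : 𝓞 L ↦ h • x - x)

variable {M L : Type*} [Field M] [Field L] [Algebra M L]

lemma smul_sub_mem_moveIdeal (h : L ≃ₐ[M] L) (x : 𝓞 L) : h • x - x ∈ moveIdeal h.toRingEquiv :=
  Ideal.subset_span ⟨x, rfl⟩

lemma sub_smul_dvd_smul_sub_of_mem_adjoin {α : 𝓞 L} (h : L ≃ₐ[M] L) {y : 𝓞 L}
    (hy : y ∈ Algebra.adjoin (𝓞 M) {α}) : α - h • α ∣ h • y - y := by
  induction hy using Algebra.adjoin_induction with
  | mem x hx => rw [hx, ← neg_sub]; exact neg_dvd.2 dvd_rfl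
  | algebraMap r =>
    have : h • algebraMap (𝓞 M) (𝓞 L) r = algebraMap (𝓞 M) (𝓞 L) r :=
      RingOfIntegers.ext (h.commutes (algebraMap (𝓞 M) M r))
    rw [this, sub_self]
    exact dvd_zero _
  | add x y _ _ hx hy =>
    rw [smul_add, add_sub_add_comm]
    exact dvd_add hx hy
  | mul x y _ _ hx hy =>
    have : h • (x * y) - x * y = h • x * (h • y - y) + (h • x - x) * y := by
      rw [smul_mul']; ring
    rw [this]
    exact dvd_add (hy.mul_left _) (hx.mul_right _)

lemma sub_smul_dvd_smul_mul_of_mem_moveIdeal {α c : 𝓞 L} (hc : c ∈ conductor (𝓞 M) α)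
    (h : L ≃ₐ[M] L) {y : 𝓞 L} (hy : y ∈ moveIdeal h.toRingEquiv) : α - h • α ∣ h • c * y := by
  have hle : moveIdeal h.toRingEquiv ≤
      (Ideal.span {α - h • α}).colon ({h • c} : Set (𝓞 L)) := by
    refine Ideal.span_le.2 ?_
    rintro _ ⟨x, rfl⟩
    rw [SetLike.mem_coe, Submodule.mem_colon_singleton, Ideal.mem_span_singleton]
    have heq : (h • x - x) * (h • c) = (h • (c * x) - c * x) - (h • c - c) * x := by
      rw [smul_mul']; ring
    change α - h • α ∣ (h • x - x) * (h • c)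
    rw [heq]
    refine dvd_sub (sub_smul_dvd_smul_sub_of_mem_adjoin h (mem_conductor_iff.1 hc x)) ?_
    exact (sub_smul_dvd_smul_sub_of_mem_adjoin h
      (by simpa using mem_conductor_iff.1 hc 1)).mul_right _
  simpa only [Submodule.mem_colon_singleton, Ideal.mem_span_singleton, smul_eq_mul, mul_comm]
    using hle hy

lemma exists_mul_mem_of_mem_conductor {α c : 𝓞 L} (hc : c ∈ conductor (𝓞 M) α) {P : Ideal (𝓞 L)}
    (hcP : c ∉ P) (h : L ≃ₐ[M] L) :
    ∃ d ∉ P, ∀ y ∈ moveIdeal h.toRingEquiv, α - h • α ∣ d * y := by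
  by_cases hα : α - h • α ∈ P
  · refine ⟨h • c, fun hhc ↦ hcP ?_, fun y hy ↦ sub_smul_dvd_smul_mul_of_mem_moveIdeal hc h hy⟩
    have hmove : h • c - c ∈ P := Ideal.mem_of_dvd P
      (sub_smul_dvd_smul_sub_of_mem_adjoin h (by simpa using mem_conductor_iff.1 hc 1)) hα
    simpa using sub_mem hhc hmove
  · exact ⟨_, hα, fun y _ ↦ dvd_mul_right _ _⟩

lemma minpoly_map_eq_prod [FiniteDimensional M L] [IsGalois M L] {x : L}
    (hx : Algebra.adjoin M {x} = ⊤) :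
    (minpoly M x).map (algebraMap M L) =
      ∏ h : L ≃ₐ[M] L, (Polynomial.X - Polynomial.C (h x)) := by
  have hxi : IsIntegral M x := Algebra.IsIntegral.isIntegral x
  have hinj : Function.Injective fun h : L ≃ₐ[M] L ↦ h x := by
    intro g h hgh
    have : (g : L →ₐ[M] L) = h := AlgHom.ext_of_adjoin_eq_top hx (by simpa using hgh)
    exact AlgEquiv.coe_toAlgHom_injective this
  refine Polynomial.eq_of_monic_of_dvd_of_natDegree_le
    (Polynomial.monic_prod_of_monic _ _ fun h _ ↦ Polynomial.monic_X_sub_C _)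
    ((minpoly.monic hxi).map _) ?_ ?_
  · refine Finset.prod_dvd_of_coprime (fun g _ h _ hgh ↦ ?_) fun h _ ↦ ?_
    · exact Polynomial.isCoprime_X_sub_C_of_isUnit_sub
        (sub_ne_zero.2 fun h' ↦ hgh (hinj h')).isUnit
    · rw [Polynomial.dvd_iff_isRoot, Polynomial.IsRoot, Polynomial.eval_map_algebraMap,
        Polynomial.aeval_algHom_apply h, minpoly.aeval, map_zero]
  · rw [Polynomial.natDegree_prod_of_monic _ _ fun h _ ↦ Polynomial.monic_X_sub_C _]
    simp only [Polynomial.natDegree_X_sub_C, Finset.sum_const, Finset.card_univ,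
      Polynomial.natDegree_map, smul_eq_mul, mul_one]
    rw [← Nat.card_eq_fintype_card, IsGalois.card_aut_eq_finrank,
      (PowerBasis.ofAdjoinEqTop hxi hx).finrank, ← PowerBasis.natDegree_minpoly,
      PowerBasis.ofAdjoinEqTop_gen]

variable [NumberField M] [NumberField L]

lemma adjoin_eq_top_of_conductor_ne_bot {α : 𝓞 L} (hα : conductor (𝓞 M) α ≠ ⊥) :
    Algebra.adjoin M {algebraMap (𝓞 L) L α} = ⊤ := by
  set S := Algebra.adjoin M {algebraMap (𝓞 L) L α}
  obtain ⟨c, hc, hc0⟩ := Submodule.exists_mem_ne_zero_of_ne_bot hα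
  have hmul (b : 𝓞 L) : algebraMap (𝓞 L) L (c * b) ∈ S := by
    have hcb := (mem_conductor_iff.1 hc) b
    generalize c * b = d at hcb
    induction hcb using Algebra.adjoin_induction with
    | mem x hx => exact hx ▸ Algebra.self_mem_adjoin_singleton _ _
    | algebraMap r =>
      rw [← IsScalarTower.algebraMap_apply, IsScalarTower.algebraMap_apply (𝓞 M) M L]
      exact Subalgebra.algebraMap_mem _ _
    | add x y _ _ hx hy => rw [map_add]; exact add_mem hx hy
    | mul x y _ _ hx hy => rw [map_mul]; exact mul_mem hx hy
  have hinv : ∀ x ∈ S, x⁻¹ ∈ S := fun x hx ↦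
    Subalgebra.inv_mem_of_algebraic (A := S) (x := ⟨x, hx⟩)
      (Algebra.IsAlgebraic.isAlgebraic (R := M) x)
  have hc0' : algebraMap (𝓞 L) L c ≠ 0 := by simpa using hc0
  rw [eq_top_iff]
  rintro x -
  obtain ⟨a, b, hb, rfl⟩ := IsFractionRing.div_surjective (A := 𝓞 L) x
  have hb0 : algebraMap (𝓞 L) L b ≠ 0 := by simpa using nonZeroDivisors.ne_zero hb
  have hdiv : algebraMap (𝓞 L) L a / algebraMap (𝓞 L) L b =
      algebraMap (𝓞 L) L (c * a) * (algebraMap (𝓞 L) L (c * b))⁻¹ := by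
    rw [map_mul, map_mul]
    field_simp
  exact hdiv ▸ mul_mem (hmul a) (hinv _ (hmul b))

variable [IsGalois M L]

lemma aeval_derivative_minpoly_eq_prod {α : 𝓞 L}
    (hα : Algebra.adjoin M {algebraMap (𝓞 L) L α} = ⊤) :
    Polynomial.aeval α (Polynomial.derivative (minpoly (𝓞 M) α)) =
      ∏ h ∈ Finset.univ.erase (1 : L ≃ₐ[M] L), (α - h • α) := by
  set x := algebraMap (𝓞 L) L α
  have hαi : IsIntegral (𝓞 M) α := Algebra.IsIntegral.isIntegral α
  apply FaithfulSMul.algebraMap_injective (𝓞 L) L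
  calc _ = Polynomial.eval x (Polynomial.derivative ((minpoly M x).map (algebraMap M L))) := by
        rw [minpoly.isIntegrallyClosed_eq_field_fractions M L hαi, Polynomial.map_map,
          ← IsScalarTower.algebraMap_eq, Polynomial.derivative_map, Polynomial.eval_map_algebraMap,
          Polynomial.aeval_algebraMap_apply]
    _ = ∏ h ∈ Finset.univ.erase (1 : L ≃ₐ[M] L), (x - h x) := by
        rw [minpoly_map_eq_prod hα, ← Finset.mul_prod_erase _ _ (Finset.mem_univ (1 : L ≃ₐ[M] L)),
          Polynomial.derivative_mul]
        simp [Polynomial.eval_prod]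
    _ = _ := by
        rw [map_prod]
        rfl

/-- Away from the conductor of a suitable `α`, the different is generated by `∏ (α - h α)`. -/
lemma exists_conductor_mul_differentIdeal_eq (P : Ideal (𝓞 L)) [P.IsMaximal] :
    ∃ α c : 𝓞 L, c ∈ conductor (𝓞 M) α ∧ c ∉ P ∧
      conductor (𝓞 M) α * differentIdeal (𝓞 M) (𝓞 L) =
        Ideal.span {∏ h ∈ Finset.univ.erase (1 : L ≃ₐ[M] L), (α - h • α)} := by
  have hP : P ≠ ⊥ := fun h ↦
    RingOfIntegers.not_isField L (Ring.isField_iff_maximal_bot.2 (h ▸ ‹P.IsMaximal›))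
  have : Finite (𝓞 L ⧸ P) := Ideal.finiteQuotientOfFreeOfNeBot P hP
  obtain ⟨α, hα⟩ := exists_conductor_not_le (𝓞 M) P
    (Ideal.map_ne_bot_of_ne_bot (Ideal.under_ne_bot (𝓞 M) hP))
  obtain ⟨c, hc, hcP⟩ := SetLike.not_le_iff_exists.1 hα
  have htop : Algebra.adjoin M {algebraMap (𝓞 L) L α} = ⊤ :=
    adjoin_eq_top_of_conductor_ne_bot fun h ↦ hα (h ▸ bot_le)
  exact ⟨α, c, hc, hcP, by
    rw [conductor_mul_differentIdeal (𝓞 M) M L α htop, aeval_derivative_minpoly_eq_prod htop]⟩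

variable (M L)

lemma differentIdeal_le_prod_moveIdeal :
    differentIdeal (𝓞 M) (𝓞 L) ≤
      ∏ h ∈ Finset.univ.erase (1 : L ≃ₐ[M] L), moveIdeal h.toRingEquiv := by
  refine le_of_forall_isMaximal_exists_mul_mem fun P _ ↦ ?_
  obtain ⟨α, c, hc, hcP, heq⟩ := exists_conductor_mul_differentIdeal_eq (M := M) P
  refine ⟨c, hcP, fun x hx ↦
    (Ideal.span_singleton_le_iff_mem _).2 ?_ (heq.le (Ideal.mul_mem_mul hc hx))⟩
  refine Ideal.prod_mem_prod fun h _ ↦ ?_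
  rw [← neg_mem_iff, neg_sub]
  exact smul_sub_mem_moveIdeal h α

lemma prod_moveIdeal_le_differentIdeal :
    ∏ h ∈ Finset.univ.erase (1 : L ≃ₐ[M] L), moveIdeal h.toRingEquiv ≤
      differentIdeal (𝓞 M) (𝓞 L) := by
  refine le_of_forall_isMaximal_exists_mul_mem fun P hP ↦ ?_
  obtain ⟨α, c, hc, hcP, heq⟩ := exists_conductor_mul_differentIdeal_eq (M := M) P
  choose d hdP hd using fun h : L ≃ₐ[M] L ↦ exists_mul_mem_of_mem_conductor hc hcP h
  refine ⟨∏ h ∈ Finset.univ.erase (1 : L ≃ₐ[M] L), d h, ?_, fun x hx ↦ ?_⟩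
  · rw [hP.isPrime.prod_mem_iff]
    rintro ⟨h, -, hh⟩
    exact hdP h hh
  · have hle : Ideal.span {∏ h ∈ Finset.univ.erase (1 : L ≃ₐ[M] L), d h} *
        ∏ h ∈ Finset.univ.erase (1 : L ≃ₐ[M] L), moveIdeal h.toRingEquiv ≤
        Ideal.span {∏ h ∈ Finset.univ.erase (1 : L ≃ₐ[M] L), (α - h • α)} := by
      rw [← Ideal.prod_span_singleton, ← Ideal.prod_span_singleton, ← Finset.prod_mul_distrib]
      refine Finset.prod_le_prod' fun h _ ↦ ?_
      rw [Ideal.span_singleton_mul_le_iff]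
      exact fun y hy ↦ Ideal.mem_span_singleton.2 (hd h y hy)
    exact Ideal.mul_le_right (heq.ge
      (hle (Ideal.mul_mem_mul (Ideal.mem_span_singleton_self _) hx)))

theorem differentIdeal_eq_prod_moveIdeal :
    differentIdeal (𝓞 M) (𝓞 L) =
      ∏ h ∈ Finset.univ.erase (1 : L ≃ₐ[M] L), moveIdeal h.toRingEquiv :=
  (differentIdeal_le_prod_moveIdeal M L).antisymm (prod_moveIdeal_le_differentIdeal M L)

end DifferentProduct

section Discriminants

lemma moveIdeal_conj {L : Type*} [Field L] (τ h : RingAut L) :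
    moveIdeal (τ * h * τ⁻¹) =
      (moveIdeal h).map (MulSemiringAction.toRingEquiv (RingAut L) (𝓞 L) τ : 𝓞 L →+* 𝓞 L) := by
  set E := MulSemiringAction.toRingEquiv (RingAut L) (𝓞 L) τ
  have hcomp : (fun x : 𝓞 L ↦ (τ * h * τ⁻¹) • x - x) =
      (E ∘ fun x : 𝓞 L ↦ h • x - x) ∘ E.symm := by
    ext x
    obtain ⟨y, rfl⟩ := E.surjective x
    simp only [Function.comp_apply, RingEquiv.symm_apply_apply, map_sub]
    change (((τ * h * τ⁻¹) • (τ • y) - τ • y : 𝓞 L) : L) = ((τ • (h • y) - τ • y : 𝓞 L) : L)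
    rw [smul_smul, inv_mul_cancel_right, mul_smul]
  rw [moveIdeal, moveIdeal, Ideal.map_span, ← Set.range_comp, hcomp, E.symm.surjective.range_comp]
  rfl

variable {L : Type*} [Field L] [NumberField L]

lemma absNorm_moveIdeal_conj (τ h : RingAut L) :
    Ideal.absNorm (moveIdeal (τ * h * τ⁻¹)) = Ideal.absNorm (moveIdeal h) := by
  rw [moveIdeal_conj, ← natCard_quotient_eq_absNorm, ← natCard_quotient_eq_absNorm]
  exact (Nat.card_congr (Ideal.quotientEquiv _ _ _ rfl).toEquiv).symm

variable (L) in
/-- The class function on automorphisms whose average over `Gal(L/M)` is `log |d_M|`. -/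
noncomputable def logDiscrChar (h : RingAut L) : ℝ :=
  if h = 1 then Real.log (discr L).natAbs else -Real.log (Ideal.absNorm (moveIdeal h))

lemma isClassFunction_logDiscrChar : IsClassFunction (logDiscrChar L) := fun τ h ↦ by
  simp only [logDiscrChar, absNorm_moveIdeal_conj, conj_eq_one_iff]

lemma sum_logDiscrChar (M : Type*) [Field M] [NumberField M] [Algebra M L] :
    ∑ h : L ≃ₐ[M] L, logDiscrChar L h.toRingEquiv = Real.log (discr L).natAbs -
      ∑ h ∈ Finset.univ.erase (1 : L ≃ₐ[M] L),
        Real.log (Ideal.absNorm (moveIdeal h.toRingEquiv)) := by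
  have hone : logDiscrChar L (1 : L ≃ₐ[M] L).toRingEquiv = Real.log (discr L).natAbs := if_pos rfl
  rw [← Finset.add_sum_erase _ _ (Finset.mem_univ (1 : L ≃ₐ[M] L)), hone, sub_eq_add_neg,
    ← Finset.sum_neg_distrib]
  refine congrArg _ (Finset.sum_congr rfl fun h hh ↦ if_neg fun h' ↦ ?_)
  exact (Finset.mem_erase.1 hh).1 (AlgEquiv.ext fun x ↦ congrArg (fun f : RingAut L ↦ f x) h')

lemma natAbs_discr_pos (M : Type*) [Field M] [NumberField M] : (0 : ℝ) < (discr M).natAbs :=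
  Nat.cast_pos.2 (Int.natAbs_pos.2 (discr_ne_zero M))

lemma log_discr_eq_galAvg (M : Type*) [Field M] [NumberField M] [Algebra M L] [IsGalois M L] :
    Real.log (discr M).natAbs = galAvg M (logDiscrChar L) := by
  have htower := natAbs_discr_eq_absNorm_differentIdeal_mul_natAbs_discr_pow M (𝓞 M) L (𝓞 L)
  rw [differentIdeal_eq_prod_moveIdeal, map_prod] at htower
  have hne : ∀ h ∈ Finset.univ.erase (1 : L ≃ₐ[M] L),
      ((Ideal.absNorm (moveIdeal h.toRingEquiv) : ℕ) : ℝ) ≠ 0 := fun h hh ↦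
    Nat.cast_ne_zero.2 fun h' ↦ Int.natAbs_ne_zero.2 (discr_ne_zero L)
      (by rw [htower, Finset.prod_eq_zero hh h', zero_mul])
  have hlog := congrArg (fun n : ℕ ↦ Real.log n) htower
  simp only [Nat.cast_mul, Nat.cast_prod, Nat.cast_pow] at hlog
  rw [Real.log_mul (Finset.prod_ne_zero_iff.2 hne) (pow_ne_zero _ (natAbs_discr_pos M).ne'),
    Real.log_prod hne, Real.log_pow] at hlog
  rw [galAvg, Fintype.expect_eq_sum_div_card, sum_logDiscrChar, hlog, add_sub_cancel_left,
    ← Nat.card_eq_fintype_card, IsGalois.card_aut_eq_finrank,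
    mul_div_cancel_left₀ _ (Nat.cast_ne_zero.2 Module.finrank_pos.ne')]

variable {k : Type*} [Field k] [NumberField k] [Algebra k L] [IsGalois k L]
  {q : ℕ} [NeZero q] (e : (L ≃ₐ[k] L) ≃* DihedralGroup q)

theorem discr_dihedral (hq : Odd q) :
    (discr L).natAbs * (discr k).natAbs ^ 2 =
      (discr (rotationField e)).natAbs * (discr (reflectionField e)).natAbs ^ 2 := by
  have h := isClassFunction_logDiscrChar (L := L).galAvg_dihedral e hq
  simp only [← log_discr_eq_galAvg] at h
  have hL := natAbs_discr_pos L
  have hk := natAbs_discr_pos k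
  have hF := natAbs_discr_pos (rotationField e)
  have hK := natAbs_discr_pos (reflectionField e)
  have hlog : Real.log ((discr L).natAbs * (discr k).natAbs ^ 2) =
      Real.log ((discr (rotationField e)).natAbs * (discr (reflectionField e)).natAbs ^ 2) := by
    rw [Real.log_mul hL.ne' (pow_pos hk 2).ne', Real.log_mul hF.ne' (pow_pos hK 2).ne',
      Real.log_pow, Real.log_pow]
    exact_mod_cast h
  exact_mod_cast Real.log_injOn_pos (Set.mem_Ioi.2 (mul_pos hL (pow_pos hk 2)))
    (Set.mem_Ioi.2 (mul_pos hF (pow_pos hK 2))) hlog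

end Discriminants

section InfinitePlaces

/-- The action of the automorphism group on infinite places; its restriction to `Gal(L/M)` is the
action of Mathlib. -/
local instance placeMulAction {L : Type*} [Field L] : MulAction (RingAut L) (InfinitePlace L) where
  smul g w := w.comap g.symm.toRingHom
  one_smul _ := rfl
  mul_smul _ _ _ := rfl

/-- The number of infinite places of `L` fixed by an automorphism: the permutation character of
the automorphism group on the infinite places. -/
noncomputable def fixedPlaces (L : Type*) [Field L] (g : RingAut L) : ℝ :=
  Nat.card (MulAction.fixedBy (InfinitePlace L) g)

lemma isClassFunction_fixedPlaces {L : Type*} [Field L] : IsClassFunction (fixedPlaces L) := by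
  intro τ g
  rw [fixedPlaces, fixedPlaces, ← MulAction.smul_fixedBy, Set.natCard_smul_set]

lemma card_infinitePlace_eq_galAvg (M L : Type*) [Field M] [Field L] [NumberField L]
    [NumberField M] [Algebra M L] [IsGalois M L] :
    (Fintype.card (InfinitePlace M) : ℝ) = galAvg M (fixedPlaces L) := by
  have hburnside :=
    MulAction.sum_card_fixedBy_eq_card_orbits_mul_card_group (L ≃ₐ[M] L) (InfinitePlace L)
  rw [Fintype.card_congr (InfinitePlace.orbitRelEquiv (k := M) (K := L))] at hburnside
  rw [galAvg, Fintype.expect_eq_sum_div_card,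
    eq_div_iff (Nat.cast_ne_zero.2 Fintype.card_ne_zero), ← Nat.cast_mul, ← hburnside,
    Nat.cast_sum]
  refine Finset.sum_congr rfl fun g _ ↦ ?_
  rw [fixedPlaces, ← Nat.card_eq_fintype_card]
  rfl

end InfinitePlaces

section HerbrandIndex

variable {A B C : Type*} [AddCommGroup A] [AddCommGroup B] [AddCommGroup C]

/-- The order of the cokernel of `f` divided by the order of its kernel; it is `0` as soon as one
of the two is infinite. -/
noncomputable def qIndex (f : A →+ B) : ℚ := f.range.index / Nat.card f.ker

lemma card_inf_mul_relIndex (H N : AddSubgroup B) :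
    Nat.card (H ⊓ N : AddSubgroup B) * H.relIndex N = Nat.card N := by
  have h := AddSubgroup.relIndex_mul_relIndex ⊥ (H ⊓ N) N bot_le inf_le_right
  rwa [AddSubgroup.relIndex_bot_left, AddSubgroup.relIndex_bot_left,
    AddSubgroup.inf_relIndex_right] at h

lemma relIndex_mul_index_sup (H N : AddSubgroup B) :
    H.relIndex N * (H ⊔ N).index = H.index := by
  rw [← AddSubgroup.relIndex_sup_left, AddSubgroup.relIndex_mul_index le_sup_left]

lemma index_range_comp (g : B →+ C) (f : A →+ B) :
    (g.comp f).range.index = (f.range ⊔ g.ker).index * g.range.index := by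
  rw [← AddMonoidHom.map_range, AddSubgroup.index_map]

lemma card_ker_comp (g : B →+ C) (f : A →+ B) :
    Nat.card (g.comp f).ker = Nat.card f.ker * Nat.card (f.range ⊓ g.ker : AddSubgroup B) := by
  have hle : f.ker ≤ (g.comp f).ker := fun x hx ↦ by
    rw [AddMonoidHom.mem_ker] at hx ⊢
    rw [AddMonoidHom.comp_apply, hx, map_zero]
  have h := AddSubgroup.relIndex_mul_relIndex ⊥ f.ker (g.comp f).ker bot_le hle
  rwa [AddSubgroup.relIndex_bot_left, AddSubgroup.relIndex_bot_left, AddSubgroup.relIndex_ker,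
    ← AddMonoidHom.comap_ker, AddSubgroup.map_comap_eq, eq_comm] at h

lemma qIndex_comp (g : B →+ C) (f : A →+ B) (h : f.range.relIndex g.ker ≠ 0) :
    qIndex (g.comp f) = qIndex g * qIndex f := by
  have h' : (f.range.relIndex g.ker : ℚ) ≠ 0 := Nat.cast_ne_zero.2 h
  rw [qIndex, qIndex, qIndex, index_range_comp, card_ker_comp,
    ← card_inf_mul_relIndex f.range g.ker, ← relIndex_mul_index_sup f.range g.ker]
  push_cast
  field_simp

lemma qIndex_comp_of_index_ne_zero (g : B →+ C) (f : A →+ B) (h : f.range.index ≠ 0) :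
    qIndex (g.comp f) = qIndex g * qIndex f :=
  qIndex_comp g f (ne_zero_of_dvd_ne_zero h (AddSubgroup.relIndex_dvd_index_of_normal _ _))

lemma qIndex_of_surjective {f : A →+ B} (hf : Function.Surjective f) :
    qIndex f = (Nat.card f.ker : ℚ)⁻¹ := by
  rw [qIndex, AddMonoidHom.range_eq_top.2 hf, AddSubgroup.index_top, Nat.cast_one, one_div]

lemma range_prod_sup_range_inr (f : A →+ B) (g : A →+ C) :
    (f.prod g).range ⊔ (AddMonoidHom.inr B C).range
      = f.range.comap (AddMonoidHom.fst B C) := by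
  ext ⟨b, c⟩
  simp only [AddSubgroup.mem_sup, AddSubgroup.mem_comap, AddMonoidHom.coe_fst]
  constructor
  · rintro ⟨_, ⟨a, rfl⟩, _, ⟨d, rfl⟩, h⟩
    exact ⟨a, by simpa using congrArg Prod.fst h⟩
  · rintro ⟨a, ha⟩
    exact ⟨_, ⟨a, rfl⟩, _, ⟨c - g a, rfl⟩, by ext <;> simp [ha]⟩

lemma comap_inr_range_prod (f : A →+ B) (g : A →+ C) :
    (f.prod g).range.comap (AddMonoidHom.inr B C) = (g.comp f.ker.subtype).range := by
  ext c
  constructor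
  · rintro ⟨a, ha⟩
    exact ⟨⟨a, congrArg Prod.fst ha⟩, congrArg Prod.snd ha⟩
  · rintro ⟨⟨a, ha⟩, hc⟩
    exact ⟨a, Prod.ext ha hc⟩

lemma index_range_prod (f : A →+ B) (g : A →+ C) :
    (f.prod g).range.index = (g.comp f.ker.subtype).range.index * f.range.index := by
  rw [← relIndex_mul_index_sup _ (AddMonoidHom.inr B C).range, range_prod_sup_range_inr,
    AddSubgroup.index_comap_of_surjective _ Prod.fst_surjective,
    (AddMonoidHom.inr B C).range_eq_map, ← AddSubgroup.relIndex_comap,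
    AddSubgroup.relIndex_top_right, comap_inr_range_prod]

lemma qIndex_prod (f : A →+ B) (g : A →+ C) :
    qIndex (f.prod g) = f.range.index * qIndex (g.comp f.ker.subtype) := by
  have hker : Nat.card (f.prod g).ker = Nat.card (g.comp f.ker.subtype).ker :=
    Nat.card_congr ⟨fun x ↦ ⟨⟨x.1, congrArg Prod.fst x.2⟩, congrArg Prod.snd x.2⟩,
      fun x ↦ ⟨x.1.1, Prod.ext x.1.2 x.2⟩, fun _ ↦ rfl, fun _ ↦ rfl⟩
  rw [qIndex, qIndex, index_range_prod, hker]
  push_cast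
  ring

lemma qIndex_prodMap {A' B' : Type*} [AddCommGroup A'] [AddCommGroup B'] (f : A →+ B)
    (g : A' →+ B') : qIndex (f.prodMap g) = qIndex f * qIndex g := by
  have hrange : (f.prodMap g).range = f.range.prod g.range := by
    ext ⟨b, b'⟩
    constructor
    · rintro ⟨⟨a, a'⟩, h⟩
      exact ⟨⟨a, congrArg Prod.fst h⟩, ⟨a', congrArg Prod.snd h⟩⟩
    · rintro ⟨⟨a, rfl⟩, ⟨a', rfl⟩⟩
      exact ⟨(a, a'), rfl⟩
  have hker : Nat.card (f.prodMap g).ker = Nat.card f.ker * Nat.card g.ker := by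
    rw [← Nat.card_prod, AddMonoidHom.ker_prodMap]
    exact Nat.card_congr (AddSubgroup.prodEquiv _ _).toEquiv
  rw [qIndex, qIndex, qIndex, hrange, hker, AddSubgroup.index_prod]
  push_cast
  ring

lemma qIndex_congr {A' B' : Type*} [AddCommGroup A'] [AddCommGroup B'] (f : A →+ B)
    (f' : A' →+ B') (e : A ≃+ A') (e' : B ≃+ B') (h : ∀ a, f' (e a) = e' (f a)) :
    qIndex f = qIndex f' := by
  have hrange : f.range.map e'.toAddMonoidHom = f'.range := by
    ext b
    constructor
    · rintro ⟨_, ⟨a, rfl⟩, rfl⟩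
      exact ⟨e a, h a⟩
    · rintro ⟨a, rfl⟩
      exact ⟨_, ⟨e.symm a, rfl⟩, by simpa using (h (e.symm a)).symm⟩
  have hker : Nat.card f.ker = Nat.card f'.ker := by
    refine Nat.card_congr (e.toEquiv.subtypeEquiv fun a ↦ ?_)
    change f a = 0 ↔ f' (e a) = 0
    rw [h, e'.map_eq_zero_iff]
  rw [qIndex, qIndex, hker, ← hrange, ← AddSubgroup.index_map_equiv f.range e']
  rfl

end HerbrandIndex

section Covolume

open Matrix

variable {A B X Y : Type*} [AddCommGroup A] [AddCommGroup B] [Fintype X] [Fintype Y]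

lemma card_ker_eq_zero_of_det_eq_zero {P : (X → ℤ) →ₗ[ℤ] (X → ℤ)}
    (h : (LinearMap.toMatrix' P).det = 0) : Nat.card P.toAddMonoidHom.ker = 0 := by
  obtain ⟨v, hv0, hv⟩ := Matrix.exists_mulVec_eq_zero_iff.2 h
  have hPv : P v = 0 := by rw [← hv, LinearMap.toMatrix'_mulVec]
  have hmul (n : ℤ) : P (n • v) = 0 := by rw [map_zsmul, hPv, smul_zero]
  have : Infinite P.toAddMonoidHom.ker :=
    Infinite.of_injective (fun n : ℤ ↦ (⟨n • v, hmul n⟩ : P.toAddMonoidHom.ker))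
      fun m n hmn ↦ smul_left_injective ℤ hv0 (congrArg Subtype.val hmn)
  exact Nat.card_eq_zero_of_infinite

lemma injective_of_det_ne_zero {P : (X → ℤ) →ₗ[ℤ] (X → ℤ)}
    (h : (LinearMap.toMatrix' P).det ≠ 0) : Function.Injective P := by
  rw [← LinearMap.ker_eq_bot, LinearMap.ker_eq_bot']
  intro v hv
  exact Matrix.eq_zero_of_mulVec_eq_zero h (by rw [LinearMap.toMatrix'_mulVec, hv])

lemma qIndex_eq_abs_det (P : (X → ℤ) →ₗ[ℤ] (X → ℤ)) :
    qIndex P.toAddMonoidHom = |((LinearMap.toMatrix' P).det : ℚ)| := by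
  by_cases h : (LinearMap.toMatrix' P).det = 0
  · rw [qIndex, card_ker_eq_zero_of_det_eq_zero h, h, Nat.cast_zero, div_zero, Int.cast_zero,
      abs_zero]
  · have hinj := injective_of_det_ne_zero h
    have hidx : P.toAddMonoidHom.range.index = (LinearMap.toMatrix' P).det.natAbs := by
      rw [AddSubgroup.index_eq_natAbs_det (Pi.basisFun ℤ X) P.toAddMonoidHom.range
        ((Pi.basisFun ℤ X).map (LinearEquiv.ofInjective P hinj))]
      congr 1
    rw [qIndex, P.toAddMonoidHom.ker_eq_bot_iff.2 hinj, hidx, AddSubgroup.card_bot, Nat.cast_one,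
      div_one, Nat.cast_natAbs, Int.cast_abs]

/-- `Λ` has finite kernel of order `w`, and its image is the lattice spanned by the columns of
a real square matrix of determinant `±c`. -/
def HasCovolume (Λ : A →+ (X → ℝ)) (w : ℕ) (c : ℝ) : Prop :=
  w ≠ 0 ∧ c ≠ 0 ∧ ∃ (π : A →+ (X → ℤ)) (M : Matrix X X ℝ), Function.Surjective π ∧
    Nat.card π.ker = w ∧ |M.det| = c ∧ ∀ a, Λ a = M *ᵥ fun i ↦ (π a i : ℝ)

lemma HasCovolume.of_equiv {Λ : A →+ (X → ℝ)} {w : ℕ} {c : ℝ} (h : HasCovolume Λ w c)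
    (e : B ≃+ A) (i : Y ≃ X) (Λ' : B →+ (Y → ℝ)) (hΛ : ∀ b y, Λ' b y = Λ (e b) (i y)) :
    HasCovolume Λ' w c := by
  obtain ⟨hw, hc, π, M, hπ, hk, hM, hΛM⟩ := h
  let π' : B →+ (Y → ℤ) := AddMonoidHom.mk' (fun b y ↦ π (e b) (i y)) fun a b ↦ by ext; simp
  refine ⟨hw, hc, π', M.submatrix i i, fun v ↦ ?_, ?_, by rwa [Matrix.det_submatrix_equiv_self],
    fun b ↦ funext fun y ↦ ?_⟩
  · obtain ⟨a, ha⟩ := hπ (v ∘ i.symm)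
    exact ⟨e.symm a, by ext y; simp [π', ha]⟩
  · rw [← hk]
    refine Nat.card_congr (e.toEquiv.subtypeEquiv fun b ↦ ?_)
    change (fun y ↦ π (e b) (i y)) = 0 ↔ π (e b) = 0
    simp only [funext_iff, Pi.zero_apply]
    exact i.forall_congr_left.trans (by simp)
  · rw [hΛ, hΛM]
    exact (Equiv.sum_comp i _).symm

/-- The direct sum of two homomorphisms to real vector spaces with coordinates. -/
def prodEmbedding (Λ : A →+ (X → ℝ)) (Λ' : B →+ (Y → ℝ)) : A × B →+ (X ⊕ Y → ℝ) :=
  AddMonoidHom.mk' (fun x ↦ Sum.elim (Λ x.1) (Λ' x.2)) fun x y ↦ by ext (i | i) <;> simp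

lemma HasCovolume.prod {Λ : A →+ (X → ℝ)} {Λ' : B →+ (Y → ℝ)} {w w' : ℕ} {c c' : ℝ}
    (h : HasCovolume Λ w c) (h' : HasCovolume Λ' w' c') :
    HasCovolume (prodEmbedding Λ Λ') (w * w') (c * c') := by
  obtain ⟨hw, hc, π, M, hπ, hk, hM, hΛM⟩ := h
  obtain ⟨hw', hc', π', M', hπ', hk', hM', hΛM'⟩ := h'
  let π'' : A × B →+ (X ⊕ Y → ℤ) :=
    AddMonoidHom.mk' (fun x ↦ Sum.elim (π x.1) (π' x.2)) fun x y ↦ by ext (i | i) <;> simp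
  have hπ''0 (x : A × B) : π'' x = 0 ↔ π x.1 = 0 ∧ π' x.2 = 0 := by simp [π'', funext_iff]
  refine ⟨mul_ne_zero hw hw', mul_ne_zero hc hc', π'', Matrix.fromBlocks M 0 0 M',
    fun v ↦ ?_, ?_, ?_, ?_⟩
  · obtain ⟨a, ha⟩ := hπ (v ∘ Sum.inl)
    obtain ⟨b, hb⟩ := hπ' (v ∘ Sum.inr)
    exact ⟨(a, b), by ext (i | i) <;> simp [π'', ha, hb]⟩
  · rw [← hk, ← hk', ← Nat.card_prod]
    exact Nat.card_congr ⟨fun x ↦ (⟨x.1.1, ((hπ''0 _).1 x.2).1⟩, ⟨x.1.2, ((hπ''0 _).1 x.2).2⟩),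
      fun x ↦ ⟨(x.1.1, x.2.1), (hπ''0 _).2 ⟨x.1.2, x.2.2⟩⟩, fun _ ↦ rfl, fun _ ↦ rfl⟩
  · have hdet := Matrix.det_fromBlocks_zero₂₁ M 0 M'
    rw [← hM, ← hM', ← abs_mul, ← hdet]
    congr!
  · rintro ⟨a, b⟩
    have hcast : (fun i ↦ (π'' (a, b) i : ℝ))
        = Sum.elim (fun i ↦ (π a i : ℝ)) (fun i ↦ (π' b i : ℝ)) := by
      ext (i | i) <;> simp [π'']
    rw [hcast, Matrix.fromBlocks_mulVec]
    simp [prodEmbedding, hΛM, hΛM']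

lemma toMatrix'_mul_eq_mul_map_toMatrix' {MA MB : Matrix X X ℝ} {P : (X → ℤ) →ₗ[ℤ] (X → ℤ)}
    {Ψ : (X → ℝ) →ₗ[ℝ] (X → ℝ)}
    (h : ∀ z, Ψ (MA *ᵥ fun i ↦ (z i : ℝ)) = MB *ᵥ fun i ↦ (P z i : ℝ)) :
    LinearMap.toMatrix' Ψ * MA = MB * (LinearMap.toMatrix' P).map (Int.cast : ℤ → ℝ) := by
  refine Matrix.ext_of_mulVec_single fun j ↦ ?_
  have hsingle : (Pi.single j 1 : X → ℝ) = fun i ↦ ((Pi.single j 1 : X → ℤ) i : ℝ) := by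
    ext i
    by_cases hij : i = j <;> simp [hij]
  have hcast : (LinearMap.toMatrix' P).map (Int.cast : ℤ → ℝ) *ᵥ Pi.single j 1
      = fun i ↦ (P (Pi.single j 1) i : ℝ) := by
    ext i
    simp [LinearMap.toMatrix'_apply]
  rw [← Matrix.mulVec_mulVec, ← Matrix.mulVec_mulVec, LinearMap.toMatrix'_mulVec, hcast, hsingle,
    h]

omit [Fintype X] in
lemma qIndex_eq_of_surjective_square {P : (X → ℤ) →+ (X → ℤ)} {πA : A →+ (X → ℤ)}
    {πB : B →+ (X → ℤ)} {f : A →+ B} (hπA : Function.Surjective πA)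
    (hπB : Function.Surjective πB) (hA : Nat.card πA.ker ≠ 0)
    (hB : Nat.card πB.ker ≠ 0) (h : ∀ a, P (πA a) = πB (f a)) :
    qIndex f * Nat.card πA.ker = qIndex P * Nat.card πB.ker := by
  have hcomp : P.comp πA = πB.comp f := AddMonoidHom.ext h
  have hq := congrArg qIndex hcomp
  have hB' := ne_zero_of_dvd_ne_zero hB (AddSubgroup.relIndex_dvd_card f.range πB.ker)
  have hπA' : πA.range.index ≠ 0 := by
    rw [AddMonoidHom.range_eq_top.2 hπA, AddSubgroup.index_top]
    exact one_ne_zero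
  rw [qIndex_comp_of_index_ne_zero _ _ hπA', qIndex_comp _ _ hB', qIndex_of_surjective hπA,
    qIndex_of_surjective hπB] at hq
  field_simp at hq
  linarith

lemma qIndex_mul_covolume {ΛA : A →+ (X → ℝ)} {ΛB : B →+ (X → ℝ)} {wA wB : ℕ} {cA cB : ℝ}
    (hA : HasCovolume ΛA wA cA) (hB : HasCovolume ΛB wB cB) (f : A →+ B)
    (Ψ : (X → ℝ) →ₗ[ℝ] (X → ℝ)) (hΨ : ∀ a, Ψ (ΛA a) = ΛB (f a)) :
    (qIndex f : ℝ) * cB * wA = |LinearMap.det Ψ| * cA * wB := by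
  obtain ⟨hwA, -, πA, MA, hπA, rfl, rfl, hΛA⟩ := hA
  obtain ⟨hwB, hcB, πB, MB, hπB, rfl, rfl, hΛB⟩ := hB
  have hker (a : A) (ha : a ∈ πA.ker) : a ∈ (πB.comp f).ker := by
    have h0 : MB *ᵥ (fun i ↦ (πB (f a) i : ℝ)) = 0 := by
      rw [← hΛB, ← hΨ, hΛA, AddMonoidHom.mem_ker.1 ha]
      simp [← Pi.zero_def]
    ext i
    simpa using congrFun (Matrix.eq_zero_of_mulVec_eq_zero (abs_ne_zero.1 hcB) h0) i
  let P : (X → ℤ) →+ (X → ℤ) := πA.liftOfSurjective hπA ⟨πB.comp f, hker⟩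
  have hP (a : A) : P (πA a) = πB (f a) :=
    AddMonoidHom.liftOfRightInverse_comp_apply _ _ _ ⟨πB.comp f, hker⟩ a
  have hmat := toMatrix'_mul_eq_mul_map_toMatrix' (MA := MA) (MB := MB) (Ψ := Ψ)
    (P := P.toIntLinearMap) fun z ↦ by
      obtain ⟨a, rfl⟩ := hπA z
      rw [← hΛA, hΨ, hΛB, ← hP]
      rfl
  have hdet := congrArg (fun M ↦ |M.det|) hmat
  simp only [Matrix.det_mul, abs_mul, LinearMap.det_toMatrix'] at hdet
  have hdetP : |((LinearMap.toMatrix' P.toIntLinearMap).map (Int.cast : ℤ → ℝ)).det|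
      = (qIndex P : ℝ) := by
    have h := (Int.castRingHom ℝ).map_det (LinearMap.toMatrix' P.toIntLinearMap)
    have hP' : qIndex P = |((LinearMap.toMatrix' P.toIntLinearMap).det : ℚ)| :=
      qIndex_eq_abs_det P.toIntLinearMap
    rw [hP', Rat.cast_abs, Rat.cast_intCast]
    exact congrArg abs h.symm
  have hq : (qIndex f : ℝ) * Nat.card πA.ker = qIndex P * Nat.card πB.ker := by
    exact_mod_cast qIndex_eq_of_surjective_square hπA hπB hwA hwB hP
  rw [hdetP] at hdet
  rw [hdet, mul_right_comm, hq]
  ring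

end Covolume

section DihedralModule

variable {q : ℕ} {A : Type*} [AddCommGroup A]
  (τ : DihedralGroup q →* AddMonoid.End A)

/-- The operator `σ - 1`, where `σ` is the generator of the rotations. -/
def rotSub : A →+ A :=
  AddMonoidHom.mk' (fun a ↦ τ (r 1) a - a) fun a b ↦ by simp only [map_add]; abel

/-- The elements fixed by the rotations. -/
def rotFixed : AddSubgroup A := (rotSub τ).ker

/-- The elements fixed by the reflection `sr 0`. -/
def reflFixed : AddSubgroup A :=
  (AddMonoidHom.mk' (fun a ↦ τ (sr 0) a - a) fun a b ↦ by simp only [map_add]; abel).ker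

/-- The elements fixed by the dihedral group. -/
def dihFixed : AddSubgroup A := rotFixed τ ⊓ reflFixed τ

/-- The elements of order dividing `q` fixed by the rotations. -/
def rotTorsion : AddSubgroup A := rotFixed τ ⊓ (nsmulAddMonoidHom q : A →+ A).ker

/-- The elements of order dividing `q` fixed by the dihedral group. -/
def dihTorsion : AddSubgroup A := dihFixed τ ⊓ (nsmulAddMonoidHom q : A →+ A).ker

/-- The addition map from `A^C × A^s × A^s'`, where `C` is the group of rotations, `s = sr 0`, and
the fixed elements of the conjugate reflection `s'` are written as the translates of `A^s` by the
rotation `r t`. -/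
def addFixed (t : ZMod q) : rotFixed τ × reflFixed τ × reflFixed τ →+ A :=
  AddMonoidHom.mk' (fun x ↦ x.1 + x.2.1 + τ (r t) x.2.2) (by
    intro x y
    simp only [Prod.fst_add, Prod.snd_add, AddSubgroup.coe_add, map_add]
    abel)

variable {τ}

lemma rotSub_apply (a : A) : rotSub τ a = τ (r 1) a - a := rfl

lemma mem_rotFixed_iff {a : A} : a ∈ rotFixed τ ↔ τ (r 1) a = a := sub_eq_zero

lemma mem_reflFixed_iff {a : A} : a ∈ reflFixed τ ↔ τ (sr 0) a = a := sub_eq_zero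

lemma action_mul (g h : DihedralGroup q) (a : A) : τ g (τ h a) = τ (g * h) a := by
  rw [map_mul]; rfl

lemma action_r_zero (a : A) : τ (r 0) a = a := by
  rw [← one_def, map_one]; rfl

lemma dihFixed_le_rotFixed : dihFixed τ ≤ rotFixed τ := inf_le_left

lemma dihFixed_le_reflFixed : dihFixed τ ≤ reflFixed τ := inf_le_right

lemma rotSub_eq_action_sr_sub {g : A} (hg : g ∈ reflFixed τ) :
    rotSub τ g = τ (sr (-1)) g - g := by
  rw [mem_reflFixed_iff] at hg
  rw [rotSub_apply]
  conv_lhs => rw [← hg]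
  rw [action_mul, r_mul_sr, zero_sub, hg]

lemma action_sr_rotSub {g : A} (hg : g ∈ reflFixed τ) :
    τ (sr (-1)) (rotSub τ g) = -rotSub τ g := by
  rw [rotSub_eq_action_sr_sub hg, map_sub, action_mul, sr_mul_sr, sub_self, action_r_zero, neg_sub]

lemma action_sr_action_r {t : ZMod q} (ht : t + t = 1) {h : A} (hh : h ∈ reflFixed τ) :
    τ (sr (-1)) (τ (r t) h) = τ (r t) h := by
  have hsr : (sr (-1 + t) : DihedralGroup q) = r t * sr 0 := by
    rw [r_mul_sr, ← ht]
    congr 1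
    ring
  rw [action_mul, sr_mul_r, hsr, ← action_mul, mem_reflFixed_iff.1 hh]

/-- The reflection `sr (-1)` negates `σ g - g` for `g ∈ A^s`, and it fixes `A^s'`, so that a
relation `f + g + y = 0` with `f ∈ A^C` and `y ∈ A^s'` forces `σ g - g = y - σ y` to be fixed
by the rotations. -/
lemma rotSub_mem_of_addFixed_eq_zero {t : ZMod q} (ht : t + t = 1)
    {x : rotFixed τ × reflFixed τ × reflFixed τ} (hx : addFixed τ t x = 0) :
    rotSub τ x.2.1 ∈ rotFixed τ := by
  obtain ⟨⟨f, hf⟩, ⟨g, hg⟩, ⟨h, hh⟩⟩ := x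
  change f + g + τ (r t) h = 0 at hx
  change rotSub τ g ∈ _
  have hy := action_sr_action_r ht hh
  set y := τ (r t) h
  have hgy : rotSub τ g = y - τ (r 1) y := by
    have h0 : rotSub τ f + rotSub τ g + rotSub τ y = 0 := by
      rw [← map_add, ← map_add, hx, map_zero]
    rw [(hf : rotSub τ f = 0), zero_add] at h0
    rw [eq_neg_of_add_eq_zero_left h0, rotSub_apply y, neg_sub]
  have hsr : τ (r 1) (τ (sr (-1)) (τ (r 1) y)) = y := by
    rw [action_mul, action_mul, r_mul_sr, sr_mul_r, sub_add_cancel, hy]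
  have hfix : τ (r 1) (τ (sr (-1)) (rotSub τ g)) = -rotSub τ g := by
    rw [hgy, map_sub, map_sub, hsr, hy, neg_sub]
  rw [action_sr_rotSub hg, map_neg, neg_inj] at hfix
  exact mem_rotFixed_iff.2 hfix

variable [NeZero q]

lemma action_r_of_mem {a : A} (ha : a ∈ rotFixed τ) (i : ZMod q) : τ (r i) a = a := by
  have h (n : ℕ) : τ (r (n : ZMod q)) a = a := by
    induction n with
    | zero => rw [Nat.cast_zero, action_r_zero]
    | succ n ih => rw [Nat.cast_succ, ← r_mul_r, ← action_mul, mem_rotFixed_iff.1 ha, ih]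
  rw [← ZMod.natCast_zmod_val i, h]

lemma mem_rotFixed_of_action_r_mem {t : ZMod q} {a : A} (ha : τ (r t) a ∈ rotFixed τ) :
    a ∈ rotFixed τ := by
  have h := action_r_of_mem ha (-t)
  rw [action_mul, r_mul_r, neg_add_cancel, action_r_zero] at h
  rwa [h]

variable (τ) in
/-- The norm `∑ σ ^ i` of the rotations. -/
def rotNorm : A →+ A :=
  AddMonoidHom.mk' (fun a ↦ ∑ i : ZMod q, τ (r i) a) fun a b ↦ by
    simp only [map_add, Finset.sum_add_distrib]

lemma rotNorm_apply (a : A) : rotNorm τ a = ∑ i : ZMod q, τ (r i) a := rfl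

lemma action_r_rotNorm (j : ZMod q) (a : A) : τ (r j) (rotNorm τ a) = rotNorm τ a := by
  rw [rotNorm_apply, map_sum, ← Equiv.sum_comp (Equiv.addLeft j) (fun i ↦ τ (r i) a)]
  refine Finset.sum_congr rfl fun i _ ↦ ?_
  rw [action_mul, r_mul_r]
  rfl

lemma rotNorm_action_r (j : ZMod q) (a : A) : rotNorm τ (τ (r j) a) = rotNorm τ a := by
  rw [rotNorm_apply, rotNorm_apply, ← Equiv.sum_comp (Equiv.addRight j) (fun i ↦ τ (r i) a)]
  refine Finset.sum_congr rfl fun i _ ↦ ?_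
  rw [action_mul, r_mul_r]
  rfl

lemma action_sr_rotNorm (a : A) : τ (sr 0) (rotNorm τ a) = rotNorm τ (τ (sr 0) a) := by
  rw [rotNorm_apply, rotNorm_apply, map_sum,
    ← Equiv.sum_comp (Equiv.neg (ZMod q)) (fun i ↦ τ (r i) (τ (sr 0) a))]
  refine Finset.sum_congr rfl fun i _ ↦ ?_
  rw [action_mul, action_mul, sr_mul_r, r_mul_sr, Equiv.neg_apply, sub_neg_eq_add]

lemma rotNorm_rotSub (a : A) : rotNorm τ (rotSub τ a) = 0 := by
  rw [rotSub_apply, map_sub, rotNorm_action_r, sub_self]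

lemma rotNorm_of_mem {a : A} (ha : a ∈ rotFixed τ) : rotNorm τ a = q • a := by
  rw [rotNorm_apply, Finset.sum_congr rfl fun i _ ↦ action_r_of_mem ha i, Finset.sum_const,
    Finset.card_univ, ZMod.card]

lemma rotNorm_mem (a : A) : rotNorm τ a ∈ rotFixed τ :=
  mem_rotFixed_iff.2 (action_r_rotNorm 1 a)

lemma rotNorm_mem_dihFixed {a : A} (ha : a ∈ reflFixed τ) : rotNorm τ a ∈ dihFixed τ :=
  ⟨rotNorm_mem a, mem_reflFixed_iff.2 (by rw [action_sr_rotNorm, mem_reflFixed_iff.1 ha])⟩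

lemma nsmul_rotSub_of_mem {a : A} (ha : rotSub τ a ∈ rotFixed τ) : q • rotSub τ a = 0 := by
  rw [← rotNorm_of_mem ha, rotNorm_rotSub]

variable (τ) in
/-- The norm of the rotations as a map from `A^s` to `A^D`. -/
def reflNorm : reflFixed τ →+ dihFixed τ :=
  ((rotNorm τ).comp (reflFixed τ).subtype).codRestrict _ fun a ↦ rotNorm_mem_dihFixed a.2

variable (τ) in
/-- The map comparing `A^C × A^s × A^s` with `A × A^D × A^D`. -/
def compareFixed (t : ZMod q) :
    rotFixed τ × reflFixed τ × reflFixed τ →+ A × dihFixed τ × dihFixed τ :=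
  (addFixed τ t).prod (((reflNorm τ).prodMap (reflNorm τ)).comp (AddMonoidHom.snd _ _))

variable (τ) in
/-- The relations `(-a - b, a, b)` with `a, b ∈ A^D` among the elements of `A^C`, `A^s`
and `A^s'`. -/
def dihRelations (t : ZMod q) : dihFixed τ × dihFixed τ →+ (addFixed τ t).ker :=
  AddMonoidHom.mk' (fun x ↦
    ⟨(-⟨x.1, dihFixed_le_rotFixed x.1.2⟩ - ⟨x.2, dihFixed_le_rotFixed x.2.2⟩,
      ⟨x.1, dihFixed_le_reflFixed x.1.2⟩, ⟨x.2, dihFixed_le_reflFixed x.2.2⟩), by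
      change -(x.1 : A) - x.2 + x.1 + τ (r t) x.2 = 0
      rw [action_r_of_mem (dihFixed_le_rotFixed x.2.2)]
      abel⟩) (by
    intro x y
    ext
    · change -((x.1 : A) + y.1) - (x.2 + y.2) = (-(x.1 : A) - x.2) + (-(y.1 : A) - y.2)
      abel
    · rfl
    · rfl)

lemma dihRelations_injective (t : ZMod q) : Function.Injective (dihRelations τ t) := by
  intro x y hxy
  exact Prod.ext
    (Subtype.ext (congrArg (fun z : (addFixed τ t).ker ↦ (z.1.2.1 : A)) hxy))
    (Subtype.ext (congrArg (fun z : (addFixed τ t).ker ↦ (z.1.2.2 : A)) hxy))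

/-- The map `(f, g, h) ↦ σ g - g` on the relations between `A^C`, `A^s` and `A^s'`. -/
def relationRotSub {t : ZMod q} (ht : t + t = 1) : (addFixed τ t).ker →+ rotTorsion τ :=
  ((rotSub τ).comp ((reflFixed τ).subtype.comp
    ((AddMonoidHom.fst _ _).comp ((AddMonoidHom.snd _ _).comp (addFixed τ t).ker.subtype)))
    ).codRestrict _ fun x ↦ ⟨rotSub_mem_of_addFixed_eq_zero ht x.2,
      nsmul_rotSub_of_mem (rotSub_mem_of_addFixed_eq_zero ht x.2)⟩

lemma ker_relationRotSub {t : ZMod q} (ht : t + t = 1) :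
    (relationRotSub (τ := τ) ht).ker = (dihRelations τ t).range := by
  apply le_antisymm
  · rintro ⟨⟨⟨f, hf⟩, ⟨g, hg⟩, ⟨h, hh⟩⟩, hx⟩ h0
    have hg' : g ∈ rotFixed τ := congrArg Subtype.val (h0 : relationRotSub ht _ = 0)
    change f + g + τ (r t) h = 0 at hx
    have hh' : h ∈ rotFixed τ := by
      refine mem_rotFixed_of_action_r_mem (t := t) ?_
      rw [eq_neg_of_add_eq_zero_right hx]
      exact neg_mem (add_mem hf hg')
    rw [action_r_of_mem hh'] at hx
    refine ⟨(⟨g, hg', hg⟩, ⟨h, hh', hh⟩), Subtype.ext (Prod.ext (Subtype.ext ?_) rfl)⟩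
    change -g - h = f
    rw [← sub_eq_zero, ← neg_eq_zero, ← hx]
    abel
  · rintro _ ⟨x, rfl⟩
    exact Subtype.ext (x.1.2.1 : rotSub τ x.1 = 0)

theorem qIndex_compareFixed {t : ZMod q} (ht : t + t = 1) [Finite (rotTorsion τ)] :
    ∃ κ : ℕ, κ ∣ Nat.card (rotTorsion τ) ∧ qIndex (compareFixed τ t) * κ
      = (addFixed τ t).range.index
        * qIndex (nsmulAddMonoidHom q : dihFixed τ →+ dihFixed τ) ^ 2 := by
  let ι := dihRelations τ t
  let ψ : (addFixed τ t).ker →+ dihFixed τ × dihFixed τ :=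
    (((reflNorm τ).prodMap (reflNorm τ)).comp (AddMonoidHom.snd _ _)).comp
      (addFixed τ t).ker.subtype
  have hψι : ψ.comp ι = (nsmulAddMonoidHom q).prodMap (nsmulAddMonoidHom q) :=
    AddMonoidHom.ext fun x ↦ Prod.ext
      (Subtype.ext (rotNorm_of_mem (dihFixed_le_rotFixed x.1.2)))
      (Subtype.ext (rotNorm_of_mem (dihFixed_le_rotFixed x.2.2)))
  have hidx : ι.range.index ∣ Nat.card (rotTorsion τ) := by
    rw [← ker_relationRotSub ht, AddSubgroup.index_ker]
    exact AddSubgroup.card_addSubgroup_dvd_card _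
  have hidx0 : ι.range.index ≠ 0 := ne_zero_of_dvd_ne_zero Nat.card_pos.ne' hidx
  have hι : qIndex ι = ι.range.index := by
    rw [qIndex, (AddMonoidHom.ker_eq_bot_iff _).2 (dihRelations_injective t), AddSubgroup.card_bot,
      Nat.cast_one, div_one]
  refine ⟨ι.range.index, hidx, ?_⟩
  rw [compareFixed, qIndex_prod, mul_assoc, ← hι]
  change _ * (qIndex ψ * _) = _
  rw [← qIndex_comp_of_index_ne_zero ψ ι hidx0, hψι, qIndex_prodMap, sq]

end DihedralModule

section HerbrandQuotient

variable {q : ℕ} {A : Type*} [AddCommGroup A] {τ : DihedralGroup q →* AddMonoid.End A}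

lemma rotFixed_le_range_addFixed (t : ZMod q) : rotFixed τ ≤ (addFixed τ t).range :=
  fun a ha ↦ ⟨(⟨a, ha⟩, 0, 0), by
    change a + 0 + τ (r t) 0 = a
    rw [map_zero, add_zero, add_zero]⟩

lemma reflFixed_le_range_addFixed (t : ZMod q) : reflFixed τ ≤ (addFixed τ t).range :=
  fun a ha ↦ ⟨(0, ⟨a, ha⟩, 0), by
    change 0 + a + τ (r t) 0 = a
    rw [map_zero, zero_add, add_zero]⟩

lemma action_r_mem_range_addFixed (t : ZMod q) {a : A} (ha : a ∈ reflFixed τ) :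
    τ (r t) a ∈ (addFixed τ t).range :=
  ⟨(0, 0, ⟨a, ha⟩), by
    change 0 + 0 + τ (r t) a = _
    rw [zero_add, zero_add]⟩

lemma add_action_sr_mem_reflFixed (a : A) : a + τ (sr 0) a ∈ reflFixed τ := by
  rw [mem_reflFixed_iff, map_add, action_mul, sr_mul_sr, sub_self, action_r_zero, add_comm]

lemma range_rotSub_le_range_addFixed {t : ZMod q} (ht : t + t = 1) :
    (rotSub τ).range ≤ (addFixed τ t).range := by
  rintro _ ⟨y, rfl⟩
  have h : rotSub τ y = τ (r t) (τ (r (-t)) (τ (sr 0) y) + τ (sr 0) (τ (r (-t)) (τ (sr 0) y)))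
      - (y + τ (sr 0) y) := by
    simp only [map_add, action_mul, rotSub_apply, r_mul_r, r_mul_sr, sr_mul_sr, zero_sub,
      neg_neg, sub_self, sub_zero, ht]
    abel
  rw [h]
  exact sub_mem (action_r_mem_range_addFixed t (add_action_sr_mem_reflFixed _))
    (reflFixed_le_range_addFixed t (add_action_sr_mem_reflFixed _))

variable (τ) in
/-- The elements of the form `σ a - a` that are fixed by the rotations. -/
def rotFixedDiff : AddSubgroup A := (rotSub τ).range ⊓ rotFixed τ

lemma range_coprod_subtype (H N : AddSubgroup A) :
    (H.subtype.coprod N.subtype).range = H ⊔ N := by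
  ext a
  simp only [AddSubgroup.mem_sup, AddMonoidHom.mem_range]
  constructor
  · rintro ⟨⟨x, y⟩, rfl⟩
    exact ⟨x, x.2, y, y.2, rfl⟩
  · rintro ⟨x, hx, y, hy, rfl⟩
    exact ⟨⟨⟨x, hx⟩, ⟨y, hy⟩⟩, rfl⟩

lemma card_ker_coprod_subtype (H N : AddSubgroup A) :
    Nat.card (H.subtype.coprod N.subtype).ker = Nat.card (H ⊓ N : AddSubgroup A) := by
  have h (x : (H.subtype.coprod N.subtype).ker) : (x.1.1 : A) = -x.1.2 :=
    eq_neg_of_add_eq_zero_left x.2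
  exact Nat.card_congr ⟨fun x ↦ ⟨x.1.1, x.1.1.2, h x ▸ N.neg_mem x.1.2.2⟩,
    fun a ↦ ⟨(⟨a, a.2.1⟩, ⟨-a, N.neg_mem a.2.2⟩), (add_neg_cancel (a : A) :)⟩,
    fun x ↦ Subtype.ext (Prod.ext rfl (Subtype.ext ((neg_eq_iff_eq_neg).2 (h x)))), fun _ ↦ rfl⟩

variable [NeZero q]

lemma nsmul_eq_zero_of_mem_rotFixedDiff {z : A} (hz : z ∈ rotFixedDiff τ) : q • z = 0 := by
  obtain ⟨⟨y, rfl⟩, h⟩ := hz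
  exact nsmul_rotSub_of_mem h

lemma rotFixedDiff_le_rotTorsion : rotFixedDiff τ ≤ rotTorsion τ := fun _ hz ↦
  ⟨hz.2, nsmul_eq_zero_of_mem_rotFixedDiff hz⟩

lemma finite_rotFixedDiff [Finite (rotTorsion τ)] : Finite (rotFixedDiff τ) :=
  Finite.of_injective _ (AddSubgroup.inclusion_injective rotFixedDiff_le_rotTorsion)

theorem qIndex_rotSub_add_rotNorm [Finite (rotTorsion τ)] :
    qIndex (rotSub τ + rotNorm τ)
      = ((rotSub τ).range ⊔ rotFixed τ).index / Nat.card (rotFixedDiff τ)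
      * qIndex (nsmulAddMonoidHom q : rotFixed τ →+ rotFixed τ) := by
  let G : A →+ (rotSub τ).range × rotFixed τ :=
    (rotSub τ).rangeRestrict.prod ((rotNorm τ).codRestrict _ rotNorm_mem)
  let H : (rotSub τ).range × rotFixed τ →+ A :=
    (rotSub τ).range.subtype.coprod (rotFixed τ).subtype
  have hker : (rotSub τ).rangeRestrict.ker = rotFixed τ := AddMonoidHom.ker_rangeRestrict _
  have hG : qIndex G = qIndex (nsmulAddMonoidHom q : rotFixed τ →+ rotFixed τ) := by
    rw [qIndex_prod, AddMonoidHom.range_eq_top.2 (rotSub τ).rangeRestrict_surjective,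
      AddSubgroup.index_top, Nat.cast_one, one_mul]
    exact qIndex_congr _ _ (AddEquiv.addSubgroupCongr hker) (AddEquiv.refl _)
      fun a ↦ Subtype.ext (rotNorm_of_mem (hker.le a.2)).symm
  have hHker : Nat.card H.ker = Nat.card (rotFixedDiff τ) := card_ker_coprod_subtype _ _
  have hHker0 : Nat.card H.ker ≠ 0 := by
    have := finite_rotFixedDiff (τ := τ)
    rw [hHker]
    exact Nat.card_pos.ne'
  change qIndex (H.comp G) = _
  rw [qIndex_comp H G (ne_zero_of_dvd_ne_zero hHker0 (AddSubgroup.relIndex_dvd_card _ _)), hG,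
    qIndex, hHker, range_coprod_subtype]

lemma action_sr_mem_rotFixedDiff {z : A} (hz : z ∈ rotFixedDiff τ) :
    τ (sr 0) z ∈ rotFixedDiff τ := by
  obtain ⟨⟨y, rfl⟩, h⟩ := hz
  refine ⟨⟨-τ (r (-1)) (τ (sr 0) y), ?_⟩, mem_rotFixed_iff.2 ?_⟩
  · simp only [rotSub_apply, map_neg, map_sub, action_mul, r_mul_sr, sr_mul_r, sub_self,
      zero_sub, zero_add, neg_neg]
    abel
  · conv_rhs => rw [← action_r_of_mem h (-1)]
    rw [action_mul, action_mul, r_mul_sr, sr_mul_r, zero_sub, zero_add]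

variable (τ) in
/-- The operator `1 - s` on the elements `σ a - a` fixed by the rotations. -/
def rotFixedDiffSub : rotFixedDiff τ →+ A :=
  AddMonoidHom.mk' (fun z ↦ (z : A) - τ (sr 0) z) fun a b ↦ by
    simp only [AddSubgroup.coe_add, map_add]
    abel

lemma range_rotFixedDiffSub_le : (rotFixedDiffSub τ).range ≤ rotFixedDiff τ := by
  rintro _ ⟨z, rfl⟩
  exact sub_mem z.2 (action_sr_mem_rotFixedDiff z.2)

lemma range_rotFixedDiffSub_le_map (t : ZMod q) :
    (rotFixedDiffSub τ).range ≤ (addFixed τ t).range.map (rotSub τ) := by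
  rintro _ ⟨⟨z, ⟨u, rfl⟩, hz⟩, rfl⟩
  refine ⟨u + τ (sr 0) u, reflFixed_le_range_addFixed t (add_action_sr_mem_reflFixed u), ?_⟩
  change _ = rotSub τ u - τ (sr 0) (rotSub τ u)
  have hs : τ (sr 0) (rotSub τ u) = τ (sr 0) (τ (r (-1)) (rotSub τ u)) := by
    rw [action_r_of_mem hz]
  rw [hs]
  simp only [rotSub_apply, map_add, map_sub, action_mul, r_mul_sr, r_mul_r, sr_mul_r,
    neg_add_cancel, zero_add, zero_sub]
  abel

lemma card_ker_rotFixedDiffSub_dvd :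
    Nat.card (rotFixedDiffSub τ).ker ∣ Nat.card (dihTorsion τ) := by
  have hmem (z : (rotFixedDiffSub τ).ker) : (z.1 : A) ∈ dihTorsion τ :=
    ⟨⟨z.1.2.2, mem_reflFixed_iff.2 (sub_eq_zero.1 z.2).symm⟩,
      nsmul_eq_zero_of_mem_rotFixedDiff z.1.2⟩
  refine AddSubgroup.card_dvd_of_injective
    (((rotFixedDiff τ).subtype.comp (rotFixedDiffSub τ).ker.subtype).codRestrict _ hmem)
    fun x y h ↦ Subtype.ext (Subtype.ext (congrArg (fun z : dihTorsion τ ↦ (z : A)) h))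

lemma action_r_sub_mem_rotFixed {b : A} (hb : rotSub τ b ∈ rotFixed τ) (j : ZMod q) :
    τ (r j) b - b ∈ rotFixed τ := by
  have h := action_r_of_mem hb j
  rw [rotSub_apply, map_sub, action_mul, r_mul_r] at h
  rw [mem_rotFixed_iff, map_sub, action_mul, r_mul_r, add_comm, sub_eq_sub_iff_sub_eq_sub, h]

/-- Under the hypothesis `i ↦ σ ^ i b - b` is additive, so its sum over `ZMod q` is invariant under
the substitution `i ↦ 2 i`, which doubles it. -/
lemma rotNorm_eq_nsmul_of_rotSub_mem {t : ZMod q} (ht : t + t = 1) {b : A}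
    (hb : rotSub τ b ∈ rotFixed τ) : rotNorm τ b = q • b := by
  have hadd (i : ZMod q) : τ (r (i + i)) b - b = (τ (r i) b - b) + (τ (r i) b - b) := by
    have h := action_r_of_mem (action_r_sub_mem_rotFixed hb i) i
    rw [map_sub, action_mul, r_mul_r] at h
    rw [← sub_add_sub_cancel _ (τ (r i) b), h]
  have hbij : Function.Bijective fun i : ZMod q ↦ i + i := by
    refine Finite.injective_iff_bijective.1 fun i j (hij : i + i = j + j) ↦ ?_
    rw [← mul_one i, ← mul_one j, ← ht, mul_add, mul_add, ← add_mul, ← add_mul, hij]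
  have hsum := hbij.sum_comp fun i : ZMod q ↦ τ (r i) b - b
  simp only [hadd, Finset.sum_add_distrib] at hsum
  rw [add_eq_left, Finset.sum_sub_distrib, sub_eq_zero] at hsum
  rw [rotNorm_apply, hsum, Finset.sum_const, Finset.card_univ, ZMod.card]

lemma map_rotSub_sup_inf_range_rotFixedDiffSub {t : ZMod q} (ht : t + t = 1)
    (htors : ∀ a : A, q • a = 0 → a ∈ rotFixed τ) :
    ((rotSub τ).range ⊔ rotFixed τ).map (rotSub τ) ⊓ (rotFixedDiffSub τ).range = ⊥ := by
  have hmap : (rotFixed τ).map (rotSub τ) = ⊥ := (AddSubgroup.map_eq_bot_iff _).2 le_rfl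
  rw [AddSubgroup.map_sup, hmap, sup_bot_eq, eq_bot_iff]
  rintro _ ⟨⟨_, ⟨a, rfl⟩, rfl⟩, hz⟩
  have hsq : rotSub τ (rotSub τ a) ∈ rotFixed τ := (range_rotFixedDiffSub_le hz).2
  refine AddSubgroup.mem_bot.2 (htors _ ?_)
  rw [← rotNorm_eq_nsmul_of_rotSub_mem ht hsq, rotNorm_rotSub]

lemma card_range_rotFixedDiffSub_dvd {t : ZMod q} (ht : t + t = 1)
    (htors : ∀ a : A, q • a = 0 → a ∈ rotFixed τ) :
    Nat.card (rotFixedDiffSub τ).range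
      ∣ ((rotSub τ).range ⊔ rotFixed τ).relIndex (addFixed τ t).range := by
  set J := (rotSub τ).range ⊔ rotFixed τ
  set S := (addFixed τ t).range
  set W := (rotFixedDiffSub τ).range
  have hJS : J ≤ S := sup_le (range_rotSub_le_range_addFixed ht) (rotFixed_le_range_addFixed t)
  have hkerJ : (rotSub τ).ker ≤ J := (le_sup_right : rotFixed τ ≤ J)
  have hrel : J.relIndex S = (J.map (rotSub τ)).relIndex (S.map (rotSub τ)) := by
    rw [AddSubgroup.relIndex_map_map, sup_eq_left.2 hkerJ, sup_eq_left.2 (hkerJ.trans hJS)]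
  have hW : (J.map (rotSub τ)).relIndex W = Nat.card W := by
    rw [← AddSubgroup.inf_relIndex_right, map_rotSub_sup_inf_range_rotFixedDiffSub ht htors,
      AddSubgroup.relIndex_bot_left]
  rw [hrel, ← hW, ← AddSubgroup.relIndex_sup_left W (J.map (rotSub τ))]
  exact ⟨_, (AddSubgroup.relIndex_mul_relIndex _ _ _ le_sup_left
    (sup_le (AddSubgroup.map_mono hJS) (range_rotFixedDiffSub_le_map t))).symm⟩

theorem index_range_addFixed_dvd {t : ZMod q} (ht : t + t = 1) [Finite (rotTorsion τ)]
    (htors : ∀ a : A, q • a = 0 → a ∈ rotFixed τ) {Q : ℕ}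
    (hQ : ((rotSub τ).range ⊔ rotFixed τ).index = Q * Nat.card (rotFixedDiff τ)) :
    (addFixed τ t).range.index ∣ Q * Nat.card (dihTorsion τ) := by
  have := finite_rotFixedDiff (τ := τ)
  have hcard : Nat.card (rotFixedDiffSub τ).ker * Nat.card (rotFixedDiffSub τ).range
      = Nat.card (rotFixedDiff τ) := by
    rw [← AddSubgroup.index_ker, AddSubgroup.card_mul_index]
  have hpos : 0 < Nat.card (rotFixedDiffSub τ).range :=
    Nat.pos_of_ne_zero (right_ne_zero_of_mul (hcard.trans_ne Nat.card_pos.ne'))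
  obtain ⟨m, hm⟩ := card_range_rotFixedDiffSub_dvd ht htors
  have hindex := AddSubgroup.relIndex_mul_index
    (sup_le (range_rotSub_le_range_addFixed ht) (rotFixed_le_range_addFixed (τ := τ) t))
  rw [hm, hQ, ← hcard] at hindex
  have hmul : m * (addFixed τ t).range.index = Q * Nat.card (rotFixedDiffSub τ).ker :=
    Nat.eq_of_mul_eq_mul_left hpos (by linarith)
  exact (Dvd.intro_left m hmul).trans (mul_dvd_mul_left Q card_ker_rotFixedDiffSub_dvd)

end HerbrandQuotient

section InducedModule

variable {q : ℕ} {A : Type*} [AddCommGroup A] {τ : DihedralGroup q →* AddMonoid.End A}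

lemma qIndex_nsmul_of_torsionFree (htf : ∀ a : A, q • a = 0 → a = 0) :
    qIndex (nsmulAddMonoidHom q : A →+ A) = (nsmulAddMonoidHom q : A →+ A).range.index := by
  have h : (nsmulAddMonoidHom q : A →+ A).ker = ⊥ := (AddSubgroup.eq_bot_iff_forall _).2 htf
  rw [qIndex, h, AddSubgroup.card_bot, Nat.cast_one, div_one]

lemma rotTorsion_eq_bot (htf : ∀ a : A, q • a = 0 → a = 0) : rotTorsion τ = ⊥ :=
  (AddSubgroup.eq_bot_iff_forall _).2 fun a ha ↦ htf a ha.2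

variable [NeZero q]

variable (τ) in
/-- The Tate cohomology of the group of rotations with values in `A` vanishes. -/
structure IsRotAcyclic : Prop where
  exists_rotNorm_eq : ∀ a ∈ rotFixed τ, ∃ b, rotNorm τ b = a
  mem_range_rotSub : ∀ a, rotNorm τ a = 0 → a ∈ (rotSub τ).range

variable (τ) in
/-- The norm of the rotations with values in the fixed elements. -/
def rotNormFixed : A →+ rotFixed τ := (rotNorm τ).codRestrict _ rotNorm_mem

lemma IsRotAcyclic.rotNormFixed_surjective (h : IsRotAcyclic τ) :
    Function.Surjective (rotNormFixed τ) := fun a ↦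
  (h.exists_rotNorm_eq a.1 a.2).imp fun _ h ↦ Subtype.ext h

lemma IsRotAcyclic.index_range_rotSub_sup_rotFixed (h : IsRotAcyclic τ) :
    ((rotSub τ).range ⊔ rotFixed τ).index
      = (nsmulAddMonoidHom q : rotFixed τ →+ rotFixed τ).range.index := by
  rw [← AddSubgroup.index_comap_of_surjective _ h.rotNormFixed_surjective]
  congr 1
  refine le_antisymm (sup_le ?_ fun a ha ↦ ⟨⟨a, ha⟩, Subtype.ext (rotNorm_of_mem ha).symm⟩) ?_
  · rintro _ ⟨a, rfl⟩
    exact ⟨0, Subtype.ext ((smul_zero q).trans (rotNorm_rotSub a).symm)⟩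
  · rintro a ⟨c, hc⟩
    have hca : q • (c : A) = rotNorm τ a := congrArg (fun x : rotFixed τ ↦ (x : A)) hc
    rw [← rotNorm_of_mem c.2] at hca
    rw [← sub_add_cancel a c]
    exact AddSubgroup.add_mem_sup (h.mem_range_rotSub _ (by rw [map_sub, hca, sub_self])) c.2

lemma rotFixedDiff_eq_bot (htf : ∀ a : A, q • a = 0 → a = 0) : rotFixedDiff τ = ⊥ :=
  (AddSubgroup.eq_bot_iff_forall _).2 fun _ ha ↦ htf _ (nsmul_eq_zero_of_mem_rotFixedDiff ha)

lemma IsRotAcyclic.exists_mem_reflFixed_rotNorm_eq (h : IsRotAcyclic τ) (hq : Odd q) {d : A}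
    (hd : d ∈ dihFixed τ) : ∃ g ∈ reflFixed τ, rotNorm τ g = d := by
  obtain ⟨m, hm⟩ := hq
  obtain ⟨b, hb⟩ := h.exists_rotNorm_eq d hd.1
  refine ⟨d - m • (b + τ (sr 0) b),
    sub_mem hd.2 (nsmul_mem (add_action_sr_mem_reflFixed b) m), ?_⟩
  rw [map_sub, rotNorm_of_mem hd.1, map_nsmul, map_add, ← action_sr_rotNorm, hb,
    mem_reflFixed_iff.1 hd.2, ← two_nsmul, ← mul_nsmul', hm, add_nsmul, one_nsmul,
    mul_comm m 2, add_sub_cancel_left]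

lemma IsRotAcyclic.range_addFixed_eq_comap (h : IsRotAcyclic τ) (hq : Odd q) {t : ZMod q}
    (ht : t + t = 1) :
    (addFixed τ t).range = ((nsmulAddMonoidHom q : rotFixed τ →+ rotFixed τ).range
      ⊔ (AddSubgroup.inclusion (dihFixed_le_rotFixed (τ := τ))).range).comap (rotNormFixed τ) := by
  apply le_antisymm
  · rintro _ ⟨⟨f, g, k⟩, rfl⟩
    refine AddSubgroup.mem_sup.2 ⟨_, ⟨f, rfl⟩, _, ⟨reflNorm τ g + reflNorm τ k, rfl⟩, ?_⟩
    refine Subtype.ext ?_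
    change q • (f : A) + (rotNorm τ g + rotNorm τ k) = rotNorm τ (f + g + τ (r t) k)
    rw [map_add, map_add, rotNorm_action_r, rotNorm_of_mem f.2, add_assoc]
  · intro a ha
    obtain ⟨_, ⟨c, rfl⟩, _, ⟨d, rfl⟩, hcd⟩ := AddSubgroup.mem_sup.1 ha
    have hnorm : q • (c : A) + (d : A) = rotNorm τ a :=
      congrArg (fun x : rotFixed τ ↦ (x : A)) hcd
    obtain ⟨g, hg, hgd⟩ := h.exists_mem_reflFixed_rotNorm_eq hq d.2
    rw [← rotNorm_of_mem c.2, ← hgd] at hnorm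
    have hacg : a - c - g ∈ (rotSub τ).range :=
      h.mem_range_rotSub _ (by rw [map_sub, map_sub, ← hnorm]; abel)
    have hsum : a = (a - c - g) + c + g := by abel
    rw [hsum]
    exact add_mem (add_mem (range_rotSub_le_range_addFixed ht hacg)
      (rotFixed_le_range_addFixed t c.2)) (reflFixed_le_range_addFixed t hg)

omit [NeZero q] in
lemma comap_inclusion_range_nsmul (htf : ∀ a : A, q • a = 0 → a = 0) :
    (nsmulAddMonoidHom q : rotFixed τ →+ rotFixed τ).range.comap
        (AddSubgroup.inclusion (dihFixed_le_rotFixed (τ := τ)))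
      = (nsmulAddMonoidHom q : dihFixed τ →+ dihFixed τ).range := by
  ext d
  constructor
  · rintro ⟨c, hc⟩
    have hcd : q • (c : A) = d := congrArg (fun x : rotFixed τ ↦ (x : A)) hc
    refine ⟨⟨c, c.2, mem_reflFixed_iff.2 (sub_eq_zero.1 (htf _ ?_))⟩, Subtype.ext hcd⟩
    rw [smul_sub, ← map_nsmul, hcd, mem_reflFixed_iff.1 d.2.2, sub_self]
  · rintro ⟨c, rfl⟩
    exact ⟨AddSubgroup.inclusion dihFixed_le_rotFixed c, rfl⟩

lemma IsRotAcyclic.index_range_addFixed_mul (h : IsRotAcyclic τ) (hq : Odd q) {t : ZMod q}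
    (ht : t + t = 1) (htf : ∀ a : A, q • a = 0 → a = 0) :
    (addFixed τ t).range.index * (nsmulAddMonoidHom q : dihFixed τ →+ dihFixed τ).range.index
      = (nsmulAddMonoidHom q : rotFixed τ →+ rotFixed τ).range.index := by
  rw [h.range_addFixed_eq_comap hq ht,
    AddSubgroup.index_comap_of_surjective _ h.rotNormFixed_surjective,
    ← comap_inclusion_range_nsmul htf, AddSubgroup.index_comap, mul_comm, relIndex_mul_index_sup]

theorem IsRotAcyclic.qIndex_compareFixed (h : IsRotAcyclic τ) (hq : Odd q) {t : ZMod q}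
    (ht : t + t = 1) (htf : ∀ a : A, q • a = 0 → a = 0) :
    qIndex (compareFixed τ t) = qIndex (nsmulAddMonoidHom q : rotFixed τ →+ rotFixed τ)
      * qIndex (nsmulAddMonoidHom q : dihFixed τ →+ dihFixed τ) := by
  have hbot := rotTorsion_eq_bot (τ := τ) htf
  have : Finite (rotTorsion τ) := by rw [hbot]; infer_instance
  obtain ⟨κ, hκ, hidx⟩ := _root_.qIndex_compareFixed (τ := τ) ht
  rw [hbot, AddSubgroup.card_bot, Nat.dvd_one] at hκ
  rw [hκ, Nat.cast_one, mul_one] at hidx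
  rw [hidx, qIndex_nsmul_of_torsionFree fun a ha ↦ Subtype.ext (htf _ (congrArg Subtype.val ha)),
    qIndex_nsmul_of_torsionFree fun a ha ↦ Subtype.ext (htf _ (congrArg Subtype.val ha)),
    ← h.index_range_addFixed_mul hq ht htf]
  push_cast
  ring

theorem IsRotAcyclic.qIndex_rotSub_add_rotNorm (h : IsRotAcyclic τ)
    (htf : ∀ a : A, q • a = 0 → a = 0) :
    qIndex (rotSub τ + rotNorm τ)
      = qIndex (nsmulAddMonoidHom q : rotFixed τ →+ rotFixed τ) ^ 2 := by
  have : Finite (rotTorsion τ) := by rw [rotTorsion_eq_bot htf]; infer_instance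
  rw [_root_.qIndex_rotSub_add_rotNorm, rotFixedDiff_eq_bot htf, AddSubgroup.card_bot,
    h.index_range_rotSub_sup_rotFixed, Nat.cast_one, div_one,
    qIndex_nsmul_of_torsionFree fun a ha ↦ Subtype.ext (htf _ (congrArg Subtype.val ha)), sq]

end InducedModule

section PlaceLattice

variable {q : ℕ}

lemma HasCovolume.finite_torsion {A X : Type*} [AddCommGroup A] [Fintype X] [NeZero q]
    {Λ : A →+ (X → ℝ)} {w : ℕ} {c : ℝ} (h : HasCovolume Λ w c) :
    Finite (nsmulAddMonoidHom q : A →+ A).ker := by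
  obtain ⟨hw, -, π, M, -, hπ, -⟩ := h
  have : Finite π.ker := Nat.finite_of_card_ne_zero (hπ ▸ hw)
  have hle : (nsmulAddMonoidHom q : A →+ A).ker ≤ π.ker := fun a ha ↦ by
    have hπa : q • π a = 0 := (map_nsmul π q a).symm.trans ((congrArg π ha).trans (map_zero π))
    exact (smul_eq_zero.1 hπa).resolve_left (NeZero.ne q)
  exact Finite.of_injective _ (AddSubgroup.inclusion_injective hle)

lemma HasCovolume.finite_rotTorsion {A X : Type*} [AddCommGroup A] [Fintype X] [NeZero q]
    {τ : DihedralGroup q →* AddMonoid.End A} {Λ : A →+ (X → ℝ)} {w : ℕ} {c : ℝ}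
    (h : HasCovolume Λ w c) : Finite (rotTorsion τ) :=
  have := h.finite_torsion (q := q)
  Finite.of_injective _ (AddSubgroup.inclusion_injective (inf_le_right : rotTorsion τ ≤ _))

lemma HasCovolume.qIndex_nsmul {A X : Type*} [AddCommGroup A] [Fintype X]
    {Λ : A →+ (X → ℝ)} {w : ℕ} {c : ℝ} (h : HasCovolume Λ w c) :
    qIndex (nsmulAddMonoidHom q : A →+ A) = q ^ Fintype.card X := by
  have hscale := qIndex_mul_covolume h h (nsmulAddMonoidHom q) ((q : ℝ) • LinearMap.id) fun a ↦ by
    simp [nsmulAddMonoidHom, Nat.cast_smul_eq_nsmul]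
  have hdet : |LinearMap.det ((q : ℝ) • (LinearMap.id : (X → ℝ) →ₗ[ℝ] (X → ℝ)))|
      = q ^ Fintype.card X := by simp
  rw [hdet] at hscale
  exact_mod_cast mul_right_cancel₀ h.2.1 (mul_right_cancel₀ (Nat.cast_ne_zero.2 h.1) hscale)

variable {X XF XK Xk : Type*} [MulAction (DihedralGroup q) X]
  (pF : X → XF) (pK : X → XK) (pk : X → Xk)

/-- The rotations act freely on `X`, and `pF`, `pK`, `pk` are the quotient maps of `X` by the
rotations, by the reflection `sr 0` and by the whole dihedral group. -/
structure IsDihedralQuotient : Prop where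
  rot_surjective : pF.Surjective
  refl_surjective : pK.Surjective
  dih_surjective : pk.Surjective
  rot_eq_iff (x y : X) : pF x = pF y ↔ ∃ i, (r i : DihedralGroup q) • x = y
  refl_eq_iff (x y : X) : pK x = pK y ↔ y = x ∨ y = (sr 0 : DihedralGroup q) • x
  dih_eq_iff (x y : X) : pk x = pk y ↔ ∃ g : DihedralGroup q, g • x = y
  free (i : ZMod q) (x : X) : (r i : DihedralGroup q) • x = x → i = 0

/-- `Λ` is equivariant, and `ΛF`, `ΛK`, `Λk` are its restrictions to the fixed elements, on
which it factors through the quotients `XF`, `XK`, `Xk` of `X`. -/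
structure IsDihedralLattice {A : Type*} [AddCommGroup A] (τ : DihedralGroup q →* AddMonoid.End A)
    (Λ : A →+ (X → ℝ)) (ΛF : rotFixed τ →+ (XF → ℝ)) (ΛK : reflFixed τ →+ (XK → ℝ))
    (Λk : dihFixed τ →+ (Xk → ℝ)) : Prop where
  equivariant (g : DihedralGroup q) (a : A) (w : X) : Λ (τ g a) w = Λ a (g⁻¹ • w)
  rot (a : rotFixed τ) (w : X) : ΛF a (pF w) = Λ a w
  refl (a : reflFixed τ) (w : X) : ΛK a (pK w) = Λ a w
  dih (a : dihFixed τ) (w : X) : Λk a (pk w) = Λ a w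

variable {pF pK pk} {A : Type*} [AddCommGroup A] {τ : DihedralGroup q →* AddMonoid.End A}
  {Λ : A →+ (X → ℝ)} {ΛF : rotFixed τ →+ (XF → ℝ)} {ΛK : reflFixed τ →+ (XK → ℝ)}
  {Λk : dihFixed τ →+ (Xk → ℝ)} {w wF wK wk : ℕ} {c cF cK ck : ℝ} [NeZero q]

variable (pF pK) in
/-- The linear map induced by `compareFixed` on logarithmic spaces. -/
noncomputable def compareReal (t : ZMod q) (sk : Xk → X) :
    (XF ⊕ XK ⊕ XK → ℝ) →ₗ[ℝ] (X ⊕ Xk ⊕ Xk → ℝ) where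
  toFun φ := Sum.elim
    (fun x ↦ φ (.inl (pF x)) + φ (.inr (.inl (pK x))) + φ (.inr (.inr (pK ((r t)⁻¹ • x)))))
    (Sum.elim (fun x ↦ ∑ i : ZMod q, φ (.inr (.inl (pK ((r i)⁻¹ • sk x)))))
      (fun x ↦ ∑ i : ZMod q, φ (.inr (.inr (pK ((r i)⁻¹ • sk x))))))
  map_add' φ ψ := by
    ext (x | x | x)
    · simp only [Pi.add_apply, Sum.elim_inl]; ring
    · simp only [Pi.add_apply, Sum.elim_inl, Sum.elim_inr, Finset.sum_add_distrib]
    · simp only [Pi.add_apply, Sum.elim_inr, Finset.sum_add_distrib]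
  map_smul' a φ := by
    ext (x | x | x)
    · simp only [Pi.smul_apply, smul_eq_mul, Sum.elim_inl, RingHom.id_apply]; ring
    · simp only [Pi.smul_apply, smul_eq_mul, Sum.elim_inl, Sum.elim_inr, RingHom.id_apply,
        Finset.mul_sum]
    · simp only [Pi.smul_apply, smul_eq_mul, Sum.elim_inr, RingHom.id_apply, Finset.mul_sum]

variable (X q) in
/-- The linear map induced by `rotSub + rotNorm` on logarithmic spaces. -/
noncomputable def rotReal : (X → ℝ) →ₗ[ℝ] (X → ℝ) where
  toFun φ x := φ ((r 1 : DihedralGroup q)⁻¹ • x) - φ x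
    + ∑ i : ZMod q, φ ((r i : DihedralGroup q)⁻¹ • x)
  map_add' φ ψ := by
    ext x
    simp only [Pi.add_apply, Finset.sum_add_distrib]; ring
  map_smul' a φ := by
    ext x
    simp only [Pi.smul_apply, smul_eq_mul, RingHom.id_apply, Finset.mul_sum, mul_add, mul_sub]

namespace IsDihedralLattice

lemma apply_rotNorm (h : IsDihedralLattice pF pK pk τ Λ ΛF ΛK Λk) (a : A) (x : X) :
    Λ (rotNorm τ a) x = ∑ i : ZMod q, Λ a ((r i)⁻¹ • x) := by
  rw [rotNorm_apply, map_sum, Finset.sum_apply]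
  exact Finset.sum_congr rfl fun i _ ↦ h.equivariant _ _ _

lemma apply_reflNorm (h : IsDihedralLattice pF pK pk τ Λ ΛF ΛK Λk) (g : reflFixed τ) (x : X) :
    Λk (reflNorm τ g) (pk x) = ∑ i : ZMod q, ΛK g (pK ((r i)⁻¹ • x)) := by
  rw [h.dih]
  exact (h.apply_rotNorm g x).trans (Finset.sum_congr rfl fun i _ ↦ (h.refl _ _).symm)

lemma compareReal_apply (h : IsDihedralLattice pF pK pk τ Λ ΛF ΛK Λk) (t : ZMod q) {sk : Xk → X}
    (hsk : ∀ x, pk (sk x) = x) (a : rotFixed τ × reflFixed τ × reflFixed τ) :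
    compareReal pF pK t sk (prodEmbedding ΛF (prodEmbedding ΛK ΛK) a)
      = prodEmbedding Λ (prodEmbedding Λk Λk) (compareFixed τ t a) := by
  obtain ⟨f, g, u⟩ := a
  have hnorm (g : reflFixed τ) (x : Xk) : ∑ i : ZMod q, ΛK g (pK ((r i)⁻¹ • sk x))
      = Λk (reflNorm τ g) x := by rw [← h.apply_reflNorm, hsk]
  ext (x | x | x)
  · change ΛF f (pF x) + ΛK g (pK x) + ΛK u (pK ((r t)⁻¹ • x))
      = Λ ((f : A) + (g : A) + τ (r t) (u : A)) x
    rw [h.rot, h.refl, h.refl, map_add, map_add, Pi.add_apply, Pi.add_apply, h.equivariant]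
  · exact hnorm g x
  · exact hnorm u x

variable [Fintype X]

lemma qIndex_rotSub_add_rotNorm (h : IsDihedralLattice pF pK pk τ Λ ΛF ΛK Λk)
    (hΛ : HasCovolume Λ w c) :
    (qIndex (rotSub τ + rotNorm τ) : ℝ) = |LinearMap.det (rotReal q X)| := by
  have hmul := qIndex_mul_covolume hΛ hΛ (rotSub τ + rotNorm τ) (rotReal q X) fun a ↦ by
    ext x
    change Λ a ((r 1)⁻¹ • x) - Λ a x + ∑ i : ZMod q, Λ a ((r i)⁻¹ • x)
      = Λ (rotSub τ a + rotNorm τ a) x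
    rw [map_add, Pi.add_apply, h.apply_rotNorm, rotSub_apply, map_sub, Pi.sub_apply,
      h.equivariant]
  exact mul_right_cancel₀ hΛ.2.1 (mul_right_cancel₀ (Nat.cast_ne_zero.2 hΛ.1) hmul)

variable [Fintype XF] [Fintype XK] [Fintype Xk]

lemma qIndex_compareFixed (h : IsDihedralLattice pF pK pk τ Λ ΛF ΛK Λk)
    (hΛ : HasCovolume Λ w c) (hF : HasCovolume ΛF wF cF) (hK : HasCovolume ΛK wK cK)
    (hk : HasCovolume Λk wk ck) (t : ZMod q) {sk : Xk → X} (hsk : ∀ x, pk (sk x) = x)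
    (e : XF ⊕ XK ⊕ XK ≃ X ⊕ Xk ⊕ Xk) :
    (qIndex (compareFixed τ t) : ℝ) * (c * (ck * ck)) * ((wF * (wK * wK) : ℕ) : ℝ)
      = |LinearMap.det (LinearMap.funLeft ℝ ℝ e ∘ₗ compareReal pF pK t sk)|
        * (cF * (cK * cK)) * ((w * (wk * wk) : ℕ) : ℝ) := by
  have htarget := (hΛ.prod (hk.prod hk)).of_equiv (AddEquiv.refl _) e
    ((LinearMap.funLeft ℝ ℝ e).toAddMonoidHom.comp (prodEmbedding Λ (prodEmbedding Λk Λk)))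
    fun _ _ ↦ rfl
  refine qIndex_mul_covolume (hF.prod (hK.prod hK)) htarget (compareFixed τ t) _ fun a ↦ ?_
  rw [LinearMap.comp_apply, h.compareReal_apply t hsk]
  rfl

end IsDihedralLattice

end PlaceLattice

section PermutationLattice

/-- The embedding of `X → ℤ` into `X → ℝ`. -/
def castEmbedding (X : Type*) : (X → ℤ) →+ (X → ℝ) :=
  AddMonoidHom.mk' (fun b x ↦ (b x : ℝ)) fun a b ↦ by ext; simp

lemma hasCovolume_castEmbedding (X : Type*) [Fintype X] :
    HasCovolume (castEmbedding X) 1 1 := by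
  refine ⟨one_ne_zero, one_ne_zero, AddMonoidHom.id _, 1, fun c ↦ ⟨c, rfl⟩, ?_, by simp,
    fun b ↦ ?_⟩
  · have hker : (AddMonoidHom.id (X → ℤ)).ker = ⊥ :=
      (AddSubgroup.eq_bot_iff_forall _).2 fun b hb ↦ hb
    rw [hker, AddSubgroup.card_bot]
  · rw [Matrix.one_mulVec]
    rfl

/-- The embedding of a group `H` of functions `X → ℤ` into `Y → ℝ` along a surjection `p : X → Y`;
it is meant for the group of functions that are constant on the fibres of `p`. -/
noncomputable def fibreEmbedding {X Y : Type*} {p : X → Y} (hp : p.Surjective)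
    (H : AddSubgroup (X → ℤ)) : H →+ (Y → ℝ) :=
  AddMonoidHom.mk' (fun b y ↦ ((b : X → ℤ) (Function.surjInv hp y) : ℝ)) fun a b ↦ by
    ext; simp

lemma fibreEmbedding_apply {X Y : Type*} {p : X → Y} (hp : p.Surjective)
    {H : AddSubgroup (X → ℤ)} (hH : ∀ b, b ∈ H ↔ ∀ x y, p x = p y → b x = b y)
    (b : H) (x : X) : fibreEmbedding hp H b (p x) = ((b : X → ℤ) x : ℝ) :=
  congrArg (Int.cast (R := ℝ)) ((hH b).1 b.2 _ _ (Function.surjInv_eq hp _))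

lemma hasCovolume_fibreEmbedding {X Y : Type*} [Fintype Y] {p : X → Y} (hp : p.Surjective)
    {H : AddSubgroup (X → ℤ)} (hH : ∀ b, b ∈ H ↔ ∀ x y, p x = p y → b x = b y) :
    HasCovolume (fibreEmbedding hp H) 1 1 := by
  let e : H ≃+ (Y → ℤ) :=
    { toFun b y := (b : X → ℤ) (Function.surjInv hp y)
      invFun c := ⟨fun x ↦ c (p x), (hH _).2 fun x y h ↦ by rw [h]⟩
      left_inv b := Subtype.ext (funext fun x ↦ (hH b).1 b.2 _ _ (Function.surjInv_eq hp _))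
      right_inv c := funext fun y ↦ congrArg c (Function.surjInv_eq hp y)
      map_add' _ _ := rfl }
  exact (hasCovolume_castEmbedding Y).of_equiv e (Equiv.refl Y) _ fun _ _ ↦ rfl

lemma eq_zero_of_nsmul_eq_zero {q : ℕ} [NeZero q] {X : Type*} (b : X → ℤ) (hb : q • b = 0) :
    b = 0 :=
  (smul_eq_zero.1 hb).resolve_left (NeZero.ne q)

variable (q : ℕ) (X : Type*) [MulAction (DihedralGroup q) X]

/-- The permutation module `X → ℤ`. -/
def permAction : DihedralGroup q →* AddMonoid.End (X → ℤ) where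
  toFun g := AddMonoidHom.mk' (fun b x ↦ b (g⁻¹ • x)) fun _ _ ↦ rfl
  map_one' := by
    refine AddMonoidHom.ext fun b ↦ funext fun x ↦ ?_
    change b ((1 : DihedralGroup q)⁻¹ • x) = b x
    rw [inv_one, one_smul]
  map_mul' g h := by
    refine AddMonoidHom.ext fun b ↦ funext fun x ↦ ?_
    change b ((g * h)⁻¹ • x) = b (h⁻¹ • g⁻¹ • x)
    rw [mul_inv_rev, mul_smul]

variable {q X}

lemma permAction_apply (g : DihedralGroup q) (b : X → ℤ) (x : X) :
    permAction q X g b x = b (g⁻¹ • x) := rfl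

lemma permAction_eq_self_iff (g : DihedralGroup q) (b : X → ℤ) :
    permAction q X g b = b ↔ ∀ x, b (g • x) = b x := by
  refine ⟨fun h x ↦ ?_, fun h ↦ funext fun x ↦ ?_⟩
  · conv_lhs => rw [← h, permAction_apply, inv_smul_smul]
  · rw [permAction_apply, ← h, smul_inv_smul]

variable [NeZero q]

lemma rotNorm_permAction (b : X → ℤ) (x : X) :
    rotNorm (permAction q X) b x = ∑ i : ZMod q, b ((r i : DihedralGroup q)⁻¹ • x) := by
  rw [rotNorm_apply, Finset.sum_apply]
  rfl

lemma action_r_sub_mem_range_rotSub {A : Type*} [AddCommGroup A]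
    {τ : DihedralGroup q →* AddMonoid.End A} (i : ZMod q) (a : A) :
    τ (r i) a - a ∈ (rotSub τ).range := by
  have h (n : ℕ) : τ (r (n : ZMod q)) a - a ∈ (rotSub τ).range := by
    induction n with
    | zero =>
      rw [Nat.cast_zero, action_r_zero, sub_self]
      exact zero_mem _
    | succ n ih =>
      have hsucc : τ (r ((n + 1 : ℕ) : ZMod q)) a - a
          = rotSub τ (τ (r (n : ZMod q)) a) + (τ (r (n : ZMod q)) a - a) := by
        rw [rotSub_apply, action_mul, r_mul_r, Nat.cast_succ, add_comm (1 : ZMod q)]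
        abel
      rw [hsucc]
      exact add_mem ⟨_, rfl⟩ ih
  rw [← ZMod.natCast_zmod_val i]
  exact h _

namespace IsDihedralQuotient

variable {XF XK Xk : Type*} {pF : X → XF} {pK : X → XK} {pk : X → Xk}

omit [NeZero q] in
lemma mem_reflFixed_permAction (hX : IsDihedralQuotient (q := q) pF pK pk) (b : X → ℤ) :
    b ∈ reflFixed (permAction q X) ↔ ∀ x y, pK x = pK y → b x = b y := by
  rw [mem_reflFixed_iff, permAction_eq_self_iff]
  refine ⟨fun h x y hxy ↦ ?_, fun h x ↦ (h _ _ ((hX.refl_eq_iff _ _).2 (Or.inr rfl))).symm⟩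
  rcases (hX.refl_eq_iff x y).1 hxy with rfl | rfl
  exacts [rfl, (h x).symm]

lemma mem_rotFixed_permAction (hX : IsDihedralQuotient (q := q) pF pK pk) (b : X → ℤ) :
    b ∈ rotFixed (permAction q X) ↔ ∀ x y, pF x = pF y → b x = b y := by
  refine ⟨fun h x y hxy ↦ ?_, fun h ↦ ?_⟩
  · obtain ⟨i, rfl⟩ := (hX.rot_eq_iff x y).1 hxy
    exact ((permAction_eq_self_iff _ _).1 (action_r_of_mem h i) x).symm
  · rw [mem_rotFixed_iff, permAction_eq_self_iff]
    exact fun x ↦ (h _ _ ((hX.rot_eq_iff _ _).2 ⟨1, rfl⟩)).symm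

lemma mem_dihFixed_permAction (hX : IsDihedralQuotient (q := q) pF pK pk) (b : X → ℤ) :
    b ∈ dihFixed (permAction q X) ↔ ∀ x y, pk x = pk y → b x = b y := by
  rw [dihFixed, AddSubgroup.mem_inf, hX.mem_rotFixed_permAction, hX.mem_reflFixed_permAction]
  constructor
  · rintro ⟨hrot, hrefl⟩ x y hxy
    obtain ⟨g, rfl⟩ := (hX.dih_eq_iff x y).1 hxy
    cases g with
    | r i => exact hrot _ _ ((hX.rot_eq_iff _ _).2 ⟨i, rfl⟩)
    | sr i =>
      have hsr : (sr i : DihedralGroup q) = r (-i) * sr 0 := by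
        rw [r_mul_sr, zero_sub, neg_neg]
      rw [hsr, mul_smul]
      exact (hrefl _ _ ((hX.refl_eq_iff _ _).2 (Or.inr rfl))).trans
        (hrot _ _ ((hX.rot_eq_iff _ _).2 ⟨-i, rfl⟩))
  · refine fun h ↦ ⟨fun x y hxy ↦ ?_, fun x y hxy ↦ ?_⟩
    · obtain ⟨i, rfl⟩ := (hX.rot_eq_iff x y).1 hxy
      exact h _ _ ((hX.dih_eq_iff _ _).2 ⟨_, rfl⟩)
    · rcases (hX.refl_eq_iff x y).1 hxy with rfl | rfl
      · rfl
      · exact h _ _ ((hX.dih_eq_iff _ _).2 ⟨_, rfl⟩)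

lemma isDihedralLattice_permAction (hX : IsDihedralQuotient (q := q) pF pK pk) :
    IsDihedralLattice pF pK pk (permAction q X) (castEmbedding X)
      (fibreEmbedding hX.rot_surjective _) (fibreEmbedding hX.refl_surjective _)
      (fibreEmbedding hX.dih_surjective _) where
  equivariant _ _ _ := rfl
  rot := fibreEmbedding_apply _ hX.mem_rotFixed_permAction
  refl := fibreEmbedding_apply _ hX.mem_reflFixed_permAction
  dih := fibreEmbedding_apply _ hX.mem_dihFixed_permAction

lemma exists_sum_eq_one (hX : IsDihedralQuotient (q := q) pF pK pk) :
    ∃ E : X → ℤ, ∀ x, ∑ i : ZMod q, E ((r i : DihedralGroup q)⁻¹ • x) = 1 := by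
  let s := Function.surjInv hX.rot_surjective
  have hs (y : XF) : pF (s y) = y := Function.surjInv_eq _ y
  refine ⟨fun x ↦ if x = s (pF x) then 1 else 0, fun x ↦ ?_⟩
  obtain ⟨j, hj⟩ := (hX.rot_eq_iff _ x).1 (hs (pF x))
  have hj' : (r j : DihedralGroup q)⁻¹ • x = s (pF x) := inv_smul_eq_iff.2 hj.symm
  rw [Finset.sum_eq_single j]
  · simp only [hj', hs, if_true]
  · intro i _ hij
    refine if_neg fun h ↦ hij ?_
    have hi : pF ((r i : DihedralGroup q)⁻¹ • x) = pF x :=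
      (hX.rot_eq_iff _ _).2 ⟨i, smul_inv_smul _ _⟩
    rw [hi, ← hj'] at h
    have hfix : (r (j - i) : DihedralGroup q) • x = x := by
      have hji : (r (j - i) : DihedralGroup q) = r j * (r i)⁻¹ := by
        rw [inv_r, r_mul_r, sub_eq_add_neg]
      rw [hji, mul_smul, h, smul_inv_smul]
    exact (sub_eq_zero.1 (hX.free _ _ hfix)).symm
  · simp

lemma mem_range_rotSub_permAction (hX : IsDihedralQuotient (q := q) pF pK pk) {b : X → ℤ}
    (hb : rotNorm (permAction q X) b = 0) : b ∈ (rotSub (permAction q X)).range := by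
  obtain ⟨E, hE⟩ := hX.exists_sum_eq_one
  let z (i : ZMod q) : X → ℤ := permAction q X (r (-i)) b * E
  have hz : b = ∑ i, (permAction q X (r i) (z i) - z i) := by
    ext x
    have hsum : ∑ i : ZMod q, b ((r i : DihedralGroup q) • x) = 0 := by
      have hx := congrFun hb x
      rw [rotNorm_permAction, ← Equiv.sum_comp (Equiv.neg (ZMod q))] at hx
      simpa [inv_r] using hx
    have hEx := hE x
    simp only [inv_r] at hEx
    simp only [z, Finset.sum_sub_distrib, Pi.sub_apply, Finset.sum_apply, permAction_apply,
      Pi.mul_apply, inv_r, neg_neg, ← Finset.sum_mul, ← mul_smul, r_mul_r, add_neg_cancel,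
      ← one_def, one_smul, ← Finset.mul_sum, hEx, hsum]
    ring
  rw [hz]
  exact sum_mem fun i _ ↦ action_r_sub_mem_range_rotSub i _

lemma isRotAcyclic_permAction (hX : IsDihedralQuotient (q := q) pF pK pk) :
    IsRotAcyclic (permAction q X) where
  exists_rotNorm_eq b hb := by
    obtain ⟨E, hE⟩ := hX.exists_sum_eq_one
    refine ⟨b * E, funext fun x ↦ ?_⟩
    have h (i : ZMod q) : b ((r i : DihedralGroup q)⁻¹ • x) = b x :=
      congrFun (action_r_of_mem hb i) x
    simp only [rotNorm_permAction, Pi.mul_apply, h, ← Finset.mul_sum, hE, mul_one]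
  mem_range_rotSub _ := hX.mem_range_rotSub_permAction

end IsDihedralQuotient

end PermutationLattice

section LatticeIndex

variable {q : ℕ} [NeZero q] {X XF XK Xk : Type*} [MulAction (DihedralGroup q) X]
  [Fintype X] [Fintype XF] [Fintype XK] [Fintype Xk]
  {pF : X → XF} {pK : X → XK} {pk : X → Xk}
  {A : Type*} [AddCommGroup A] {τ : DihedralGroup q →* AddMonoid.End A}
  {Λ : A →+ (X → ℝ)} {ΛF : rotFixed τ →+ (XF → ℝ)} {ΛK : reflFixed τ →+ (XK → ℝ)}
  {Λk : dihFixed τ →+ (Xk → ℝ)} {w wF wK wk : ℕ} {c cF cK ck : ℝ}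

namespace IsDihedralLattice

omit [Fintype XK] [Fintype Xk] in
lemma index_range_rotSub_sup_rotFixed (h : IsDihedralLattice pF pK pk τ Λ ΛF ΛK Λk)
    (hX : IsDihedralQuotient (q := q) pF pK pk) (hΛ : HasCovolume Λ w c)
    (hΛF : HasCovolume ΛF wF cF) :
    ((rotSub τ).range ⊔ rotFixed τ).index
      = q ^ Fintype.card XF * Nat.card (rotFixedDiff τ) := by
  have := hΛ.finite_rotTorsion (τ := τ)
  have := finite_rotFixedDiff (τ := τ)
  have hqq : (q : ℚ) ≠ 0 := Nat.cast_ne_zero.2 (NeZero.ne q)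
  have hperm : qIndex (rotSub τ + rotNorm τ)
      = qIndex (rotSub (permAction q X) + rotNorm (permAction q X)) := by
    exact_mod_cast (h.qIndex_rotSub_add_rotNorm hΛ).trans
      (hX.isDihedralLattice_permAction.qIndex_rotSub_add_rotNorm
        (hasCovolume_castEmbedding X)).symm
  rw [hX.isRotAcyclic_permAction.qIndex_rotSub_add_rotNorm eq_zero_of_nsmul_eq_zero,
    _root_.qIndex_rotSub_add_rotNorm,
    (hasCovolume_fibreEmbedding hX.rot_surjective hX.mem_rotFixed_permAction).qIndex_nsmul,
    hΛF.qIndex_nsmul, sq] at hperm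
  have hdiv := mul_right_cancel₀ (pow_ne_zero _ hqq) hperm
  rw [div_eq_iff (Nat.cast_ne_zero.2 Nat.card_pos.ne')] at hdiv
  exact_mod_cast hdiv

lemma qIndex_compareFixed_mul (h : IsDihedralLattice pF pK pk τ Λ ΛF ΛK Λk)
    (hX : IsDihedralQuotient (q := q) pF pK pk) (hΛ : HasCovolume Λ w c)
    (hΛF : HasCovolume ΛF wF cF) (hΛK : HasCovolume ΛK wK cK) (hΛk : HasCovolume Λk wk ck)
    (hq : Odd q)
    (hcard : Fintype.card X + 2 * Fintype.card Xk = Fintype.card XF + 2 * Fintype.card XK)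
    {t : ZMod q} (ht : t + t = 1) :
    (qIndex (compareFixed τ t) : ℝ) * ((c * ck ^ 2) * (wF * wK ^ 2))
      = q ^ Fintype.card XF * q ^ Fintype.card Xk * ((cF * cK ^ 2) * (w * wk ^ 2)) := by
  obtain ⟨e⟩ : Nonempty (XF ⊕ XK ⊕ XK ≃ X ⊕ Xk ⊕ Xk) := by
    refine Fintype.card_eq.1 ?_
    simp only [Fintype.card_sum]
    lia
  have hsk := Function.surjInv_eq hX.dih_surjective
  have hBF := hasCovolume_fibreEmbedding hX.rot_surjective hX.mem_rotFixed_permAction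
  have hBk := hasCovolume_fibreEmbedding hX.dih_surjective hX.mem_dihFixed_permAction
  have hcomp := h.qIndex_compareFixed hΛ hΛF hΛK hΛk t hsk e
  have hperm := hX.isDihedralLattice_permAction.qIndex_compareFixed (hasCovolume_castEmbedding X)
    hBF (hasCovolume_fibreEmbedding hX.refl_surjective hX.mem_reflFixed_permAction) hBk t hsk e
  simp only [mul_one, Nat.cast_one] at hperm
  rw [← hperm, hX.isRotAcyclic_permAction.qIndex_compareFixed hq ht eq_zero_of_nsmul_eq_zero,
    hBF.qIndex_nsmul, hBk.qIndex_nsmul] at hcomp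
  push_cast at hcomp
  linear_combination hcomp

theorem exists_index (h : IsDihedralLattice pF pK pk τ Λ ΛF ΛK Λk)
    (hX : IsDihedralQuotient (q := q) pF pK pk) (hΛ : HasCovolume Λ w c)
    (hΛF : HasCovolume ΛF wF cF) (hΛK : HasCovolume ΛK wK cK) (hΛk : HasCovolume Λk wk ck)
    (hq : Odd q)
    (hcard : Fintype.card X + 2 * Fintype.card Xk = Fintype.card XF + 2 * Fintype.card XK)
    (htors : ∀ a : A, q • a = 0 → a ∈ rotFixed τ) :
    ∃ κ ind : ℕ, κ ∣ Nat.card (rotTorsion τ) ∧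
      ind ∣ q ^ Fintype.card XF * Nat.card (dihTorsion τ) ∧
      (q : ℝ) ^ Fintype.card XF * κ * ((cF * cK ^ 2) * (w * wk ^ 2))
        = q ^ Fintype.card Xk * ind * ((c * ck ^ 2) * (wF * wK ^ 2)) := by
  obtain ⟨t, ht⟩ := exists_add_self_eq_one_zmod hq
  have := hΛ.finite_rotTorsion (τ := τ)
  obtain ⟨κ, hκ, hidx⟩ := _root_.qIndex_compareFixed (τ := τ) ht
  refine ⟨κ, _, hκ, index_range_addFixed_dvd ht htors
    (h.index_range_rotSub_sup_rotFixed hX hΛ hΛF), ?_⟩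
  have hcomp := h.qIndex_compareFixed_mul hX hΛ hΛF hΛK hΛk hq hcard ht
  rw [hΛk.qIndex_nsmul] at hidx
  have hidx' : (qIndex (compareFixed τ t) : ℝ) * κ
      = (addFixed τ t).range.index * (q ^ Fintype.card Xk) ^ 2 := by exact_mod_cast hidx
  have hq0 : (q : ℝ) ≠ 0 := Nat.cast_ne_zero.2 (NeZero.ne q)
  refine mul_left_cancel₀ (pow_ne_zero (Fintype.card Xk) hq0) ?_
  linear_combination (c * ck ^ 2) * (wF * wK ^ 2) * hidx' - κ * hcomp

end IsDihedralLattice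

end LatticeIndex

section LogarithmicEmbedding

open Units

/-- The units of `M`, extended by a copy of `ℤ` so that their logarithmic embedding becomes a full
lattice. -/
abbrev ExtUnits (M : Type*) [Field M] := Additive (𝓞 M)ˣ × ℤ

/-- The underlying element of `M` of the unit component. -/
def unitVal {M : Type*} [Field M] (a : ExtUnits M) : M := ((a.1.toMul : 𝓞 M) : M)

variable (M : Type*) [Field M] [NumberField M]

/-- The logarithmic embedding of the units of `M`, extended by the diagonal. -/
noncomputable def logUnits : ExtUnits M →+ (InfinitePlace M → ℝ) :=
  AddMonoidHom.mk' (fun a w ↦ Real.log (w (unitVal a)) + a.2) (by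
    intro a b
    ext w
    have h (u : (𝓞 M)ˣ) : w ((u : 𝓞 M) : M) ≠ 0 := by simp
    simp only [Prod.fst_add, toMul_add, Units.val_mul, map_mul, Prod.snd_add, Int.cast_add,
      Pi.add_apply, unitVal, Real.log_mul (h _) (h _)]
    ring)

variable {M}

lemma torsion_mul_prod_injective {ζ ζ' : torsion M} {f f' : Fin (rank M) → ℤ}
    (h : (ζ : (𝓞 M)ˣ) * ∏ i, fundSystem M i ^ f i = ζ' * ∏ i, fundSystem M i ^ f' i) :
    ζ = ζ' ∧ f = f' :=
  Prod.ext_iff.1 ((exist_unique_eq_mul_prod M _).unique (y₁ := (ζ, f)) (y₂ := (ζ', f')) rfl h)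

variable (M) in
/-- The coordinates of a unit with respect to the fundamental system of units. -/
noncomputable def unitCoord : Additive (𝓞 M)ˣ →+ (Fin (rank M) → ℤ) :=
  AddMonoidHom.mk' (fun u ↦ (exist_unique_eq_mul_prod M u.toMul).choose.2) (by
    intro u v
    have h (u : Additive (𝓞 M)ˣ) : u.toMul
        = ((exist_unique_eq_mul_prod M u.toMul).choose.1 : (𝓞 M)ˣ)
          * ∏ i, fundSystem M i ^ (exist_unique_eq_mul_prod M u.toMul).choose.2 i :=
      (exist_unique_eq_mul_prod M u.toMul).choose_spec.1
    refine (torsion_mul_prod_injective (ζ := (exist_unique_eq_mul_prod M (u + v).toMul).choose.1)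
      (ζ' := (exist_unique_eq_mul_prod M u.toMul).choose.1
        * (exist_unique_eq_mul_prod M v.toMul).choose.1) ((h (u + v)).symm.trans ?_)).2
    refine (toMul_add u v).trans ((congrArg₂ _ (h u) (h v)).trans ?_)
    simp only [Subgroup.coe_mul, Pi.add_apply, zpow_add, Finset.prod_mul_distrib]
    exact mul_mul_mul_comm _ _ _ _)

lemma exists_eq_mul_prod_unitCoord (u : (𝓞 M)ˣ) : ∃ ζ ∈ torsion M,
    u = ζ * ∏ i, fundSystem M i ^ unitCoord M (Additive.ofMul u) i :=
  ⟨_, (exist_unique_eq_mul_prod M u).choose.1.2, (exist_unique_eq_mul_prod M u).choose_spec.1⟩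

lemma unitCoord_surjective : Function.Surjective (unitCoord M) := by
  intro f
  refine ⟨Additive.ofMul (∏ i, fundSystem M i ^ f i), ?_⟩
  obtain ⟨ζ, hζ, h⟩ := exists_eq_mul_prod_unitCoord (∏ i, fundSystem M i ^ f i)
  exact ((torsion_mul_prod_injective (ζ := 1) (ζ' := ⟨ζ, hζ⟩)
    ((one_mul _).trans h)).2).symm

lemma unitCoord_eq_zero_iff (u : Additive (𝓞 M)ˣ) :
    unitCoord M u = 0 ↔ u.toMul ∈ torsion M := by
  obtain ⟨ζ, hζ, h⟩ := exists_eq_mul_prod_unitCoord u.toMul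
  rw [ofMul_toMul] at h
  refine ⟨fun h0 ↦ ?_, fun h0 ↦ ?_⟩
  · rw [h, h0]
    simp [hζ]
  · exact (torsion_mul_prod_injective (ζ := ⟨_, h0⟩) (ζ' := ⟨ζ, hζ⟩) (f := 0)
      (by simpa using h)).2.symm

lemma log_eq_sum_unitCoord_mul_log (u : (𝓞 M)ˣ) (w : InfinitePlace M) :
    Real.log (w ((u : 𝓞 M) : M)) = ∑ i, (unitCoord M (Additive.ofMul u) i : ℝ)
      * Real.log (w ((fundSystem M i : 𝓞 M) : M)) := by
  obtain ⟨ζ, hζ, h⟩ := exists_eq_mul_prod_unitCoord u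
  let φ : (𝓞 M)ˣ →* ℝ := (w.1.toMonoidWithZeroHom : M →* ℝ).comp
    ((algebraMap (𝓞 M) M : 𝓞 M →* M).comp (Units.coeHom (𝓞 M)))
  have hφ (u : (𝓞 M)ˣ) : φ u = w ((u : 𝓞 M) : M) := rfl
  have hne (u : (𝓞 M)ˣ) : φ u ≠ 0 := by simp [hφ]
  rw [← hφ]
  conv_lhs => rw [h]
  rw [map_mul, hφ ζ, (mem_torsion M).1 hζ w, one_mul, map_prod, Real.log_prod fun i _ ↦ hne _]
  refine Finset.sum_congr rfl fun i _ ↦ ?_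
  have h1 (v : (𝓞 M)ˣ) (n : ℤ) : φ (v ^ n) = φ v ^ n := by
    exact (congrArg Units.val (map_zpow φ.toHomUnits v n)).trans (Units.val_zpow_eq_zpow_val _ _)
  rw [h1, Real.log_zpow, hφ]
section LogarithmicMatrix

variable (w' : InfinitePlace M) (e : {w // w ≠ w'} ≃ Fin (rank M))

/-- The matrix of `logUnits M`: its columns are the diagonal vector (in the column indexed by
`w'`) and the logarithms of the fundamental units. -/
noncomputable def logUnitsMatrix : Matrix (InfinitePlace M) (InfinitePlace M) ℝ :=
  Matrix.of fun w i ↦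
    if h : i = w' then 1 else Real.log (w ((fundSystem M (e ⟨i, h⟩) : 𝓞 M) : M))

/-- The coordinates of an element of `ExtUnits M` along the columns of `logUnitsMatrix w' e`. -/
noncomputable def logUnitsCoord : ExtUnits M →+ (InfinitePlace M → ℤ) :=
  AddMonoidHom.mk' (fun a i ↦ if h : i = w' then a.2 else unitCoord M a.1 (e ⟨i, h⟩)) (by
    intro a b
    ext i
    simp only [Prod.fst_add, Prod.snd_add, map_add, Pi.add_apply]
    split_ifs <;> rfl)

lemma logUnitsCoord_apply_self (a : ExtUnits M) : logUnitsCoord w' e a w' = a.2 := dif_pos rfl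

lemma logUnitsCoord_apply_of_ne (a : ExtUnits M) {i : InfinitePlace M} (h : i ≠ w') :
    logUnitsCoord w' e a i = unitCoord M a.1 (e ⟨i, h⟩) := dif_neg h

lemma finrank_mul_regulator_eq_abs_det_logUnitsMatrix :
    Module.finrank ℚ M * regulator M
      = 2 ^ InfinitePlace.nrComplexPlaces M * |(logUnitsMatrix w' e).det| := by
  have hmat : (Matrix.of (fun i w : InfinitePlace M ↦ if h : i = w' then (w.mult : ℝ)
      else w.mult * (w (fundSystem M (e ⟨i, h⟩))).log))
      = (logUnitsMatrix w' e).transpose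
          * Matrix.diagonal fun w : InfinitePlace M ↦ (w.mult : ℝ) := by
    ext i w
    rw [Matrix.mul_diagonal, Matrix.transpose_apply]
    simp only [logUnitsMatrix, Matrix.of_apply]
    split_ifs
    · rw [one_mul]
    · rw [mul_comm]
  have hmult : |∏ w : InfinitePlace M, (w.mult : ℝ)| = 2 ^ InfinitePlace.nrComplexPlaces M := by
    rw [Finset.abs_prod, InfinitePlace.nrComplexPlaces, Fintype.card_subtype,
      ← Finset.prod_const, Finset.prod_filter]
    refine Finset.prod_congr rfl fun w _ ↦ ?_
    rw [InfinitePlace.mult, ← InfinitePlace.not_isReal_iff_isComplex]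
    split_ifs <;> simp_all
  rw [finrank_mul_regulator_eq_det M w' e]
  convert_to |((logUnitsMatrix w' e).transpose
    * Matrix.diagonal fun w : InfinitePlace M ↦ (w.mult : ℝ)).det| = _
  · rw [← hmat]
  · rw [Matrix.det_mul, Matrix.det_transpose, Matrix.det_diagonal, abs_mul, hmult, mul_comm]

lemma abs_det_logUnitsMatrix_ne_zero : |(logUnitsMatrix w' e).det| ≠ 0 := by
  intro h0
  have h := finrank_mul_regulator_eq_abs_det_logUnitsMatrix w' e
  rw [h0, mul_zero] at h
  exact mul_ne_zero (Nat.cast_ne_zero.2 Module.finrank_pos.ne') (regulator_ne_zero M) h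

lemma logUnitsCoord_surjective : Function.Surjective (logUnitsCoord w' e) := by
  intro v
  obtain ⟨u, hu⟩ := unitCoord_surjective fun j ↦ v (e.symm j)
  refine ⟨(u, v w'), funext fun i ↦ ?_⟩
  obtain rfl | h := eq_or_ne i w'
  · exact logUnitsCoord_apply_self i e _
  · simp [logUnitsCoord_apply_of_ne w' e _ h, hu]

lemma mem_ker_logUnitsCoord_iff (a : ExtUnits M) :
    a ∈ (logUnitsCoord w' e).ker ↔ a.1.toMul ∈ torsion M ∧ a.2 = 0 := by
  rw [← unitCoord_eq_zero_iff]
  constructor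
  · intro h
    refine ⟨funext fun j ↦ ?_, (logUnitsCoord_apply_self w' e a).symm.trans (congrFun h w')⟩
    have hj := logUnitsCoord_apply_of_ne w' e a (e.symm j).2
    rw [Subtype.coe_eta, e.apply_symm_apply] at hj
    exact hj.symm.trans (congrFun h _)
  · rintro ⟨h1, h2⟩
    refine funext fun i ↦ ?_
    obtain rfl | h := eq_or_ne i w'
    · exact (logUnitsCoord_apply_self i e a).trans h2
    · rw [logUnitsCoord_apply_of_ne w' e a h, h1]
      rfl

lemma card_ker_logUnitsCoord : Nat.card (logUnitsCoord w' e).ker = torsionOrder M := by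
  have h := mem_ker_logUnitsCoord_iff w' e
  rw [torsionOrder]
  exact Nat.card_congr ⟨fun a ↦ ⟨a.1.1.toMul, ((h _).1 a.2).1⟩,
    fun u ↦ ⟨(Additive.ofMul u.1, 0), (h _).2 ⟨u.2, rfl⟩⟩,
    fun a ↦ Subtype.ext (Prod.ext rfl ((h _).1 a.2).2.symm), fun u ↦ rfl⟩

open Matrix in
lemma logUnits_eq_mulVec (a : ExtUnits M) :
    logUnits M a = logUnitsMatrix w' e *ᵥ fun i ↦ (logUnitsCoord w' e a i : ℝ) := by
  ext w
  change Real.log (w (unitVal a)) + a.2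
    = ∑ i, logUnitsMatrix w' e w i * (logUnitsCoord w' e a i : ℝ)
  rw [unitVal, log_eq_sum_unitCoord_mul_log, Fintype.sum_eq_add_sum_subtype_ne _ w', add_comm]
  congr 1
  · simp [logUnitsMatrix, logUnitsCoord_apply_self]
  · rw [← e.sum_comp]
    refine Finset.sum_congr rfl fun i _ ↦ ?_
    have hi : logUnitsMatrix w' e w i = Real.log (w ((fundSystem M (e i) : 𝓞 M) : M)) :=
      dif_neg i.2
    rw [hi, logUnitsCoord_apply_of_ne w' e a i.2, mul_comm]
    rfl

end LogarithmicMatrix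

variable (M) in
theorem exists_hasCovolume_logUnits : ∃ c, HasCovolume (logUnits M) (torsionOrder M) c ∧
    Module.finrank ℚ M * regulator M = 2 ^ InfinitePlace.nrComplexPlaces M * c := by
  obtain ⟨w'⟩ : Nonempty (InfinitePlace M) := inferInstance
  obtain ⟨e⟩ : Nonempty ({w // w ≠ w'} ≃ Fin (rank M)) := by
    refine Fintype.card_eq.1 ?_
    rw [Fintype.card_fin, rank, Fintype.card_subtype_compl, Fintype.card_subtype_eq]
  exact ⟨_, ⟨torsionOrder_ne_zero M, abs_det_logUnitsMatrix_ne_zero w' e, _, _,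
    logUnitsCoord_surjective w' e, card_ker_logUnitsCoord w' e, rfl, logUnits_eq_mulVec w' e⟩,
    finrank_mul_regulator_eq_abs_det_logUnitsMatrix w' e⟩

end LogarithmicEmbedding

section UnitsOfSubfield

open Units

lemma extUnits_ext {M : Type*} [Field M] {a b : ExtUnits M} (h : unitVal a = unitVal b)
    (h' : a.2 = b.2) : a = b :=
  Prod.ext (Additive.toMul.injective (Units.ext (RingOfIntegers.ext h))) h'

lemma snd_eq_zero_of_nsmul_eq_zero {M : Type*} [Field M] {q : ℕ} [NeZero q] {a : ExtUnits M}
    (ha : q • a = 0) : a.2 = 0 :=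
  (smul_eq_zero.1 (congrArg Prod.snd ha)).resolve_left (NeZero.ne q)

lemma unitVal_pow_eq_one_of_nsmul_eq_zero {M : Type*} [Field M] {q : ℕ} {a : ExtUnits M}
    (ha : q • a = 0) : unitVal a ^ q = 1 := by
  have hpow : a.1.toMul ^ q = 1 := congrArg (fun x : ExtUnits M ↦ x.1.toMul) ha
  rw [unitVal, ← map_pow, ← Units.val_pow_eq_pow_val, hpow, Units.val_one, map_one]

/-- The invariant `δ_q(M)`, which is `1` if `M` contains a nontrivial root of unity of order
dividing `q`, and `0` otherwise. -/
noncomputable def rootDelta (q : ℕ) (M : Type*) [Field M] : ℕ :=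
  if (∃ ζ : M, ζ ≠ 1 ∧ ζ ^ q = 1) then 1 else 0

lemma card_rootsOfUnity_dvd (q : ℕ) [NeZero q] (M : Type*) [Field M] :
    Nat.card (rootsOfUnity q M) ∣ q ^ rootDelta q M := by
  rw [rootDelta]
  split_ifs with h
  · rw [pow_one, ← IsCyclic.exponent_eq_card]
    exact Monoid.exponent_dvd_of_forall_pow_eq_one fun x ↦
      Subtype.ext ((mem_rootsOfUnity _ _).1 x.2)
  · push Not at h
    rw [pow_zero, Nat.dvd_one, Subgroup.card_eq_one, Subgroup.eq_bot_iff_forall]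
    intro ζ hζ
    by_contra hne
    exact h ζ (mt Units.val_eq_one.1 hne) ((mem_rootsOfUnity' _ _).1 hζ)

lemma card_extUnits_torsion_dvd (q : ℕ) [NeZero q] (M : Type*) [Field M] :
    Nat.card (nsmulAddMonoidHom q : ExtUnits M →+ ExtUnits M).ker ∣ q ^ rootDelta q M := by
  let φ : (𝓞 M)ˣ →* Mˣ := Units.map (algebraMap (𝓞 M) M : 𝓞 M →* M)
  let f : Multiplicative (nsmulAddMonoidHom q : ExtUnits M →+ ExtUnits M).ker →*
      rootsOfUnity q M :=
    MonoidHom.mk' (fun a ↦ ⟨φ a.toAdd.1.1.toMul, (mem_rootsOfUnity _ _).2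
      (Units.ext (unitVal_pow_eq_one_of_nsmul_eq_zero a.toAdd.2))⟩)
      fun a b ↦ Subtype.ext (map_mul φ _ _)
  have hf : Function.Injective f := fun a b hab ↦
    Multiplicative.toAdd.injective (Subtype.ext (extUnits_ext
      (congrArg (fun x : rootsOfUnity q M ↦ ((x : Mˣ) : M)) hab)
      ((snd_eq_zero_of_nsmul_eq_zero a.toAdd.2).trans
        (snd_eq_zero_of_nsmul_eq_zero b.toAdd.2).symm)))
  exact (Subgroup.card_dvd_of_injective f hf).trans (card_rootsOfUnity_dvd q M)

variable (M L : Type*) [Field M] [Field L] [Algebra M L]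

/-- The inclusion of the units of `M` in those of `L`, extended by the identity of `ℤ`. -/
noncomputable def unitsInclusion : ExtUnits M →+ ExtUnits L :=
  (MonoidHom.toAdditive (Units.map (algebraMap (𝓞 M) (𝓞 L) : 𝓞 M →* 𝓞 L))).prodMap
    (AddMonoidHom.id ℤ)

variable {M L}

lemma unitVal_unitsInclusion (a : ExtUnits M) :
    unitVal (unitsInclusion M L a) = algebraMap M L (unitVal a) := rfl

lemma unitsInclusion_injective : Function.Injective (unitsInclusion M L) := fun _ _ h ↦
  extUnits_ext ((algebraMap M L).injective (congrArg unitVal h :)) (congrArg Prod.snd h :)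

lemma exists_algebraMap_ringOfIntegers_eq [FiniteDimensional M L] [IsGalois M L] {x : 𝓞 L}
    (hx : ∀ σ : L ≃ₐ[M] L, σ (x : L) = x) : ∃ y : 𝓞 M, algebraMap (𝓞 M) (𝓞 L) y = x := by
  obtain ⟨y, hy⟩ := (IsGalois.mem_range_algebraMap_iff_fixed (F := M) _).2 hx
  have hy' : IsIntegral ℤ y := by
    rw [← isIntegral_algebraMap_iff (algebraMap M L).injective, hy]
    exact RingOfIntegers.isIntegral_coe _
  exact ⟨⟨y, hy'⟩, RingOfIntegers.ext hy⟩

lemma mem_range_unitsInclusion_iff [FiniteDimensional M L] [IsGalois M L] {a : ExtUnits L} :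
    a ∈ (unitsInclusion M L).range ↔ ∀ σ : L ≃ₐ[M] L, σ (unitVal a) = unitVal a := by
  constructor
  · rintro ⟨b, rfl⟩ σ
    rw [unitVal_unitsInclusion, σ.commutes]
  · intro ha
    have hinv : (((a.1.toMul⁻¹ : (𝓞 L)ˣ) : 𝓞 L) : L) = (unitVal a)⁻¹ := by
      refine eq_inv_of_mul_eq_one_left ?_
      rw [unitVal, ← map_mul, Units.inv_mul, map_one]
    obtain ⟨v, hv⟩ := exists_algebraMap_ringOfIntegers_eq ha
    obtain ⟨v', hv'⟩ := exists_algebraMap_ringOfIntegers_eq (M := M)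
      (x := ((a.1.toMul⁻¹ : (𝓞 L)ˣ) : 𝓞 L)) fun σ ↦ by rw [hinv, map_inv₀, ha]
    have hmul : v * v' = 1 := FaithfulSMul.algebraMap_injective (𝓞 M) (𝓞 L) (by
      rw [map_mul, hv, hv', Units.mul_inv, map_one])
    exact ⟨(Additive.ofMul ⟨v, v', hmul, (mul_comm _ _).trans hmul⟩, a.2),
      Prod.ext (Additive.toMul.injective (Units.ext hv)) rfl⟩

variable {B : AddSubgroup (ExtUnits L)}

lemma card_inf_torsion_dvd (hB : B = (unitsInclusion M L).range) (q : ℕ) [NeZero q] :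
    Nat.card (B ⊓ (nsmulAddMonoidHom q).ker : AddSubgroup (ExtUnits L)) ∣ q ^ rootDelta q M := by
  have hmap : B ⊓ (nsmulAddMonoidHom q).ker
      = (nsmulAddMonoidHom q : ExtUnits M →+ ExtUnits M).ker.map (unitsInclusion M L) := by
    ext a
    have hker (b : ExtUnits M) : q • unitsInclusion M L b = 0 ↔ q • b = 0 := by
      rw [← map_nsmul, map_eq_zero_iff _ unitsInclusion_injective]
    constructor
    · rintro ⟨ha, ha'⟩
      obtain ⟨b, rfl⟩ := hB.le ha
      exact ⟨b, (hker b).1 ha', rfl⟩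
    · rintro ⟨b, hb, rfl⟩
      exact ⟨hB.ge ⟨b, rfl⟩, (hker b).2 hb⟩
  rw [hmap, AddSubgroup.card_map_of_injective unitsInclusion_injective]
  exact card_extUnits_torsion_dvd q M

theorem exists_hasCovolume_of_eq_range [NumberField M]
    (hB : B = (unitsInclusion M L).range) :
    ∃ (Λ : B →+ (InfinitePlace M → ℝ)) (c : ℝ), HasCovolume Λ (torsionOrder M) c ∧
      Module.finrank ℚ M * regulator M = 2 ^ InfinitePlace.nrComplexPlaces M * c ∧
      ∀ (a : B) (w : InfinitePlace L), Λ a (w.comap (algebraMap M L)) = logUnits L a w := by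
  subst hB
  let e : ExtUnits M ≃+ (unitsInclusion M L).range :=
    AddMonoidHom.ofInjective unitsInclusion_injective
  obtain ⟨c, hc, hreg⟩ := exists_hasCovolume_logUnits M
  refine ⟨(logUnits M).comp e.symm.toAddMonoidHom, c, hc.of_equiv e.symm (Equiv.refl _) _
    fun b y ↦ rfl, hreg, fun a w ↦ ?_⟩
  obtain ⟨a, rfl⟩ := e.surjective a
  change logUnits M (e.symm (e a)) _ = _
  rw [e.symm_apply_apply]
  rfl

end UnitsOfSubfield

section DihedralUnits

variable {q : ℕ} {k L : Type*} [Field k] [Field L] [Algebra k L]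

variable (k L) in
/-- The action of the Galois group on the units, extended by the trivial action on `ℤ`. -/
noncomputable def galUnits : (L ≃ₐ[k] L) →* AddMonoid.End (ExtUnits L) where
  toFun σ := (MonoidHom.toAdditive (Units.map
    (RingOfIntegers.mapRingHom (σ : L →+* L) : 𝓞 L →* 𝓞 L))).prodMap (AddMonoidHom.id ℤ)
  map_one' := rfl
  map_mul' _ _ := rfl

lemma unitVal_galUnits (σ : L ≃ₐ[k] L) (a : ExtUnits L) :
    unitVal (galUnits k L σ a) = σ (unitVal a) := rfl

lemma galUnits_eq_self_iff (σ : L ≃ₐ[k] L) (a : ExtUnits L) :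
    galUnits k L σ a = a ↔ σ (unitVal a) = unitVal a :=
  ⟨fun h ↦ by rw [← unitVal_galUnits, h], fun h ↦ extUnits_ext h rfl⟩

lemma exists_algEquiv_apply_eq_pow [NeZero q] {ζ : L} (hζ : ζ ^ q = 1) :
    ∃ ξ : L, (∃ m : ℕ, ζ = ξ ^ m) ∧ ∀ σ : L ≃ₐ[k] L, ∃ n : ℕ, σ ξ = ξ ^ n := by
  obtain ⟨ξ, hξ⟩ := IsCyclic.exists_generator (α := rootsOfUnity q L)
  have hpow (x : L) (hx : x ^ q = 1) : ∃ m : ℕ, x = ((ξ : Lˣ) : L) ^ m := by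
    obtain ⟨m, hm⟩ := (mem_powers_iff_mem_zpowers (y := rootsOfUnity.mkOfPowEq x hx)).2 (hξ _)
    refine ⟨m, ?_⟩
    have hval := congrArg (fun y : rootsOfUnity q L ↦ ((y : Lˣ) : L)) hm
    simpa using hval.symm
  have hξq : ((ξ : Lˣ) : L) ^ q = 1 := (mem_rootsOfUnity' q _).1 ξ.2
  exact ⟨_, hpow _ hζ, fun σ ↦ hpow _ (by rw [← map_pow, hξq, map_one])⟩

lemma algEquiv_mul_apply_comm_of_pow_eq_one [NeZero q] {ζ : L} (hζ : ζ ^ q = 1)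
    (σ τ : L ≃ₐ[k] L) : (σ * τ) ζ = (τ * σ) ζ := by
  obtain ⟨ξ, ⟨m, rfl⟩, h⟩ := exists_algEquiv_apply_eq_pow (k := k) hζ
  obtain ⟨a, ha⟩ := h σ
  obtain ⟨b, hb⟩ := h τ
  simp only [AlgEquiv.mul_apply, map_pow, ha, hb]
  ring

variable (e : (L ≃ₐ[k] L) ≃* DihedralGroup q)

/-- The action of the dihedral group on the units, extended by the trivial action on `ℤ`. -/
noncomputable def dihedralUnits : DihedralGroup q →* AddMonoid.End (ExtUnits L) :=
  (galUnits k L).comp e.symm.toMonoidHom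

lemma mem_range_unitsInclusion_iff_fixingSubgroup [FiniteDimensional k L] [IsGalois k L]
    (M : IntermediateField k L) (a : ExtUnits L) :
    a ∈ (unitsInclusion M L).range ↔ ∀ g ∈ M.fixingSubgroup, galUnits k L g a = a := by
  simp only [mem_range_unitsInclusion_iff, galUnits_eq_self_iff]
  exact ⟨fun h g hg ↦ h (fixingSubgroupEquiv M ⟨g, hg⟩),
    fun h σ ↦ h _ ((fixingSubgroupEquiv M).symm σ).2⟩

section Fixed

variable [FiniteDimensional k L] [IsGalois k L]

lemma rotFixed_dihedralUnits [NeZero q] :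
    rotFixed (dihedralUnits e) = (unitsInclusion (rotationField e) L).range := by
  ext a
  simp only [mem_range_unitsInclusion_iff_fixingSubgroup, mem_fixingSubgroup_rotationField]
  constructor
  · rintro h _ ⟨i, rfl⟩
    exact action_r_of_mem h i
  · exact fun h ↦ mem_rotFixed_iff.2 (h _ ⟨1, rfl⟩)

lemma reflFixed_dihedralUnits :
    reflFixed (dihedralUnits e) = (unitsInclusion (reflectionField e) L).range := by
  ext a
  simp only [mem_range_unitsInclusion_iff_fixingSubgroup, mem_fixingSubgroup_reflectionField]
  constructor
  · rintro h _ (rfl | rfl)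
    · rw [map_one]; rfl
    · exact mem_reflFixed_iff.1 h
  · exact fun h ↦ mem_reflFixed_iff.2 (h _ (Or.inr rfl))

lemma dihFixed_dihedralUnits [NeZero q] :
    dihFixed (dihedralUnits e) = (unitsInclusion k L).range := by
  ext a
  simp only [mem_range_unitsInclusion_iff, ← galUnits_eq_self_iff]
  constructor
  · rintro ⟨hrot, hrefl⟩ σ
    obtain ⟨g, rfl⟩ := e.symm.surjective σ
    change dihedralUnits e g a = a
    rcases g with i | i
    · exact action_r_of_mem hrot i
    · have hi : (sr i : DihedralGroup q) = sr 0 * r i := by simp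
      rw [hi, ← action_mul, action_r_of_mem hrot, mem_reflFixed_iff.1 hrefl]
  · exact fun h ↦ ⟨mem_rotFixed_iff.2 (h _), mem_reflFixed_iff.2 (h _)⟩

end Fixed

lemma mem_rotFixed_dihedralUnits_of_nsmul_eq_zero [NeZero q] (hq : Odd q) {a : ExtUnits L}
    (ha : q • a = 0) : a ∈ rotFixed (dihedralUnits e) := by
  obtain ⟨j, hj⟩ := exists_add_self_eq_one_zmod hq
  refine mem_rotFixed_iff.2 ((galUnits_eq_self_iff _ _).2 ?_)
  have hcomm := algEquiv_mul_apply_comm_of_pow_eq_one (unitVal_pow_eq_one_of_nsmul_eq_zero ha)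
    (e.symm (r j)) (e.symm (sr 0))
  rw [← map_mul, ← map_mul, r_mul_sr, sr_mul_r, zero_sub, zero_add] at hcomm
  have hr : (r 1 : DihedralGroup q) = sr (-j) * sr j := by rw [sr_mul_sr, sub_neg_eq_add, hj]
  change e.symm (r 1) _ = _
  rw [hr, map_mul, AlgEquiv.mul_apply, ← hcomm, ← AlgEquiv.mul_apply, ← map_mul, sr_mul_sr,
    sub_self, ← one_def, map_one, AlgEquiv.one_apply]

end DihedralUnits

section DihedralPlaces

variable {q : ℕ} {k L : Type*} [Field k] [Field L] [Algebra k L]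

/-- The action of the dihedral group on the infinite places. -/
noncomputable abbrev dihedralPlaces (e : (L ≃ₐ[k] L) ≃* DihedralGroup q) :
    MulAction (DihedralGroup q) (InfinitePlace L) :=
  MulAction.compHom _ e.symm.toMonoidHom

lemma sq_eq_one_of_smul_infinitePlace_eq {σ : L ≃ₐ[k] L} {w : InfinitePlace L}
    (h : σ • w = w) : σ ^ 2 = 1 := by
  let σ' : MulAction.stabilizer (L ≃ₐ[k] L) w := ⟨σ, h⟩
  have hcard : σ' ^ Nat.card (MulAction.stabilizer (L ≃ₐ[k] L) w) = 1 := pow_card_eq_one'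
  have hsq : σ' ^ 2 = 1 := by
    rcases InfinitePlace.nat_card_stabilizer_eq_one_or_two k w with h' | h' <;> rw [h'] at hcard
    · rw [← pow_one σ', hcard, one_pow]
    · exact hcard
  exact congrArg Subtype.val hsq

lemma comap_algebraMap_eq_iff [IsGalois k L] (w w' : InfinitePlace L) :
    w.comap (algebraMap k L) = w'.comap (algebraMap k L) ↔ ∃ σ : L ≃ₐ[k] L, σ • w = w' := by
  rw [← InfinitePlace.mem_orbit_iff]
  exact Iff.rfl

lemma comap_algebraMap_eq_iff_fixingSubgroup [IsGalois k L] (M : IntermediateField k L)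
    (w w' : InfinitePlace L) :
    w.comap (algebraMap M L) = w'.comap (algebraMap M L) ↔ ∃ g ∈ M.fixingSubgroup, g • w = w' := by
  rw [comap_algebraMap_eq_iff]
  constructor
  · rintro ⟨σ, rfl⟩
    exact ⟨_, ((fixingSubgroupEquiv M).symm σ).2, rfl⟩
  · rintro ⟨g, hg, rfl⟩
    exact ⟨fixingSubgroupEquiv M ⟨g, hg⟩, rfl⟩

variable (e : (L ≃ₐ[k] L) ≃* DihedralGroup q)

theorem isDihedralQuotient_dihedralPlaces [FiniteDimensional k L] [IsGalois k L]
    (hq : Odd q) : letI := dihedralPlaces e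
    IsDihedralQuotient (q := q)
      (fun w : InfinitePlace L ↦ w.comap (algebraMap (rotationField e) L))
      (fun w ↦ w.comap (algebraMap (reflectionField e) L))
      (fun w ↦ w.comap (algebraMap k L)) := by
  let _ := dihedralPlaces e
  refine ⟨InfinitePlace.comap_surjective, InfinitePlace.comap_surjective,
    InfinitePlace.comap_surjective, fun w w' ↦ ?_, fun w w' ↦ ?_, fun w w' ↦ ?_, fun i w h ↦ ?_⟩
  · rw [comap_algebraMap_eq_iff_fixingSubgroup]
    simp only [mem_fixingSubgroup_rotationField]
    constructor
    · rintro ⟨_, ⟨i, rfl⟩, h⟩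
      exact ⟨i, h⟩
    · rintro ⟨i, h⟩
      exact ⟨_, ⟨i, rfl⟩, h⟩
  · rw [comap_algebraMap_eq_iff_fixingSubgroup]
    simp only [mem_fixingSubgroup_reflectionField, or_and_right, exists_or, exists_eq_left,
      one_smul]
    exact or_congr eq_comm eq_comm
  · rw [comap_algebraMap_eq_iff]
    exact e.symm.surjective.exists
  · obtain ⟨j, hj⟩ := exists_add_self_eq_one_zmod hq
    have hsq : e.symm (r i) ^ 2 = 1 := sq_eq_one_of_smul_infinitePlace_eq h
    rw [← map_pow, EmbeddingLike.map_eq_one_iff, r_pow, one_def, r.injEq] at hsq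
    calc i = i * (j + j) := by rw [hj, mul_one]
      _ = j * (i * (2 : ℕ)) := by push_cast; ring
      _ = 0 := by rw [hsq, mul_zero]

lemma logUnits_dihedralUnits (g : DihedralGroup q) (a : ExtUnits L)
    (w : InfinitePlace L) :
    logUnits L (dihedralUnits e g a) w = logUnits L a ((e.symm g)⁻¹ • w) := rfl

end DihedralPlaces

section ClassNumberRelation

open Units Module

lemma finrank_eq_card_infinitePlace_add_nrComplexPlaces (M : Type*) [Field M] [NumberField M] :
    finrank ℚ M = Fintype.card (InfinitePlace M) + InfinitePlace.nrComplexPlaces M := by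
  have h1 := InfinitePlace.card_add_two_mul_card_eq_rank M
  have h2 := InfinitePlace.card_eq_nrRealPlaces_add_nrComplexPlaces M
  lia

lemma sqrt_abs_discr_ne_zero (M : Type*) [Field M] [NumberField M] : √|(discr M : ℝ)| ≠ 0 :=
  (Real.sqrt_pos.2 (abs_pos.2 (Int.cast_ne_zero.2 (discr_ne_zero M)))).ne'

lemma pow_mul_pow_sq_eq {R : Type*} [CommMonoid R] (x : R) {a b c d : ℕ}
    (h : a + 2 * b = c + 2 * d) : x ^ a * (x ^ b) ^ 2 = x ^ c * (x ^ d) ^ 2 := by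
  rw [← pow_mul, ← pow_mul, ← pow_add, ← pow_add, mul_comm b, mul_comm d, h]

lemma torsionOrder_mul_sq_ne_zero (M N : Type*) [Field M] [NumberField M] [Field N]
    [NumberField N] : (torsionOrder M * torsionOrder N ^ 2 : ℝ) ≠ 0 :=
  mul_ne_zero (Nat.cast_ne_zero.2 (torsionOrder_ne_zero M))
    (pow_ne_zero _ (Nat.cast_ne_zero.2 (torsionOrder_ne_zero N)))

variable {q : ℕ} {k L : Type*} [Field k] [Field L] [NumberField k] [NumberField L]
  [Algebra k L] [IsGalois k L] (e : (L ≃ₐ[k] L) ≃* DihedralGroup q)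

local notation "F" => rotationField e
local notation "K" => reflectionField e

include e in
lemma finrank_rat_dihedral : finrank ℚ L = 2 * q * finrank ℚ k := by
  rw [← finrank_mul_finrank ℚ k L, finrank_dihedral e, mul_comm]

lemma finrank_rat_reflectionField : finrank ℚ K = q * finrank ℚ k := by
  have h := finrank_mul_finrank ℚ K L
  rw [finrank_reflectionField, finrank_rat_dihedral e] at h
  lia

variable [NeZero q]

lemma card_infinitePlace_dihedral (hq : Odd q) :
    Fintype.card (InfinitePlace L) + 2 * Fintype.card (InfinitePlace k)
      = Fintype.card (InfinitePlace F) + 2 * Fintype.card (InfinitePlace K) := by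
  have h := (isClassFunction_fixedPlaces (L := L)).galAvg_dihedral e hq
  simp only [← card_infinitePlace_eq_galAvg] at h
  exact_mod_cast h

lemma finrank_rat_rotationField : finrank ℚ F = 2 * finrank ℚ k := by
  have h := finrank_mul_finrank ℚ F L
  rw [finrank_rotationField, finrank_rat_dihedral e] at h
  refine Nat.eq_of_mul_eq_mul_right (NeZero.pos q) ?_
  rw [h]
  ring

lemma nrComplexPlaces_dihedral (hq : Odd q) :
    InfinitePlace.nrComplexPlaces L + 2 * InfinitePlace.nrComplexPlaces k
      = InfinitePlace.nrComplexPlaces F + 2 * InfinitePlace.nrComplexPlaces K := by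
  have hcard := card_infinitePlace_dihedral e hq
  have hL := finrank_eq_card_infinitePlace_add_nrComplexPlaces L
  have hk := finrank_eq_card_infinitePlace_add_nrComplexPlaces k
  have hF := finrank_eq_card_infinitePlace_add_nrComplexPlaces F
  have hK := finrank_eq_card_infinitePlace_add_nrComplexPlaces K
  rw [finrank_rat_dihedral e, mul_assoc, ← finrank_rat_reflectionField e] at hL
  rw [finrank_rat_rotationField e] at hF
  lia

lemma nrRealPlaces_dihedral (hq : Odd q) :
    InfinitePlace.nrRealPlaces L + 2 * InfinitePlace.nrRealPlaces k
      = InfinitePlace.nrRealPlaces F + 2 * InfinitePlace.nrRealPlaces K := by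
  have hcard := card_infinitePlace_dihedral e hq
  have hcomplex := nrComplexPlaces_dihedral e hq
  simp only [InfinitePlace.card_eq_nrRealPlaces_add_nrComplexPlaces] at hcard
  lia

lemma sqrt_abs_discr_dihedral (hq : Odd q) :
    √|(discr L : ℝ)| * √|(discr k : ℝ)| ^ 2 = √|(discr F : ℝ)| * √|(discr K : ℝ)| ^ 2 := by
  have hsqrt (x y : ℝ) : √|x| * √|y| ^ 2 = √(|x| * |y| ^ 2) := by
    rw [Real.sqrt_mul (abs_nonneg x), Real.sqrt_sq (abs_nonneg y), Real.sq_sqrt (abs_nonneg y)]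
  rw [hsqrt, hsqrt]
  congr 1
  simp only [← Int.cast_abs, Int.abs_eq_natAbs]
  exact_mod_cast discr_dihedral e hq

theorem classNumber_mul_regulator_dihedral (hq : Odd q) :
    ((classNumber L * classNumber k ^ 2) * (regulator L * regulator k ^ 2)
        * (torsionOrder F * torsionOrder K ^ 2) : ℝ)
      = (classNumber F * classNumber K ^ 2) * (regulator F * regulator K ^ 2)
        * (torsionOrder L * torsionOrder k ^ 2) := by
  have h := dedekindZeta_residue_dihedral e hq
  have hsplit (a₁ a₂ b₁ b₂ R₁ R₂ h₁ h₂ w₁ w₂ s₁ s₂ : ℝ) :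
      a₁ * b₁ * R₁ * h₁ / (w₁ * s₁) * (a₂ * b₂ * R₂ * h₂ / (w₂ * s₂)) ^ 2
        = (a₁ * a₂ ^ 2) * (b₁ * b₂ ^ 2) * ((h₁ * h₂ ^ 2) * (R₁ * R₂ ^ 2) / (w₁ * w₂ ^ 2))
          / (s₁ * s₂ ^ 2) := by ring
  simp only [dedekindZeta_residue_def] at h
  rw [hsplit, hsplit, pow_mul_pow_sq_eq 2 (nrRealPlaces_dihedral e hq),
    pow_mul_pow_sq_eq (2 * Real.pi) (nrComplexPlaces_dihedral e hq),
    sqrt_abs_discr_dihedral e hq] at h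
  have hdiscr : √|(discr F : ℝ)| * √|(discr K : ℝ)| ^ 2 ≠ 0 :=
    mul_ne_zero (sqrt_abs_discr_ne_zero F) (pow_ne_zero _ (sqrt_abs_discr_ne_zero K))
  have hquot := mul_left_cancel₀ (by positivity) ((div_left_inj' hdiscr).1 h)
  rwa [div_eq_div_iff (torsionOrder_mul_sq_ne_zero L k)
    (torsionOrder_mul_sq_ne_zero F K)] at hquot

lemma regulator_mul_covolume (hq : Odd q) {c cF cK ck : ℝ}
    (hL : finrank ℚ L * regulator L = 2 ^ InfinitePlace.nrComplexPlaces L * c)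
    (hF : finrank ℚ F * regulator F = 2 ^ InfinitePlace.nrComplexPlaces F * cF)
    (hK : finrank ℚ K * regulator K = 2 ^ InfinitePlace.nrComplexPlaces K * cK)
    (hk : finrank ℚ k * regulator k = 2 ^ InfinitePlace.nrComplexPlaces k * ck) :
    ∃ s : ℝ, s ≠ 0 ∧ s * (regulator L * regulator k ^ 2) = c * ck ^ 2 ∧
      s * (q * (regulator F * regulator K ^ 2)) = cF * cK ^ 2 := by
  have hcomplex := pow_mul_pow_sq_eq (2 : ℝ) (nrComplexPlaces_dihedral e hq)
  rw [finrank_rat_dihedral e] at hL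
  rw [finrank_rat_rotationField e] at hF
  rw [finrank_rat_reflectionField e] at hK
  push_cast at hL hF hK
  set n : ℝ := (finrank ℚ k : ℝ)
  set t : ℝ := 2 ^ InfinitePlace.nrComplexPlaces F * (2 ^ InfinitePlace.nrComplexPlaces K) ^ 2
    with ht
  have hn0 : n ≠ 0 := Nat.cast_ne_zero.2 finrank_pos.ne'
  have hq0 : (q : ℝ) ≠ 0 := Nat.cast_ne_zero.2 (NeZero.ne q)
  have ht0 : t ≠ 0 := by positivity
  refine ⟨2 * q * n ^ 3 / t, by positivity, ?_, ?_⟩ <;>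
    rw [div_mul_eq_mul_div, div_eq_iff ht0]
  · calc _ = (2 * q * n * regulator L) * (n * regulator k) ^ 2 := by ring
      _ = _ := by rw [hL, hk, ← hcomplex]; ring
  · calc _ = (2 * n * regulator F) * (q * n * regulator K) ^ 2 := by ring
      _ = _ := by rw [hF, hK, ht]; ring

theorem exists_regulator_relation (hq : Odd q) :
    ∃ κ ind : ℕ, κ ∣ q ^ rootDelta q F ∧
      ind ∣ q ^ Fintype.card (InfinitePlace F) * q ^ rootDelta q k ∧
      (q : ℝ) ^ (Fintype.card (InfinitePlace F) + 1) * κ * ((regulator F * regulator K ^ 2)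
          * (torsionOrder L * torsionOrder k ^ 2))
        = q ^ Fintype.card (InfinitePlace k) * ind * ((regulator L * regulator k ^ 2)
          * (torsionOrder F * torsionOrder K ^ 2)) := by
  let _ := dihedralPlaces e
  obtain ⟨c, hΛ, hc⟩ := exists_hasCovolume_logUnits L
  obtain ⟨ΛF, cF, hΛF, hcF, hF⟩ := exists_hasCovolume_of_eq_range (rotFixed_dihedralUnits e)
  obtain ⟨ΛK, cK, hΛK, hcK, hK⟩ := exists_hasCovolume_of_eq_range (reflFixed_dihedralUnits e)
  obtain ⟨Λk, ck, hΛk, hck, hk⟩ := exists_hasCovolume_of_eq_range (dihFixed_dihedralUnits e)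
  have hlat : IsDihedralLattice (fun w : InfinitePlace L ↦ w.comap (algebraMap F L))
      (fun w ↦ w.comap (algebraMap K L)) (fun w ↦ w.comap (algebraMap k L)) (dihedralUnits e)
      (logUnits L) ΛF ΛK Λk :=
    ⟨fun g a w ↦ by rw [logUnits_dihedralUnits, ← map_inv]; rfl, hF, hK, hk⟩
  obtain ⟨κ, ind, hκ, hind, h⟩ := hlat.exists_index (isDihedralQuotient_dihedralPlaces e hq)
    hΛ hΛF hΛK hΛk hq (card_infinitePlace_dihedral e hq)
    (fun a ↦ mem_rotFixed_dihedralUnits_of_nsmul_eq_zero e hq)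
  obtain ⟨s, hs, hsL, hsF⟩ := regulator_mul_covolume e hq hc hcF hcK hck
  refine ⟨κ, ind, hκ.trans (card_inf_torsion_dvd (rotFixed_dihedralUnits e) q),
    hind.trans (mul_dvd_mul_left _ (card_inf_torsion_dvd (dihFixed_dihedralUnits e) q)), ?_⟩
  rw [← hsL, ← hsF] at h
  refine mul_left_cancel₀ hs ?_
  rw [pow_succ]
  linear_combination h

theorem exists_classNumber_relation (hq : Odd q) :
    ∃ κ ind : ℕ, κ ∣ q ^ rootDelta q F ∧
      ind ∣ q ^ Fintype.card (InfinitePlace F) * q ^ rootDelta q k ∧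
      q ^ (Fintype.card (InfinitePlace F) + 1) * κ * (classNumber L * classNumber k ^ 2)
        = q ^ Fintype.card (InfinitePlace k) * ind * (classNumber F * classNumber K ^ 2) := by
  obtain ⟨κ, ind, hκ, hind, hreg⟩ := exists_regulator_relation e hq
  refine ⟨κ, ind, hκ, hind, ?_⟩
  have hcl := classNumber_mul_regulator_dihedral e hq
  have hne : (regulator L * regulator k ^ 2) * (torsionOrder F * torsionOrder K ^ 2) ≠ 0 :=
    mul_ne_zero (mul_ne_zero (regulator_ne_zero L) (pow_ne_zero _ (regulator_ne_zero k)))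
      (torsionOrder_mul_sq_ne_zero F K)
  rify
  refine mul_right_cancel₀ hne ?_
  linear_combination (q : ℝ) ^ (Fintype.card (InfinitePlace F) + 1) * κ * hcl
    + (classNumber F * classNumber K ^ 2 : ℝ) * hreg

end ClassNumberRelation

section Valuations

lemma padicValNat_le_mul_of_dvd_pow {ℓ m q n : ℕ} [Fact ℓ.Prime] (hq : q ≠ 0) (h : m ∣ q ^ n) :
    padicValNat ℓ m ≤ n * padicValNat ℓ q := by
  rw [← padicValNat.pow]
  exact (padicValNat_dvd_iff_le (pow_ne_zero n hq)).1 (pow_padicValNat_dvd.trans h)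

lemma padicValRat_div_bounds_of_pow_mul_eq {ℓ q κ ι x y a b i j : ℕ} [Fact ℓ.Prime] (hq : q ≠ 0)
    (hx : x ≠ 0) (hy : y ≠ 0) (hκ : κ ∣ q ^ a) (hι : ι ∣ q ^ b)
    (h : q ^ i * κ * x = q ^ j * ι * y) :
    ((j : ℤ) - i - a) * padicValNat ℓ q ≤ padicValRat ℓ (x / y) ∧
      padicValRat ℓ (x / y) ≤ ((j : ℤ) + b - i) * padicValNat ℓ q := by
  have hκ0 : κ ≠ 0 := ne_zero_of_dvd_ne_zero (pow_ne_zero _ hq) hκ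
  have hι0 : ι ≠ 0 := ne_zero_of_dvd_ne_zero (pow_ne_zero _ hq) hι
  have hκv := padicValNat_le_mul_of_dvd_pow (ℓ := ℓ) hq hκ
  have hιv := padicValNat_le_mul_of_dvd_pow (ℓ := ℓ) hq hι
  have hval := congrArg (padicValNat ℓ) h
  rw [padicValNat.mul (mul_ne_zero (pow_ne_zero i hq) hκ0) hx,
    padicValNat.mul (pow_ne_zero i hq) hκ0, padicValNat.mul (mul_ne_zero (pow_ne_zero j hq) hι0) hy,
    padicValNat.mul (pow_ne_zero j hq) hι0, padicValNat.pow, padicValNat.pow] at hval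
  rw [padicValRat.div (Nat.cast_ne_zero.2 hx) (Nat.cast_ne_zero.2 hy), padicValRat.of_nat,
    padicValRat.of_nat]
  rw [← Nat.cast_le (α := ℤ), Nat.cast_mul] at hκv hιv
  rw [← Nat.cast_inj (R := ℤ)] at hval
  simp only [Nat.cast_add, Nat.cast_mul] at hval
  constructor <;> linarith

end Valuations

section TotallyReal

open Units

lemma unitsRank_add_one (M : Type*) [Field M] [NumberField M] :
    rank M + 1 = Fintype.card (InfinitePlace M) :=
  Nat.sub_add_cancel Fintype.card_pos

lemma isTotallyReal_of_forall_im_eq_zero {M : Type*} [Field M]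
    (h : ∀ (φ : M →+* ℂ) (x : M), (φ x).im = 0) :
    IsTotallyReal M :=
  ⟨fun w ↦ by
    rw [InfinitePlace.isReal_iff, ComplexEmbedding.isReal_iff]
    exact RingHom.ext fun x ↦ Complex.conj_eq_iff_im.2 (h _ x)⟩

variable {M : Type*} [Field M] [NumberField M]

lemma unitsRank_add_one_eq_finrank [IsTotallyReal M] : rank M + 1 = Module.finrank ℚ M := by
  rw [unitsRank_add_one, IsTotallyReal.finrank M,
    InfinitePlace.card_eq_nrRealPlaces_add_nrComplexPlaces, IsTotallyReal.nrComplexPlaces_eq_zero,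
    add_zero]

lemma rootDelta_eq_zero_of_isTotallyReal {q : ℕ} (hq : Odd q) [IsTotallyReal M] :
    rootDelta q M = 0 := by
  let w : InfinitePlace M := Classical.arbitrary _
  let f : M →+* ℝ := InfinitePlace.embedding_of_isReal (IsTotallyReal.isReal w)
  refine if_neg fun ⟨ζ, hne, hζ⟩ ↦ hne (f.injective ?_)
  rw [map_one]
  exact hq.strictMono_pow.injective (by simp only [← map_pow, hζ, map_one, one_pow])

end TotallyReal

section DihedralClassNumbers

open Units

lemma classNumber_mul_sq_ne_zero (M N : Type*) [Field M] [NumberField M] [Field N]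
    [NumberField N] : classNumber M * classNumber N ^ 2 ≠ 0 :=
  mul_ne_zero Fintype.card_ne_zero (pow_ne_zero _ Fintype.card_ne_zero)

variable {q : ℕ} {k L : Type*} [Field k] [Field L] [NumberField k] [NumberField L]
  [Algebra k L] (e : (L ≃ₐ[k] L) ≃* DihedralGroup q)

/-- The ratio `h(L) h(k)² / (h(F) h(K)²)`, with `F` the quadratic subextension and `K` the fixed
field of a reflection. -/
noncomputable def classNumberRatio : ℚ :=
  (classNumber L * classNumber k ^ 2) /
    (classNumber (rotationField e) * classNumber (reflectionField e) ^ 2)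

variable [NeZero q] [IsGalois k L]

theorem padicValRat_classNumberRatio_bounds (hq : Odd q) (ℓ : ℕ) [Fact ℓ.Prime] :
    -((rank (rotationField e) + rootDelta q (rotationField e) + 1 : ℕ) : ℤ) * padicValNat ℓ q
        ≤ padicValRat ℓ (classNumberRatio e) ∧
      padicValRat ℓ (classNumberRatio e)
        ≤ ((rank k + rootDelta q k : ℕ) : ℤ) * padicValNat ℓ q := by
  obtain ⟨κ, ι, hκ, hι, h⟩ := exists_classNumber_relation e hq
  rw [← pow_add] at hι
  have hbounds := padicValRat_div_bounds_of_pow_mul_eq (ℓ := ℓ) (NeZero.ne q)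
    (classNumber_mul_sq_ne_zero L k) (classNumber_mul_sq_ne_zero _ _) hκ hι h
  rw [← unitsRank_add_one, ← unitsRank_add_one] at hbounds
  have hrank : (0 : ℤ) ≤ rank k * padicValNat ℓ q := by positivity
  rw [classNumberRatio]
  push_cast at hbounds hrank ⊢
  constructor <;> linarith [hbounds.1, hbounds.2]

theorem padicValRat_classNumberRatio_bounds_of_isTotallyReal (hq : Odd q)
    [IsTotallyReal (rotationField e)] {d : ℕ} (hd : Module.finrank ℚ (rotationField e) = 2 * d)
    (ℓ : ℕ) [Fact ℓ.Prime] :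
    -((2 * d : ℕ) : ℤ) * padicValNat ℓ q ≤ padicValRat ℓ (classNumberRatio e) ∧
      padicValRat ℓ (classNumberRatio e) ≤ ((d : ℤ) - 1) * padicValNat ℓ q := by
  have : IsTotallyReal k := .of_algebra k (rotationField e)
  have hk : rank k + 1 = d := by
    have h := finrank_rat_rotationField e
    rw [unitsRank_add_one_eq_finrank]
    lia
  have hF : rank (rotationField e) + 1 = 2 * d := by rw [unitsRank_add_one_eq_finrank, hd]
  have h := padicValRat_classNumberRatio_bounds e hq ℓ
  rw [rootDelta_eq_zero_of_isTotallyReal hq, rootDelta_eq_zero_of_isTotallyReal hq, add_zero,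
    add_zero, hF] at h
  have hrank : (rank k : ℤ) = d - 1 := by lia
  rwa [hrank] at h

end DihedralClassNumbers

/-- Let `L/k` be dihedral of degree `2q` (`q` odd), `F` its quadratic
subextension, `K` a degree-`q` subextension.  For every prime `ℓ`,
`-a·v_ℓ(q) ≤ v_ℓ(h(L)h(k)²/(h(F)h(K)²)) ≤ b·v_ℓ(q)`, where
`a = rank U_F + δ_q(F) + 1`, `b = rank U_k + δ_q(k)`, and `δ_q(M) = 1` iff `M` contains
a nontrivial root of unity of order dividing `q`.  If moreover `F` is totally real of
degree `2d`, then `-2d·v_ℓ(q) ≤ v_ℓ(...) ≤ (d-1)·v_ℓ(q)`. -/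
theorem dihedral_class_number_ratio_bounds (q : ℕ) [NeZero q] (hq : Odd q)
    (k L : Type*) [Field k] [Field L] [NumberField k] [NumberField L]
    [Algebra k L] [IsGalois k L]
    (e : (L ≃ₐ[k] L) ≃* DihedralGroup q)
    (F K : IntermediateField k L)
    (hF : F = fixedField ((Subgroup.closure {(r 1 : DihedralGroup q)}).comap e.toMonoidHom))
    (hK : K = fixedField ((Subgroup.closure {(sr 0 : DihedralGroup q)}).comap e.toMonoidHom)) :
    (∀ ℓ : ℕ, ℓ.Prime →
      (-(((Units.rank ↥F + (if (∃ ζ : ↥F, ζ ≠ 1 ∧ ζ ^ q = 1) then 1 else 0) + 1 : ℕ) : ℤ)) *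
          (padicValNat ℓ q : ℤ) ≤
        padicValRat ℓ
          (((classNumber L : ℚ) * (classNumber k : ℚ) ^ 2) /
            ((classNumber ↥F : ℚ) * (classNumber ↥K : ℚ) ^ 2)) ∧
      padicValRat ℓ
          (((classNumber L : ℚ) * (classNumber k : ℚ) ^ 2) /
            ((classNumber ↥F : ℚ) * (classNumber ↥K : ℚ) ^ 2)) ≤
        ((Units.rank k + (if (∃ ζ : k, ζ ≠ 1 ∧ ζ ^ q = 1) then 1 else 0) : ℕ) : ℤ) *
          (padicValNat ℓ q : ℤ)) ∧
    ((∀ (φ : ↥F →+* ℂ) (x : ↥F), (φ x).im = 0) →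
      ∀ d : ℕ, Module.finrank ℚ ↥F = 2 * d →
        ∀ ℓ : ℕ, ℓ.Prime →
          (-((2 * d : ℕ) : ℤ)) * (padicValNat ℓ q : ℤ) ≤
            padicValRat ℓ
              (((classNumber L : ℚ) * (classNumber k : ℚ) ^ 2) /
                ((classNumber ↥F : ℚ) * (classNumber ↥K : ℚ) ^ 2)) ∧
          padicValRat ℓ
              (((classNumber L : ℚ) * (classNumber k : ℚ) ^ 2) /
                ((classNumber ↥F : ℚ) * (classNumber ↥K : ℚ) ^ 2)) ≤
            ((d : ℤ) - 1) * (padicValNat ℓ q : ℤ))) := by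
  subst hF hK
  intro ℓ hℓ
  have : Fact ℓ.Prime := ⟨hℓ⟩
  refine ⟨padicValRat_classNumberRatio_bounds e hq ℓ, fun hreal d hd ℓ' hℓ' ↦ ?_⟩
  have : Fact ℓ'.Prime := ⟨hℓ'⟩
  have : IsTotallyReal (rotationField e) := isTotallyReal_of_forall_im_eq_zero hreal
  exact padicValRat_classNumberRatio_bounds_of_isTotallyReal e hq hd ℓ'
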